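/- arXiv:2010.03227 — 8 statements merged into one kernel-verified Lean document; each statement's English description precedes it below -/
import Mathlib

section
/- There is an indexable family of languages that is Ex-learnable from text but is not Ex-learnable from informant by any iterative learner. Concretely, identifying ℕ with ℕ×ℕ via a fixed computable pairing bijection, the family 𝓛 = { L_{S,D} : S, D finite subsets of ℕ } with L_{S,D} = S × (D ∪ {0}) ∪ (ℕ\S) × (ℕ\{0}) is an indexable family lying in [TxtEx] but not in [ItInfEx]. -/
/-- `W p` is the domain of the `p`-th partial computable function
(the `W`-hypothesis space for an acceptable numbering). -/
def W (p : ℕ) : Set ℕ := {n | ((Denumerable.ofNat Nat.Partrec.Code p).eval n).Dom}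

/-- A labeled datum: a natural number together with a Boolean label. -/
abbrev Datum := ℕ × Bool

/-- The initial segment `I[t]` of an informant `I`, of length `t`. -/
def seg (I : ℕ → Datum) (t : ℕ) : List Datum := (List.range t).map I

/-- The positively labeled numbers occurring in a finite sequence. -/
def posOf (σ : List Datum) : Set ℕ := {x | (x, true) ∈ σ}

/-- The negatively labeled numbers occurring in a finite sequence. -/
def negOf (σ : List Datum) : Set ℕ := {x | (x, false) ∈ σ}

/-- A finite sequence over ℕ × Bool is consistently labeled. -/
def ConsistentSeq (σ : List Datum) : Prop :=
  ∀ x b b', (x, b) ∈ σ → (x, b') ∈ σ → b = b'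

/-- `I` is an informant for the language `L`. -/
def IsInformant (L : Set ℕ) (I : ℕ → Datum) : Prop :=
  (∀ t, ((I t).2 = true ↔ (I t).1 ∈ L)) ∧ Function.Surjective (fun t => (I t).1)

/-- `M` Ex-learns `L` from the particular informant `I`. -/
def ExLearnsFrom (M : List Datum →. ℕ) (L : Set ℕ) (I : ℕ → Datum) : Prop :=
  ∃ t₀ e, W e = L ∧ ∀ t, t₀ ≤ t → M (seg I t) = Part.some e

/-- `M` Ex-learns `L` from informant. -/
def ExLearns (M : List Datum →. ℕ) (L : Set ℕ) : Prop :=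
  ∀ I, IsInformant L I → ExLearnsFrom M L I

/-- `M` is an iterative learner: its value on `σ⌢x` is computed from its
value on `σ` and the datum `x` alone. -/
def Iterative (M : List Datum →. ℕ) : Prop :=
  ∃ h : ℕ × Datum →. ℕ, Partrec h ∧
    ∀ σ x, M (σ ++ [x]) = (M σ).bind (fun e => h (e, x))

/-- `𝓛 ∈ [ItInfEx]`: some iterative partial computable learner
Ex-learns every member of `𝓛` from informant. -/
def ItInfEx (𝓛 : Set (Set ℕ)) : Prop :=
  ∃ M : List Datum →. ℕ, Partrec M ∧ Iterative M ∧ ∀ L ∈ 𝓛, ExLearns M L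

/-- The initial segment `T[t]` of a text `T`, of length `t` (`none` is the pause symbol `#`). -/
def textSeg (T : ℕ → Option ℕ) (t : ℕ) : List (Option ℕ) := (List.range t).map T

/-- `T` is a text for the language `L`. -/
def IsText (L : Set ℕ) (T : ℕ → Option ℕ) : Prop :=
  ∀ n, n ∈ L ↔ ∃ t, T t = some n

/-- `M` Ex-learns `L` from text. -/
def TxtExLearns (M : List (Option ℕ) →. ℕ) (L : Set ℕ) : Prop :=
  ∀ T, IsText L T → ∃ t₀ e, W e = L ∧ ∀ t, t₀ ≤ t → M (textSeg T t) = Part.some e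

/-- `𝓛 ∈ [TxtEx]`: some partial computable learner Ex-learns every member of `𝓛` from text. -/
def TxtEx (𝓛 : Set (Set ℕ)) : Prop :=
  ∃ M : List (Option ℕ) →. ℕ, Partrec M ∧ ∀ L ∈ 𝓛, TxtExLearns M L

/-- `𝓛` is an indexable family. -/
def IndexableFamily (𝓛 : Set (Set ℕ)) : Prop :=
  ∃ f : ℕ → ℕ → Bool, Computable₂ f ∧ 𝓛 = Set.range (fun i => {n | f i n = true})

/-- The language `L_{S,D} = S × (D ∪ {0}) ∪ (ℕ\S) × (ℕ\{0})`, where ℕ is identified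
with ℕ × ℕ via the computable pairing bijection `Nat.pair`/`Nat.unpair`. -/
def L_SD (S D : Finset ℕ) : Set ℕ :=
  {m | ((Nat.unpair m).1 ∈ S ∧ ((Nat.unpair m).2 ∈ D ∨ (Nat.unpair m).2 = 0)) ∨
       ((Nat.unpair m).1 ∉ S ∧ (Nat.unpair m).2 ≠ 0)}

/-! ### Computability part -/

theorem primrecRel_mem_list {α : Type*} [Primcodable α] :
    PrimrecRel (fun (l : List α) (a : α) => a ∈ l) :=
  (PrimrecRel.exists_mem_list (R := fun x a : α => x = a) Primrec.eq).of_eq (by simp)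

/-- The language coded by two lists, as a decidable predicate. -/
def listLang (p : List ℕ × List ℕ) (m : ℕ) : Prop :=
  ((Nat.unpair m).1 ∈ p.1 ∧ ((Nat.unpair m).2 ∈ p.2 ∨ (Nat.unpair m).2 = 0)) ∨
    (¬ (Nat.unpair m).1 ∈ p.1 ∧ ¬ (Nat.unpair m).2 = 0)

instance : DecidableRel listLang := fun p m => by unfold listLang; infer_instance

theorem primrecRel_listLang : PrimrecRel listLang := by
  have u1 : Primrec (fun q : (List ℕ × List ℕ) × ℕ => (Nat.unpair q.2).1) :=
    Primrec.fst.comp (Primrec.unpair.comp Primrec.snd)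
  have u2 : Primrec (fun q : (List ℕ × List ℕ) × ℕ => (Nat.unpair q.2).2) :=
    Primrec.snd.comp (Primrec.unpair.comp Primrec.snd)
  have h1 : PrimrecPred (fun q : (List ℕ × List ℕ) × ℕ => (Nat.unpair q.2).1 ∈ q.1.1) :=
    primrecRel_mem_list.comp (Primrec.fst.comp Primrec.fst) u1
  have h2 : PrimrecPred (fun q : (List ℕ × List ℕ) × ℕ => (Nat.unpair q.2).2 ∈ q.1.2) :=
    primrecRel_mem_list.comp (Primrec.snd.comp Primrec.fst) u2
  have h3 : PrimrecPred (fun q : (List ℕ × List ℕ) × ℕ => (Nat.unpair q.2).2 = 0) :=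
    Primrec.eq.comp u2 (Primrec.const 0)
  exact (h1.and (h2.or h3)).or (h1.not.and h3.not)

theorem listLang_eq (p : List ℕ × List ℕ) :
    {n | listLang p n} = L_SD p.1.toFinset p.2.toFinset := by
  ext m
  simp [listLang, L_SD]

theorem indexable_part : IndexableFamily {L | ∃ S D : Finset ℕ, L = L_SD S D} := by
  refine ⟨fun i n => decide (listLang (Denumerable.ofNat (List ℕ × List ℕ) i) n), ?_, ?_⟩
  · exact (Primrec₂.comp primrecRel_listLang.decide
      ((Primrec.ofNat (List ℕ × List ℕ)).comp Primrec.fst) Primrec.snd).to_comp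
  · ext L
    simp only [Set.mem_ofPred_eq, Set.mem_range, decide_eq_true_eq, listLang_eq]
    constructor
    · rintro ⟨S, D, rfl⟩
      exact ⟨Encodable.encode (S.toList, D.toList), by simp⟩
    · rintro ⟨i, rfl⟩
      exact ⟨_, _, rfl⟩

theorem exists_index :
    ∃ g : List ℕ × List ℕ → ℕ, Computable g ∧
      ∀ p, W (g p) = L_SD p.1.toFinset p.2.toFinset := by
  have hdec : Computable (fun m : ℕ =>
      decide (listLang (Denumerable.ofNat (List ℕ × List ℕ) m.unpair.1) m.unpair.2)) :=
    (Primrec₂.comp primrecRel_listLang.decide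
      ((Primrec.ofNat (List ℕ × List ℕ)).comp (Primrec.fst.comp Primrec.unpair))
      (Primrec.snd.comp Primrec.unpair)).to_comp
  have hpart : Partrec (fun m : ℕ =>
      bif decide (listLang (Denumerable.ofNat (List ℕ × List ℕ) m.unpair.1) m.unpair.2)
        then (Part.some 0 : Part ℕ) else Part.none) :=
    Partrec.cond hdec (Computable.const 0).partrec Partrec.none
  obtain ⟨c, hc⟩ := Nat.Partrec.Code.exists_code.1 (Partrec.nat_iff.1 hpart)
  refine ⟨fun p => Encodable.encode (Nat.Partrec.Code.curry c (Encodable.encode p)), ?_, ?_⟩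
  · exact (Primrec.encode.comp (Nat.Partrec.Code.primrec₂_curry.comp (Primrec.const c)
      Primrec.encode)).to_comp
  · intro p
    rw [← listLang_eq]
    ext n
    simp only [W, Denumerable.ofNat_encode, Nat.Partrec.Code.eval_curry, hc, Nat.unpair_pair,
      Set.mem_ofPred_eq]
    by_cases h : listLang p n <;> simp [h]

/-! ### Learning from text -/

/-- Current guess for `S`. -/
def guessS (σ : List (Option ℕ)) : List ℕ :=
  (List.range σ.length).filter (fun a => decide (some (Nat.pair a 0) ∈ σ))

/-- Current guess for `D`. -/
def guessD (σ : List (Option ℕ)) : List ℕ :=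
  (List.range σ.length).filter
    (fun b => decide (∃ a ∈ guessS σ, some (Nat.pair a b) ∈ σ))

theorem primrec_guessS : Primrec guessS := by
  have hR : PrimrecRel (fun (a : ℕ) (σ : List (Option ℕ)) => some (Nat.pair a 0) ∈ σ) :=
    primrecRel_mem_list.comp Primrec.snd
      (Primrec.option_some.comp (Primrec₂.natPair.comp Primrec.fst (Primrec.const 0)))
  exact (hR.listFilter).comp (Primrec.list_range.comp Primrec.list_length) Primrec.id

theorem primrec_guessD : Primrec guessD := by
  have hR : PrimrecRel (fun (a : ℕ) (q : ℕ × List (Option ℕ)) =>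
      some (Nat.pair a q.1) ∈ q.2) :=
    primrecRel_mem_list.comp (Primrec.snd.comp Primrec.snd)
      (Primrec.option_some.comp
        (Primrec₂.natPair.comp Primrec.fst (Primrec.fst.comp Primrec.snd)))
  have hR2 : PrimrecRel (fun (b : ℕ) (σ : List (Option ℕ)) =>
      ∃ a ∈ guessS σ, some (Nat.pair a b) ∈ σ) :=
    hR.exists_mem_list.comp (primrec_guessS.comp Primrec.snd) Primrec.id
  exact (hR2.listFilter).comp (Primrec.list_range.comp Primrec.list_length) Primrec.id

theorem filter_range_stable (S : Finset ℕ) {N t : ℕ} (hN : ∀ a ∈ S, a < N) (ht : N ≤ t) :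
    (List.range t).filter (fun a => decide (a ∈ S)) =
      (List.range N).filter (fun a => decide (a ∈ S)) := by
  induction t, ht using Nat.le_induction with
  | base => rfl
  | succ t ht ih =>
    have : t ∉ S := fun h => absurd (hN t h) (by omega)
    simp [List.range_succ, ih, this]

theorem mem_textSeg {T : ℕ → Option ℕ} {t : ℕ} {x : Option ℕ} :
    x ∈ textSeg T t ↔ ∃ s < t, T s = x := by
  simp [textSeg]

theorem length_textSeg (T : ℕ → Option ℕ) (t : ℕ) : (textSeg T t).length = t := by
  simp [textSeg]

theorem eventually_seen {L : Set ℕ} {T : ℕ → Option ℕ} (hT : IsText L T) {n : ℕ} (hn : n ∈ L) :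
    ∀ᶠ t in Filter.atTop, some n ∈ textSeg T t := by
  obtain ⟨s, hs⟩ := (hT n).1 hn
  filter_upwards [Filter.eventually_gt_atTop s] with t ht
  exact mem_textSeg.2 ⟨s, ht, hs⟩

theorem seen_mem {L : Set ℕ} {T : ℕ → Option ℕ} (hT : IsText L T) {n t : ℕ}
    (h : some n ∈ textSeg T t) : n ∈ L := by
  obtain ⟨s, -, hs⟩ := mem_textSeg.1 h
  exact (hT n).2 ⟨s, hs⟩

theorem pair_mem_L_SD {S D : Finset ℕ} {a b : ℕ} :
    Nat.pair a b ∈ L_SD S D ↔ (a ∈ S ∧ (b ∈ D ∨ b = 0)) ∨ (a ∉ S ∧ b ≠ 0) := by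
  simp [L_SD]

theorem txtEx_part : TxtEx {L | ∃ S D : Finset ℕ, L = L_SD S D} := by
  obtain ⟨g, hg, hW⟩ := exists_index
  refine ⟨fun σ => Part.some (g (guessS σ, guessD σ)),
    (hg.comp (primrec_guessS.pair primrec_guessD).to_comp).partrec, ?_⟩
  rintro L ⟨S, D, rfl⟩ T hT
  let D' : Finset ℕ := if S = ∅ then ∅ else insert 0 D
  obtain ⟨N, hN⟩ : ∃ N, ∀ a ∈ S ∪ D', a < N :=
    ⟨(S ∪ D').sup id + 1, fun a ha => Nat.lt_succ_of_le (Finset.le_sup (f := id) ha)⟩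
  have e1 : ∀ᶠ t in Filter.atTop, ∀ a ∈ S, some (Nat.pair a 0) ∈ textSeg T t :=
    (Filter.eventually_all_finset S).2 fun a ha =>
      eventually_seen hT (pair_mem_L_SD.2 (Or.inl ⟨ha, Or.inr rfl⟩))
  have e2 : ∀ᶠ t in Filter.atTop, ∀ b ∈ D', ∃ a ∈ S, some (Nat.pair a b) ∈ textSeg T t := by
    refine (Filter.eventually_all_finset D').2 fun b hb => ?_
    by_cases hS : S = ∅
    · simp [D', hS] at hb
    · obtain ⟨a, ha⟩ := Finset.nonempty_iff_ne_empty.2 hS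
      have hb' : b = 0 ∨ b ∈ D := by simpa [D', hS] using hb
      filter_upwards [eventually_seen hT (n := Nat.pair a b)
        (pair_mem_L_SD.2 (Or.inl ⟨ha, hb'.symm⟩))] with t ht
      exact ⟨a, ha, ht⟩
  obtain ⟨t₀, ht₀⟩ := Filter.eventually_atTop.1
    ((e1.and e2).and (Filter.eventually_ge_atTop N))
  let Sl := (List.range N).filter (fun a => decide (a ∈ S))
  let Dl := (List.range N).filter (fun a => decide (a ∈ D'))
  have hSl : Sl.toFinset = S := by
    ext a
    simp only [Sl, List.mem_toFinset, List.mem_filter, List.mem_range, decide_eq_true_eq]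
    exact ⟨fun h => h.2, fun h => ⟨hN a (Finset.mem_union_left _ h), h⟩⟩
  have hDl : Dl.toFinset = D' := by
    ext a
    simp only [Dl, List.mem_toFinset, List.mem_filter, List.mem_range, decide_eq_true_eq]
    exact ⟨fun h => h.2, fun h => ⟨hN a (Finset.mem_union_right _ h), h⟩⟩
  refine ⟨t₀, g (Sl, Dl), ?_, ?_⟩
  · rw [hW]
    simp only [hSl, hDl]
    ext m
    by_cases hS : S = ∅
    · simp [L_SD, hS]
    · simp only [L_SD, D', hS, if_false, Finset.mem_insert, Set.mem_ofPred_eq]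
      tauto
  · intro t ht
    obtain ⟨⟨h1, h2⟩, h3⟩ := ht₀ t ht
    have k1 : guessS (textSeg T t) = Sl := by
      rw [guessS, length_textSeg]
      simp only [Sl]
      rw [← filter_range_stable S (fun a ha => hN a (Finset.mem_union_left _ ha)) h3]
      refine List.filter_congr fun a _ => ?_
      refine decide_eq_decide.2 ⟨fun h => ?_, h1 a⟩
      have := pair_mem_L_SD.1 (seen_mem hT h)
      tauto
    have k2 : guessD (textSeg T t) = Dl := by
      rw [guessD, length_textSeg, k1]
      simp only [Dl]
      rw [← filter_range_stable D' (fun a ha => hN a (Finset.mem_union_right _ ha)) h3]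
      refine List.filter_congr fun b _ => ?_
      have hm : ∀ a, a ∈ Sl ↔ a ∈ S := fun a => by rw [← List.mem_toFinset, hSl]
      refine decide_eq_decide.2 ⟨?_, fun h => ?_⟩
      · rintro ⟨a, ha, h⟩
        have ha' := (hm a).1 ha
        have hS : S ≠ ∅ := Finset.nonempty_iff_ne_empty.1 ⟨a, ha'⟩
        have := pair_mem_L_SD.1 (seen_mem hT h)
        simp only [D', hS, if_false, Finset.mem_insert]
        tauto
      · obtain ⟨a, ha, h⟩ := h2 b h
        exact ⟨a, (hm a).2 ha, h⟩
    simp only [k1, k2]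

/-! ### No iterative learner from informant -/

theorem seg_succ (I : ℕ → Datum) (t : ℕ) : seg I (t + 1) = seg I t ++ [I t] := by
  simp [seg, List.range_succ]

theorem length_seg (I : ℕ → Datum) (t : ℕ) : (seg I t).length = t := by simp [seg]

/-- An infinite sequence can be built by recursion on its initial segments. -/
theorem exists_seq (F : List Datum → Datum) : ∃ I : ℕ → Datum, ∀ t, I t = F (seg I t) := by
  let s : ℕ → List Datum := fun n => Nat.rec [] (fun _ l => l ++ [F l]) n
  refine ⟨fun t => F (s t), fun t => ?_⟩
  have : ∀ t, seg (fun t => F (s t)) t = s t := by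
    intro t
    induction t with
    | zero => rfl
    | succ t ih => rw [seg_succ, ih]
  simp only [this]

/-- Same, starting from a given finite sequence. -/
theorem exists_seq_from (σ : List Datum) (G : List Datum → Datum) :
    ∃ I : ℕ → Datum, seg I σ.length = σ ∧ ∀ t, σ.length ≤ t → I t = G (seg I t) := by
  obtain ⟨I, hI⟩ := exists_seq
    (fun s => if h : s.length < σ.length then σ[s.length] else G s)
  refine ⟨I, ?_, fun t ht => ?_⟩
  · have : ∀ t, t ≤ σ.length → seg I t = σ.take t := by
      intro t
      induction t with
      | zero => intro _; rfl
      | succ t ih =>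
        intro ht
        have ht' : t < σ.length := ht
        have hIt : I t = σ[t] := by
          rw [hI t]
          simp [length_seg, ht']
        rw [seg_succ, ih (by omega), hIt]
        simp
    rw [this _ le_rfl, List.take_length]
  · rw [hI t]
    simp [length_seg, ht]

open Classical in
/-- The correctly labeled datum for `n`. -/
noncomputable def datum (L : Set ℕ) (n : ℕ) : Datum := (n, decide (n ∈ L))

/-- `x` is correctly labeled with respect to `L`. -/
def Correct (L : Set ℕ) (x : Datum) : Prop := x.2 = true ↔ x.1 ∈ L

theorem correct_datum (L : Set ℕ) (n : ℕ) : Correct L (datum L n) := by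
  simp [Correct, datum]

theorem correct_of_start {L : Set ℕ} {σ : List Datum} (hσ : ∀ x ∈ σ, Correct L x)
    {I : ℕ → Datum} (hI : seg I σ.length = σ)
    (h : ∀ t, σ.length ≤ t → Correct L (I t)) (t : ℕ) : Correct L (I t) := by
  rcases le_or_gt σ.length t with ht | ht
  · exact h t ht
  · apply hσ
    rw [← hI]
    exact List.mem_map.2 ⟨t, List.mem_range.2 ht, rfl⟩

theorem exists_locking {M : List Datum →. ℕ} {h : ℕ × Datum →. ℕ}
    (hM : ∀ σ x, M (σ ++ [x]) = (M σ).bind (fun e => h (e, x)))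
    {L : Set ℕ} (hL : ExLearns M L) (σ : List Datum) (hσ : ∀ x ∈ σ, Correct L x) :
    ∃ τ : List Datum, (∀ x ∈ τ, Correct L x) ∧ ∃ e, W e = L ∧ M (σ ++ τ) = Part.some e ∧
      ∀ x, Correct L x → h (e, x) = Part.some e := by
  have key : ∃ τ : List Datum, (∀ x ∈ τ, Correct L x) ∧
      ∀ x, Correct L x → M (σ ++ τ ++ [x]) = M (σ ++ τ) := by
    by_contra hno
    push Not at hno
    have hno' : ∀ s : List Datum, ∃ x, Correct L x ∧
        ((∃ τ, s = σ ++ τ ∧ ∀ y ∈ τ, Correct L y) → M (s ++ [x]) ≠ M s) := by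
      intro s
      by_cases hs : ∃ τ, s = σ ++ τ ∧ ∀ y ∈ τ, Correct L y
      · obtain ⟨τ, rfl, hτ⟩ := hs
        obtain ⟨x, hx, hne⟩ := hno τ hτ
        exact ⟨x, hx, fun _ => hne⟩
      · exact ⟨datum L 0, correct_datum L 0, fun h' => absurd h' hs⟩
    choose X hX hXne using hno'
    obtain ⟨I, hI1, hI2⟩ := exists_seq_from σ
      (fun s => if s.length % 2 = 0 then datum L (s.length / 2 - σ.length) else X s)
    have hc : ∀ t, Correct L (I t) := by
      refine correct_of_start hσ hI1 fun t ht => ?_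
      rw [hI2 t ht]
      split_ifs
      · exact correct_datum _ _
      · exact hX _
    have hinf : IsInformant L I := by
      refine ⟨hc, fun n => ⟨2 * (n + σ.length), ?_⟩⟩
      simp only
      rw [hI2 _ (by omega)]
      simp [length_seg, datum]
    obtain ⟨t₀, e, -, ht⟩ := hL I hinf
    have hdec : ∀ k, ∃ τ, seg I (σ.length + k) = σ ++ τ ∧ ∀ y ∈ τ, Correct L y := by
      intro k
      induction k with
      | zero => exact ⟨[], by simpa using hI1, by simp⟩
      | succ k ih =>
        obtain ⟨τ, h1, h2⟩ := ih
        refine ⟨τ ++ [I (σ.length + k)], ?_, ?_⟩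
        · rw [← add_assoc, seg_succ, h1, List.append_assoc]
        · intro y hy
          rcases List.mem_append.1 hy with hy | hy
          · exact h2 y hy
          · rw [List.mem_singleton.1 hy]; exact hc _
    let t := σ.length + (σ.length + 2 * t₀ + 1)
    have hne := hXne (seg I t) (hdec _)
    have hIt : I t = X (seg I t) := by
      rw [hI2 t (by omega), if_neg]
      rw [length_seg]; omega
    rw [← hIt, ← seg_succ, ht t (by omega), ht (t + 1) (by omega)] at hne
    exact hne rfl
  obtain ⟨τ, hτ, hlock⟩ := key
  have hστ : ∀ x ∈ σ ++ τ, Correct L x := fun x hx =>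
    (List.mem_append.1 hx).elim (hσ x) (hτ x)
  obtain ⟨I, hI1, hI2⟩ := exists_seq_from (σ ++ τ)
    (fun s => datum L (s.length - (σ ++ τ).length))
  have hc : ∀ t, Correct L (I t) := by
    refine correct_of_start hστ hI1 fun t ht => ?_
    rw [hI2 t ht]
    exact correct_datum _ _
  have hinf : IsInformant L I := by
    refine ⟨hc, fun n => ⟨(σ ++ τ).length + n, ?_⟩⟩
    simp only
    rw [hI2 _ (by omega), length_seg]
    simp [datum]
  obtain ⟨t₀, e, hW, ht⟩ := hL I hinf
  have hconst : ∀ k, M (seg I ((σ ++ τ).length + k)) = M (σ ++ τ) := by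
    intro k
    induction k with
    | zero => rw [add_zero, hI1]
    | succ k ih =>
      rw [← add_assoc, seg_succ, hM, ih, ← hM]
      exact hlock _ (hc _)
  have hMe : M (σ ++ τ) = Part.some e := by
    rw [← hconst t₀]
    exact ht _ (by omega)
  refine ⟨τ, hτ, e, hW, hMe, fun x hx => ?_⟩
  have := hlock x hx
  rw [hM, hMe, Part.bind_some] at this
  exact this

theorem run_congr {M : List Datum →. ℕ} {h : ℕ × Datum →. ℕ}
    (hM : ∀ σ x, M (σ ++ [x]) = (M σ).bind (fun e => h (e, x)))
    {s s' : List Datum} (hs : M s = M s') (τ : List Datum) : M (s ++ τ) = M (s' ++ τ) := by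
  induction τ using List.reverseRecOn with
  | nil => simpa using hs
  | append_singleton τ x ih =>
    rw [← List.append_assoc, ← List.append_assoc, hM, hM, ih]

/-- A number exceeding every given datum. -/
theorem exists_bound (σ : List Datum) (f : ℕ → ℕ) : ∃ a, ∀ x ∈ σ, f x.1 < a := by
  induction σ with
  | nil => exact ⟨0, by simp⟩
  | cons y σ ih =>
    obtain ⟨a, ha⟩ := ih
    refine ⟨max a (f y.1 + 1), fun x hx => ?_⟩
    rcases List.mem_cons.1 hx with rfl | hx
    · omega
    · have := ha x hx; omega

theorem not_itInfEx_part : ¬ ItInfEx {L | ∃ S D : Finset ℕ, L = L_SD S D} := by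
  rintro ⟨M, -, ⟨h, -, hM⟩, hL⟩
  -- locking sequence for the language with empty `S`
  obtain ⟨σ, hσ, e, -, hMe, he⟩ := exists_locking hM (hL _ ⟨∅, ∅, rfl⟩) [] (by simp)
  rw [List.nil_append] at hMe
  obtain ⟨a, ha⟩ := exists_bound σ (fun m => (Nat.unpair m).1)
  have hσ1 : ∀ D, ∀ x ∈ σ, Correct (L_SD {a} D) x := by
    intro D x hx
    have h1 := hσ x hx
    have h2 : (Nat.unpair x.1).1 ≠ a := (ha x hx).ne
    simpa [Correct, L_SD, h2] using h1
  obtain ⟨τ, hτ, e1, hW1, hMe1, he1⟩ :=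
    exists_locking hM (hL _ ⟨{a}, ∅, rfl⟩) σ (hσ1 ∅)
  obtain ⟨d, hd⟩ := exists_bound τ (fun m => (Nat.unpair m).2)
  have hagree : ∀ m, m ≠ Nat.pair a (d + 1) → (m ∈ L_SD {a} ∅ ↔ m ∈ L_SD {a} {d + 1}) := by
    intro m hm
    have hne : ¬ ((Nat.unpair m).1 = a ∧ (Nat.unpair m).2 = d + 1) := by
      rintro ⟨h1, h2⟩
      exact hm (by rw [← h1, ← h2, Nat.pair_unpair])
    simp only [L_SD, Set.mem_ofPred_eq, Finset.mem_singleton, Finset.notMem_empty]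
    tauto
  have hcor : ∀ x : Datum, x.1 ≠ Nat.pair a (d + 1) →
      (Correct (L_SD {a} ∅) x ↔ Correct (L_SD {a} {d + 1}) x) := by
    intro x hx
    simp only [Correct, hagree x.1 hx]
  let p : Datum := (Nat.pair a (d + 1), true)
  have hp0 : Correct (L_SD ∅ ∅) p := by simp [Correct, p, L_SD]
  have hp2 : Correct (L_SD {a} {d + 1}) p := by simp [Correct, p, L_SD]
  let ρ : List Datum := (σ ++ [p]) ++ τ
  have hMρ : M ρ = Part.some e1 := by
    rw [← hMe1]
    apply run_congr hM
    rw [hM, hMe, Part.bind_some, he p hp0]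
  have hτ2 : ∀ x ∈ τ, Correct (L_SD {a} {d + 1}) x := by
    intro x hx
    refine (hcor x fun hEq => ?_).1 (hτ x hx)
    have := hd x hx
    simp only [hEq, Nat.unpair_pair] at this
    omega
  have hρ : ∀ x ∈ ρ, Correct (L_SD {a} {d + 1}) x := by
    intro x hx
    simp only [ρ, List.mem_append, List.mem_singleton] at hx
    rcases hx with (hx | rfl) | hx
    · exact hσ1 _ x hx
    · exact hp2
    · exact hτ2 x hx
  -- continue with all data except the one at `p`
  let N : ℕ → ℕ := fun n => if n = Nat.pair a (d + 1) then Nat.pair a 0 else n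
  have hN : ∀ n, N n ≠ Nat.pair a (d + 1) := by
    intro n
    simp only [N]
    split_ifs with hn
    · simp [Nat.pair_eq_pair]
    · exact hn
  obtain ⟨I, hI1, hI2⟩ := exists_seq_from ρ
    (fun s => datum (L_SD {a} {d + 1}) (N (s.length - ρ.length)))
  have hc : ∀ t, Correct (L_SD {a} {d + 1}) (I t) := by
    refine correct_of_start hρ hI1 fun t ht => ?_
    rw [hI2 t ht]
    exact correct_datum _ _
  have hinf : IsInformant (L_SD {a} {d + 1}) I := by
    refine ⟨hc, fun n => ?_⟩
    by_cases hn : n = Nat.pair a (d + 1)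
    · have hmem : p ∈ seg I ρ.length := by
        rw [hI1]; simp [ρ]
      obtain ⟨t, -, ht⟩ := List.mem_map.1 hmem
      refine ⟨t, ?_⟩
      simp only [ht, hn, p]
    · refine ⟨ρ.length + n, ?_⟩
      simp only
      rw [hI2 _ (by omega), length_seg]
      simp [datum, N, hn]
  obtain ⟨t₀, e2, hW2, ht⟩ := hL _ ⟨{a}, {d + 1}, rfl⟩ I hinf
  have hconst : ∀ k, M (seg I (ρ.length + k)) = Part.some e1 := by
    intro k
    induction k with
    | zero => rw [add_zero, hI1, hMρ]
    | succ k ih =>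
      rw [← add_assoc, seg_succ, hM, ih, Part.bind_some]
      refine he1 _ ((hcor _ ?_).2 (hc _))
      rw [hI2 _ (by omega)]
      exact hN _
  have hee : e1 = e2 := by
    have h1 := hconst t₀
    rw [ht _ (by omega)] at h1
    exact (Part.some_injective h1).symm
  have hEq : L_SD {a} ∅ = L_SD {a} {d + 1} := by rw [← hW1, ← hW2, hee]
  have : Nat.pair a (d + 1) ∈ L_SD {a} ∅ := by
    rw [hEq]; simp [L_SD]
  simp [L_SD] at this

/-- The family `{ L_{S,D} : S, D finite }` is an indexable family which is
Ex-learnable from text but not Ex-learnable from informant by any iterative learner. -/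
theorem txtEx_not_itInfEx :
    IndexableFamily {L | ∃ S D : Finset ℕ, L = L_SD S D} ∧
    TxtEx {L | ∃ S D : Finset ℕ, L = L_SD S D} ∧
    ¬ ItInfEx {L | ∃ S D : Finset ℕ, L = L_SD S D} :=
  ⟨indexable_part, txtEx_part, not_itInfEx_part⟩
end

section
/- Let 𝐟 be the Boolean mapping. For every indexable family 𝓛, learnability being witnessed with respect to indexable hypothesis spaces: (1) if 𝓛 is Ex-learnable from informant with respect to some indexable hypothesis space, then 𝐟(𝓛) is Ex-learnable from text with respect to an indexable hypothesis space; (2) if 𝐟(𝓛) is Ex-learnable from informant by an iterative learner with respect to some indexable hypothesis space, then 𝓛 is Ex-learnable from informant by an iterative learner with respect to an indexable hypothesis space. -/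
/-- `H` is an indexable hypothesis space, given by a uniform decision procedure. -/
def IndexedHyp (H : ℕ → Set ℕ) : Prop :=
  ∃ f : ℕ → ℕ → Bool, Computable₂ f ∧ ∀ i, H i = {n | f i n = true}

/-- `M` Ex-learns `L` from informant with respect to the hypothesis space `H`. -/
def ExLearnsWrt (H : ℕ → Set ℕ) (M : List Datum →. ℕ) (L : Set ℕ) : Prop :=
  ∀ I, IsInformant L I → ∃ t₀ e, H e = L ∧ ∀ t, t₀ ≤ t → M (seg I t) = Part.some e

/-- `M` Ex-learns `L` from text with respect to the hypothesis space `H`. -/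
def TxtExLearnsWrt (H : ℕ → Set ℕ) (M : List (Option ℕ) →. ℕ) (L : Set ℕ) : Prop :=
  ∀ T, IsText L T → ∃ t₀ e, H e = L ∧ ∀ t, t₀ ≤ t → M (textSeg T t) = Part.some e

/-- The Boolean mapping `𝐟`: `2n ∈ 𝐟(L) ↔ n ∈ L` and `2n+1 ∈ 𝐟(L) ↔ n ∉ L`. -/
def fbool (L : Set ℕ) : Set ℕ := {m | if m % 2 = 0 then m / 2 ∈ L else m / 2 ∉ L}

/-- Decision procedure for the images under the Boolean mapping. -/
def gdec (f : ℕ → ℕ → Bool) (i m : ℕ) : Bool :=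
  bif decide (m % 2 = 0) then f i (m / 2) else !(f i (m / 2))

theorem gdec_spec (f : ℕ → ℕ → Bool) (i : ℕ) :
    fbool {n | f i n = true} = {m | gdec f i m = true} := by
  ext m
  by_cases h : m % 2 = 0 <;> simp [fbool, gdec, h]

theorem gdec_computable {f : ℕ → ℕ → Bool} (hf : Computable₂ f) : Computable₂ (gdec f) := by
  have hd : Computable (fun p : ℕ × ℕ => p.2 / 2) :=
    (Primrec.nat_div.comp Primrec.snd (Primrec.const 2)).to_comp
  have h1 : Computable (fun p : ℕ × ℕ => f p.1 (p.2 / 2)) :=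
    Computable₂.comp hf Computable.fst hd
  have h2 : Computable (fun p : ℕ × ℕ => decide (p.2 % 2 = 0)) :=
    (Primrec.eq.comp (Primrec.nat_mod.comp Primrec.snd (Primrec.const 2))
      (Primrec.const 0)).decide.to_comp
  exact Computable.cond h2 h1 (Primrec.not.to_comp.comp h1)

/-- Check a single text entry. -/
def chk (g : ℕ → ℕ → Bool) (i : ℕ) (o : Option (Option ℕ)) : Bool :=
  Option.casesOn (o.bind id) true (fun m => g i m)

/-- Check the first `k` entries. -/
def chkUpTo (g : ℕ → ℕ → Bool) (τ : List (Option ℕ)) (i k : ℕ) : Bool :=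
  Nat.rec true (fun j r => r && chk g i τ[j]?) k

theorem chkUpTo_spec (g : ℕ → ℕ → Bool) (τ : List (Option ℕ)) (i k : ℕ) :
    chkUpTo g τ i k = true ↔ ∀ j < k, chk g i τ[j]? = true := by
  induction k with
  | zero => simp [chkUpTo]
  | succ k ih =>
    have : chkUpTo g τ i (k+1) = (chkUpTo g τ i k && chk g i τ[k]?) := rfl
    rw [this, Bool.and_eq_true, ih]
    constructor
    · rintro ⟨h1, h2⟩ j hj
      rcases Nat.lt_succ_iff_lt_or_eq.1 hj with h | rfl
      · exact h1 j h
      · exact h2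
    · intro h
      exact ⟨fun j hj => h j (by omega), h k (by omega)⟩

theorem chkUpTo_computable {g : ℕ → ℕ → Bool} (hg : Computable₂ g) :
    Computable₂ (fun (τ : List (Option ℕ)) (i : ℕ) => chkUpTo g τ i τ.length) := by
  have hget : Computable (fun q : (List (Option ℕ) × ℕ) × (ℕ × Bool) =>
      (q.1.1[q.2.1]?).bind id) :=
    (Primrec.option_bind (Primrec.list_getElem?.comp (Primrec.fst.comp Primrec.fst)
      (Primrec.fst.comp Primrec.snd)) (Primrec.snd.to₂)).to_comp
  have hchk : Computable (fun q : (List (Option ℕ) × ℕ) × (ℕ × Bool) =>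
      chk g q.1.2 q.1.1[q.2.1]?) := by
    refine (Computable.option_casesOn hget (Computable.const true)
      (g := fun q m => g q.1.2 m) ?_).of_eq ?_
    · exact Computable₂.comp hg (Computable.snd.comp (Computable.fst.comp Computable.fst))
        Computable.snd
    · intro q; rfl
  refine Computable.nat_rec (f := fun p : List (Option ℕ) × ℕ => p.1.length)
    (g := fun _ => true) (h := fun p q => q.2 && chk g p.2 p.1[q.1]?) ?_ ?_ ?_
  · exact Computable.list_length.comp Computable.fst
  · exact Computable.const true
  · exact Computable₂.comp Primrec.and.to_comp (Computable.snd.comp Computable.snd) hchk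

theorem chk_textSeg (g : ℕ → ℕ → Bool) (T : ℕ → Option ℕ) (i t : ℕ) :
    chkUpTo g (textSeg T t) i (textSeg T t).length = true ↔
      ∀ j < t, ∀ m, T j = some m → g i m = true := by
  rw [chkUpTo_spec]
  have hl : (textSeg T t).length = t := by simp [textSeg]
  rw [hl]
  refine forall₂_congr fun j hj => ?_
  have : (textSeg T t)[j]? = some (T j) := by simp [textSeg, hj]
  rw [this]
  cases h : T j <;> simp [chk]

theorem fbool_eq_of_subset {A B : Set ℕ} (h : fbool A ⊆ fbool B) : A = B := by
  ext n
  constructor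
  · intro hn
    have : 2 * n ∈ fbool B := h (by simpa [fbool] using hn)
    simpa [fbool] using this
  · intro hn
    by_contra hc
    have e1 : (2 * n + 1) % 2 = 1 := by omega
    have e2 : (2 * n + 1) / 2 = n := by omega
    have : 2 * n + 1 ∈ fbool B := h (by simpa [fbool, e1, e2] using hc)
    simp [fbool, e1, e2] at this
    exact this hn

theorem part_one (f : ℕ → ℕ → Bool) (hf : Computable₂ f) :
    ∃ H' : ℕ → Set ℕ, IndexedHyp H' ∧
      (∀ L ∈ fbool '' Set.range (fun i => {n | f i n = true}), ∃ i, H' i = L) ∧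
      ∃ M' : List (Option ℕ) →. ℕ, Partrec M' ∧
        ∀ L ∈ fbool '' Set.range (fun i => {n | f i n = true}), TxtExLearnsWrt H' M' L := by
  have hg := gdec_computable hf
  refine ⟨fun i => {m | gdec f i m = true}, ⟨gdec f, hg, fun _ => rfl⟩, ?_,
    fun τ => Nat.rfind (fun i => Part.some (chkUpTo (gdec f) τ i τ.length)), ?_, ?_⟩
  · rintro _ ⟨_, ⟨i, rfl⟩, rfl⟩
    exact ⟨i, (gdec_spec f i).symm⟩
  · exact Partrec.rfind (chkUpTo_computable hg).partrec₂
  · rintro _ ⟨_, ⟨i, rfl⟩, rfl⟩ T hT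
    classical
    have hex : ∃ e, {m | gdec f e m = true} = fbool {n | f i n = true} :=
      ⟨i, (gdec_spec f i).symm⟩
    have he := Nat.find_spec hex
    have hmin := fun k => @Nat.find_min _ _ hex k
    generalize Nat.find hex = e at he hmin
    have hbad : ∀ k, ∃ t, k < e → ∃ m, T t = some m ∧ gdec f k m = false := by
      intro k
      by_cases hk : k < e
      · have : ¬ fbool {n | f i n = true} ⊆ fbool {n | f k n = true} := by
          intro hs
          apply hmin k hk
          rw [← gdec_spec, ← fbool_eq_of_subset hs]
        obtain ⟨m, hm, hm'⟩ := Set.not_subset.1 this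
        obtain ⟨t, ht⟩ := (hT m).1 hm
        rw [gdec_spec] at hm'
        exact ⟨t, fun _ => ⟨m, ht, by simpa using hm'⟩⟩
      · exact ⟨0, fun h => absurd h hk⟩
    choose s hs using hbad
    refine ⟨(Finset.range e).sup s + 1, e, he, fun t ht => ?_⟩
    rw [Part.eq_some_iff]
    refine Nat.mem_rfind.2 ⟨?_, @fun k hk => ?_⟩
    · rw [Part.mem_some_iff, eq_comm, chk_textSeg]
      intro j _ m hm
      have : m ∈ {m | gdec f e m = true} := by
        rw [he]; exact (hT m).2 ⟨j, hm⟩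
      exact this
    · rw [Part.mem_some_iff, eq_comm, ← Bool.not_eq_true, chk_textSeg]
      intro hall
      obtain ⟨m, h1, h2⟩ := hs k hk
      have hle : s k ≤ (Finset.range e).sup s := Finset.le_sup (Finset.mem_range.2 hk)
      have := hall (s k) (by omega) m h1
      simp [h2] at this

/-- Translate one datum for `L` to two data for `fbool L`. -/
def trans2 (x : Datum) : List Datum := [(2 * x.1, x.2), (2 * x.1 + 1, !x.2)]

/-- The translated informant. -/
def trInf (I : ℕ → Datum) (t : ℕ) : Datum :=
  if t % 2 = 0 then (2 * (I (t / 2)).1, (I (t / 2)).2)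
  else (2 * (I (t / 2)).1 + 1, !(I (t / 2)).2)

theorem seg_trInf (I : ℕ → Datum) (t : ℕ) :
    (seg I t).flatMap trans2 = seg (trInf I) (2 * t) := by
  induction t with
  | zero => simp [seg]
  | succ t ih =>
    have h1 : seg I (t+1) = seg I t ++ [I t] := by simp [seg, List.range_succ]
    have h2 : seg (trInf I) (2 * (t+1)) =
        seg (trInf I) (2 * t) ++ [trInf I (2*t), trInf I (2*t+1)] := by
      rw [show 2 * (t+1) = 2*t+1+1 by ring]
      simp [seg, List.range_succ]
    have e1 : (2 * t + 1) % 2 = 1 := by omega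
    have e2 : (2 * t + 1) / 2 = t := by omega
    rw [h1, h2, List.flatMap_append, ih]
    simp [trans2, trInf, e1, e2]

theorem trInf_informant {L : Set ℕ} {I : ℕ → Datum} (hI : IsInformant L I) :
    IsInformant (fbool L) (trInf I) := by
  constructor
  · intro t
    have h := hI.1 (t / 2)
    generalize I (t / 2) = d at h
    by_cases ht : t % 2 = 0
    · simpa [trInf, ht, fbool] using hI.1 (t / 2)
    · have e1 : ∀ n, (2 * n + 1) % 2 = 1 := by intro n; omega
      have e2 : ∀ n, (2 * n + 1) / 2 = n := by intro n; omega
      have := not_congr (hI.1 (t / 2))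
      simpa [trInf, ht, fbool, e1, e2] using this
  · intro m
    obtain ⟨t, ht⟩ := hI.2 (m / 2)
    simp only at ht
    by_cases hm : m % 2 = 0
    · refine ⟨2 * t, ?_⟩
      simp [trInf, ht]; omega
    · refine ⟨2 * t + 1, ?_⟩
      have e1 : (2 * t + 1) % 2 = 1 := by omega
      have e2 : (2 * t + 1) / 2 = t := by omega
      simp [trInf, e1, e2, ht]; omega

theorem prim_fst2 : Primrec (fun x : Datum => ((2 * x.1, x.2) : Datum)) :=
  Primrec.pair (Primrec.nat_mul.comp (Primrec.const 2) Primrec.fst) Primrec.snd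

theorem prim_snd2 : Primrec (fun x : Datum => ((2 * x.1 + 1, !x.2) : Datum)) :=
  Primrec.pair (Primrec.succ.comp (Primrec.nat_mul.comp (Primrec.const 2) Primrec.fst))
    (Primrec.not.comp Primrec.snd)

theorem trans2_primrec : Primrec trans2 :=
  Primrec.list_cons.comp prim_fst2 (Primrec.list_cons.comp prim_snd2 (Primrec.const []))

theorem part_two (𝓛 : Set (Set ℕ)) :
    ((∃ H : ℕ → Set ℕ, IndexedHyp H ∧ (∀ L ∈ fbool '' 𝓛, ∃ i, H i = L) ∧
        ∃ M : List Datum →. ℕ, Partrec M ∧ Iterative M ∧ ∀ L ∈ fbool '' 𝓛, ExLearnsWrt H M L) →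
      (∃ H' : ℕ → Set ℕ, IndexedHyp H' ∧ (∀ L ∈ 𝓛, ∃ i, H' i = L) ∧
        ∃ M : List Datum →. ℕ, Partrec M ∧ Iterative M ∧ ∀ L ∈ 𝓛, ExLearnsWrt H' M L)) := by
  rintro ⟨H, ⟨f, hf, hH⟩, hcov, M, hM, ⟨h, hh, hit⟩, hL⟩
  have key : ∀ e L, H e = fbool L → {n | 2 * n ∈ H e} = L := by
    intro e L he
    ext n
    simp [he, fbool]
  refine ⟨fun i => {n | 2 * n ∈ H i}, ⟨fun i n => f i (2 * n), ?_, ?_⟩, ?_,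
    fun σ => M (σ.flatMap trans2), ?_, ⟨fun p => (h (p.1, (2 * p.2.1, p.2.2))).bind
      (fun e => h (e, (2 * p.2.1 + 1, !p.2.2))), ?_, ?_⟩, ?_⟩
  · exact Computable₂.comp hf Computable.fst
      (Primrec.nat_mul.comp (Primrec.const 2) Primrec.snd).to_comp
  · intro i; simp [hH]
  · intro L hLm
    obtain ⟨i, hi⟩ := hcov _ ⟨L, hLm, rfl⟩
    exact ⟨i, key i L hi⟩
  · exact hM.comp (Primrec.list_flatMap Primrec.id (trans2_primrec.comp Primrec.snd).to₂).to_comp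
  · refine Partrec.bind (hh.comp (Computable.pair Computable.fst
      (prim_fst2.to_comp.comp Computable.snd))) ?_
    exact hh.comp (Computable.pair Computable.snd
      (prim_snd2.to_comp.comp (Computable.snd.comp Computable.fst)))
  · intro σ x
    have : (σ ++ [x]).flatMap trans2 =
        (σ.flatMap trans2 ++ [(2 * x.1, x.2)]) ++ [(2 * x.1 + 1, !x.2)] := by
      simp [trans2]
    simp only [this]
    rw [hit, hit, Part.bind_assoc]
  · intro L hLm I hI
    obtain ⟨t₀, e, he, ht⟩ := hL _ ⟨L, hLm, rfl⟩ _ (trInf_informant hI)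
    refine ⟨t₀, e, key e L he, fun t htt => ?_⟩
    simp only [seg_trInf]
    exact ht _ (by omega)

/-- For an indexable family `𝓛` (learnability witnessed by indexable hypothesis spaces):
(1) if `𝓛` is Ex-learnable from informant, then `𝐟(𝓛)` is Ex-learnable from text;
(2) if `𝐟(𝓛)` is Ex-learnable from informant by an iterative learner, then so is `𝓛`. -/
theorem boolean_mapping_transfer (𝓛 : Set (Set ℕ)) (h𝓛 : IndexableFamily 𝓛) :
    ((∃ H : ℕ → Set ℕ, IndexedHyp H ∧ (∀ L ∈ 𝓛, ∃ i, H i = L) ∧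
        ∃ M : List Datum →. ℕ, Partrec M ∧ ∀ L ∈ 𝓛, ExLearnsWrt H M L) →
      (∃ H' : ℕ → Set ℕ, IndexedHyp H' ∧ (∀ L ∈ fbool '' 𝓛, ∃ i, H' i = L) ∧
        ∃ M' : List (Option ℕ) →. ℕ, Partrec M' ∧ ∀ L ∈ fbool '' 𝓛, TxtExLearnsWrt H' M' L)) ∧
    ((∃ H : ℕ → Set ℕ, IndexedHyp H ∧ (∀ L ∈ fbool '' 𝓛, ∃ i, H i = L) ∧
        ∃ M : List Datum →. ℕ, Partrec M ∧ Iterative M ∧ ∀ L ∈ fbool '' 𝓛, ExLearnsWrt H M L) →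
      (∃ H' : ℕ → Set ℕ, IndexedHyp H' ∧ (∀ L ∈ 𝓛, ∃ i, H' i = L) ∧
        ∃ M : List Datum →. ℕ, Partrec M ∧ Iterative M ∧ ∀ L ∈ 𝓛, ExLearnsWrt H' M L)) := by
  refine ⟨fun _ => ?_, part_two 𝓛⟩
  obtain ⟨f, hf, rfl⟩ := h𝓛
  exact part_one f hf
end

section
/- Totality restricts iterative learning from informant: there exists a class 𝓛 of languages that is Ex-learnable from informant by an iterative (partial computable) learner, but 𝓛 is not Ex-learnable from informant by any iterative learner that is a total computable function on finite informant sequences. -/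
open Nat.Partrec in
/-- Run the `e`-th learner on `σ` extended by `(m, true)` and on `σ`, and compare. -/
def stepB (e m : ℕ) (σ : List Datum) : Part Bool :=
  (Code.eval (Denumerable.ofNat Code e) (Encodable.encode (σ ++ [(m, true)]))).bind fun u =>
    (Code.eval (Denumerable.ofNat Code e) (Encodable.encode σ)).map fun v =>
      (decide (m.unpair.1 = e) && !decide (u = v))

/-- The canonical diagonal sequence of length `m`. -/
def seqB (e : ℕ) (m : ℕ) : Part (List Datum) :=
  Nat.rec (Part.some []) (fun k IH => IH.bind fun σ => (stepB e k σ).map fun b => σ ++ [(k, b)]) m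

/-- Membership of `m` in the diagonal language. -/
def memB (e m : ℕ) : Part Bool := (seqB e m).bind fun σ => stepB e m σ

theorem stepB_partrec : Partrec fun z : (ℕ × ℕ) × List Datum => stepB z.1.1 z.1.2 z.2 := by
  unfold stepB
  have hc : Computable fun z : (ℕ × ℕ) × List Datum =>
      Denumerable.ofNat Nat.Partrec.Code z.1.1 :=
    (Computable.ofNat _).comp (Computable.fst.comp Computable.fst)
  have h1 : Computable fun z : (ℕ × ℕ) × List Datum =>
      Encodable.encode (z.2 ++ [(z.1.2, true)]) :=
    Computable.encode.comp (Computable.list_append.comp Computable.snd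
      (Computable.list_cons.comp
        (Computable.pair (Computable.snd.comp Computable.fst) (Computable.const true))
        (Computable.const [])))
  have h2 : Computable fun z : (ℕ × ℕ) × List Datum => Encodable.encode z.2 :=
    Computable.encode.comp Computable.snd
  have hp1 := Nat.Partrec.Code.eval_part.comp hc h1
  have hp2 := Nat.Partrec.Code.eval_part.comp hc h2
  refine hp1.bind ?_
  refine Partrec.map (hp2.comp Computable.fst) ?_
  have : Primrec fun w : (((ℕ × ℕ) × List Datum) × ℕ) × ℕ =>
      (decide (w.1.1.1.2.unpair.1 = w.1.1.1.1) && !decide (w.1.2 = w.2)) := by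
    refine Primrec.and.comp ?_ (Primrec.not.comp ?_)
    · have : PrimrecPred fun w : (((ℕ × ℕ) × List Datum) × ℕ) × ℕ =>
          w.1.1.1.2.unpair.1 = w.1.1.1.1 := by
        refine PrimrecRel.comp Primrec.eq ?_ ?_
        · exact Primrec.fst.comp (Primrec.unpair.comp (Primrec.snd.comp (Primrec.fst.comp
            (Primrec.fst.comp Primrec.fst))))
        · exact Primrec.fst.comp (Primrec.fst.comp (Primrec.fst.comp Primrec.fst))
      exact this.decide
    · have : PrimrecPred fun w : (((ℕ × ℕ) × List Datum) × ℕ) × ℕ => w.1.2 = w.2 :=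
        PrimrecRel.comp Primrec.eq (Primrec.snd.comp Primrec.fst) Primrec.snd
      exact this.decide
  exact this.to_comp

theorem seqB_zero (e : ℕ) : seqB e 0 = Part.some [] := rfl

theorem seqB_succ (e m : ℕ) : seqB e (m + 1) = (seqB e m).bind fun σ =>
    (stepB e m σ).map fun b => σ ++ [(m, b)] := rfl

attribute [irreducible] stepB

theorem seqB_partrec : Partrec fun z : ℕ × ℕ => seqB z.1 z.2 := by
  unfold seqB
  refine Partrec.nat_rec (f := fun z : ℕ × ℕ => z.2) (g := fun _ => Part.some [])
    (h := fun z (p : ℕ × List Datum) => (stepB z.1 p.1 p.2).map fun b => p.2 ++ [(p.1, b)])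
    Computable.snd (Computable.const []) ?_
  refine Partrec.map (f := fun w : (ℕ × ℕ) × (ℕ × List Datum) => stepB w.1.1 w.2.1 w.2.2) ?_ ?_
  · exact stepB_partrec.comp
      (g := fun w : (ℕ × ℕ) × (ℕ × List Datum) => ((w.1.1, w.2.1), w.2.2)) (Computable.pair (Computable.pair
      (Computable.fst.comp Computable.fst) (Computable.fst.comp Computable.snd))
      (Computable.snd.comp Computable.snd))
  · exact Computable.list_append.comp
      (Computable.snd.comp (Computable.snd.comp Computable.fst))
      (Computable.list_cons.comp
        (Computable.pair (Computable.fst.comp (Computable.snd.comp Computable.fst))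
          Computable.snd)
        (Computable.const []))

attribute [irreducible] seqB

theorem memB_partrec : Partrec fun z : ℕ × ℕ => memB z.1 z.2 := by
  unfold memB
  exact seqB_partrec.bind stepB_partrec

attribute [irreducible] memB

/-- The uniform family of hypotheses: `F ⟨⟨e,k⟩,m⟩` is defined iff `k = m + 1` or
`m` is in the diagonal language of `e`. -/
def famF : ℕ →. ℕ := fun z =>
  cond (decide (z.unpair.1.unpair.2 = z.unpair.2 + 1)) (Part.some 0)
    ((memB z.unpair.1.unpair.1 z.unpair.2).bind fun b => cond b (Part.some 0) Part.none)

theorem famF_partrec : Partrec famF := by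
  have h1 : Primrec fun z : ℕ => z.unpair.1 := Primrec.fst.comp Primrec.unpair
  have h2 : Primrec fun z : ℕ => z.unpair.2 := Primrec.snd.comp Primrec.unpair
  unfold famF
  refine Partrec.cond ?_ (Computable.const 0) ?_
  · have : PrimrecPred fun z : ℕ => z.unpair.1.unpair.2 = z.unpair.2 + 1 :=
      PrimrecRel.comp Primrec.eq (h2.comp h1) (Primrec.succ.comp h2)
    exact this.decide.to_comp
  · refine Partrec.bind (memB_partrec.comp (g := fun z : ℕ => (z.unpair.1.unpair.1, z.unpair.2)) (Computable.pair (h1.comp h1).to_comp h2.to_comp)) ?_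
    exact Partrec.cond Computable.snd (Computable.const 0) Partrec.none

theorem exists_hyp : ∃ P : ℕ → ℕ → ℕ, Computable₂ P ∧
    ∀ e k, W (P e k) = {m | (famF (Nat.pair (Nat.pair e k) m)).Dom} := by
  obtain ⟨c, hc⟩ := Nat.Partrec.Code.exists_code.1 (Partrec.nat_iff.1 famF_partrec)
  refine ⟨fun e k => Encodable.encode (Nat.Partrec.Code.curry c (Nat.pair e k)), ?_, ?_⟩
  · exact Computable.encode.comp
      ((Nat.Partrec.Code.primrec₂_curry.to_comp).comp (Computable.const c)
        (Primrec₂.natPair.to_comp))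
  · intro e k
    ext m
    simp only [W, Denumerable.ofNat_encode, Nat.Partrec.Code.eval_curry, hc]

theorem exists_empty : ∃ o : ℕ, W o = ∅ := by
  obtain ⟨c, hc⟩ := Nat.Partrec.Code.exists_code.1 (Partrec.nat_iff.1 (Partrec.none (α := ℕ) (σ := ℕ)))
  refine ⟨Encodable.encode c, ?_⟩
  ext m
  simp [W, Denumerable.ofNat_encode, hc]

/-- The update function of the partial learner. -/
def hStep (P : ℕ → ℕ → ℕ) (o : ℕ) : ℕ × Datum →. ℕ := fun w =>
  cond w.2.2
    ((memB w.2.1.unpair.1 w.2.1).map fun v =>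
      cond v (cond (decide (w.1 = o)) (P w.2.1.unpair.1 0) w.1) (P w.2.1.unpair.1 (w.2.1 + 1)))
    (Part.some w.1)

theorem hStep_partrec {P : ℕ → ℕ → ℕ} (hP : Computable₂ P) (o : ℕ) : Partrec (hStep P o) := by
  unfold hStep
  have he : Computable fun w : ℕ × Datum => w.2.1.unpair.1 :=
    Computable.fst.comp (Computable.unpair.comp (Computable.fst.comp Computable.snd))
  have hm : Computable fun w : ℕ × Datum => w.2.1 := Computable.fst.comp Computable.snd
  refine Partrec.cond (Computable.snd.comp Computable.snd) ?_ Computable.fst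
  refine Partrec.map (memB_partrec.comp (g := fun w : ℕ × Datum => (w.2.1.unpair.1, w.2.1)) (he.pair hm)) ?_
  refine Computable.cond Computable.snd (Computable.cond ?_ ?_ ?_) ?_
  · have : PrimrecPred fun z : (ℕ × Datum) × Bool => z.1.1 = o :=
      PrimrecRel.comp Primrec.eq (Primrec.fst.comp Primrec.fst) (Primrec.const o)
    exact this.decide.to_comp
  · exact hP.comp (he.comp Computable.fst) (Computable.const 0)
  · exact Computable.fst.comp Computable.fst
  · exact hP.comp (he.comp Computable.fst) (Computable.succ.comp (hm.comp Computable.fst))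

/-- Iterating a partial update function along a list. -/
def iterL (h : ℕ × Datum →. ℕ) (o : ℕ) : List Datum →. ℕ := fun σ =>
  Nat.rec (Part.some o) (fun i IH => IH.bind fun s => h (s, σ.getD i (0, false))) σ.length

theorem iterL_partrec {h : ℕ × Datum →. ℕ} (hh : Partrec h) (o : ℕ) : Partrec (iterL h o) := by
  unfold iterL
  refine Partrec.nat_rec (f := fun σ : List Datum => σ.length) (g := fun _ => Part.some o)
    (h := fun σ (p : ℕ × ℕ) => h (p.2, σ.getD p.1 (0, false)))
    Computable.list_length (Computable.const o) ?_
  refine hh.comp (Computable.pair (Computable.snd.comp Computable.snd) ?_)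
  exact (Primrec.list_getD (0, false)).to_comp.comp Computable.fst
    (Computable.fst.comp Computable.snd)

theorem iterL_append (h : ℕ × Datum →. ℕ) (o : ℕ) (σ : List Datum) (x : Datum) :
    iterL h o (σ ++ [x]) = (iterL h o σ).bind fun e => h (e, x) := by
  have key : ∀ n, n ≤ σ.length →
      (Nat.rec (Part.some o) (fun i IH => IH.bind fun s => h (s, (σ ++ [x]).getD i (0, false))) n
        : Part ℕ) =
      Nat.rec (Part.some o) (fun i IH => IH.bind fun s => h (s, σ.getD i (0, false))) n := by
    intro n
    induction n with
    | zero => intro _; rfl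
    | succ n ih =>
      intro hn
      have : (σ ++ [x]).getD n (0, false) = σ.getD n (0, false) :=
        List.getD_append _ _ _ _ hn
      simp only [ih (by omega), this]
  have hl : (σ ++ [x]).length = σ.length + 1 := by simp
  have hx : (σ ++ [x]).getD σ.length (0, false) = x := by simp
  unfold iterL
  rw [hl]
  simp only [key _ le_rfl, hx]

/-- The class of languages. -/
def diagClass : Set (Set ℕ) :=
  {L | ∃ e, ∃ B : ℕ → Bool, (∀ m, memB e m = Part.some (B m)) ∧
    (∀ m, B m = true → m.unpair.1 = e) ∧
    (L = {m | B m = true} ∨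
      ∃ n, n.unpair.1 = e ∧ B n = false ∧ L = insert n {m | B m = true})}

theorem diag_learnable : ItInfEx diagClass := by
  obtain ⟨P, hP, hW⟩ := exists_hyp
  obtain ⟨o, ho⟩ := exists_empty
  refine ⟨iterL (hStep P o) o, iterL_partrec (hStep_partrec hP o) o,
    ⟨hStep P o, hStep_partrec hP o, iterL_append _ _⟩, ?_⟩
  rintro L ⟨e, B, hB, hBe, hL⟩ I ⟨hI, hs⟩
  have hWm : ∀ k m, m ∈ W (P e k) ↔ (k = m + 1 ∨ B m = true) := by
    intro k m
    rw [hW]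
    by_cases hk : k = m + 1
    · simp [famF, hk]
    · cases hb : B m <;> simp [famF, hk, hB, hb]
  have hstep : ∀ s, ∀ t, iterL (hStep P o) o (seg I t) = Part.some s →
      iterL (hStep P o) o (seg I (t + 1)) = hStep P o (s, I t) := by
    intro s t h
    rw [seg_succ, iterL_append, h, Part.bind_some]
  have hneg : ∀ s t, (I t).2 = false → hStep P o (s, I t) = Part.some s := by
    intro s t h; simp [hStep, h]
  have hposB : ∀ s t, (I t).2 = true → B (I t).1 = true →
      hStep P o (s, I t) = Part.some (if s = o then P e 0 else s) := by
    intro s t h hb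
    have := hBe _ hb
    by_cases hso : s = o <;> simp [hStep, h, this, hB, hb, hso]
  have hposN : ∀ s t, (I t).2 = true → B (I t).1 = false → (I t).1.unpair.1 = e →
      hStep P o (s, I t) = Part.some (P e ((I t).1 + 1)) := by
    intro s t h hb this
    simp [hStep, h, this, hB, hb]
  have h0 : iterL (hStep P o) o (seg I 0) = Part.some o := rfl
  rcases hL with hL | ⟨n, hn, hnB, hL⟩
  · -- `L` is the diagonal language itself
    have inB : ∀ t, (I t).2 = true → B (I t).1 = true := by
      intro t ht
      have := (hI t).1 ht
      rw [hL] at this; exact this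
    by_cases hex : ∃ t, (I t).2 = true
    · obtain ⟨t1, ht1⟩ := hex
      have inv : ∀ t, iterL (hStep P o) o (seg I t) = Part.some o ∨
          iterL (hStep P o) o (seg I t) = Part.some (P e 0) := by
        intro t
        induction t with
        | zero => exact Or.inl h0
        | succ t ih =>
          cases hb : (I t).2 with
          | false =>
            rcases ih with ih | ih
            · left; rw [hstep _ _ ih, hneg _ _ hb]
            · right; rw [hstep _ _ ih, hneg _ _ hb]
          | true =>
            right
            rcases ih with ih | ih
            · rw [hstep _ _ ih, hposB _ _ hb (inB _ hb)]; simp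
            · rw [hstep _ _ ih, hposB _ _ hb (inB _ hb)]; simp
      refine ⟨t1 + 1, P e 0, ?_, ?_⟩
      · ext m; rw [hWm, hL]; simp
      · intro t ht
        induction t, ht using Nat.le_induction with
        | base =>
          rcases inv t1 with ih | ih
          · rw [hstep _ _ ih, hposB _ _ ht1 (inB _ ht1)]; simp
          · rw [hstep _ _ ih, hposB _ _ ht1 (inB _ ht1)]; simp
        | succ t _ ih =>
          cases hb : (I t).2 with
          | false => rw [hstep _ _ ih, hneg _ _ hb]
          | true => rw [hstep _ _ ih, hposB _ _ hb (inB _ hb)]; simp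
    · refine ⟨0, o, ?_, ?_⟩
      · rw [ho]
        symm
        rw [Set.eq_empty_iff_forall_notMem]
        intro m hm
        obtain ⟨t, ht⟩ := hs m
        exact hex ⟨t, (hI t).2 (by simp only at ht; rw [ht]; exact hm)⟩
      · intro t _
        induction t with
        | zero => exact h0
        | succ t ih =>
          rw [hstep _ _ (ih (by omega)), hneg]
          cases hb : (I t).2 with
          | false => rfl
          | true => exact absurd ⟨t, hb⟩ hex
  · -- `L` has one additional element `n`
    have hWn : W (P e (n + 1)) = L := by
      ext m; rw [hWm, hL, Set.mem_insert_iff]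
      exact or_congr ⟨fun h => by omega, fun h => by omega⟩ Iff.rfl
    have hne : P e (n + 1) ≠ o := by
      intro h
      have : n ∈ W (P e (n + 1)) := (hWm _ _).2 (Or.inl rfl)
      rw [h, ho] at this
      exact this
    have inL : ∀ t, (I t).2 = true → (I t).1 = n ∨ B (I t).1 = true := by
      intro t ht
      have := (hI t).1 ht
      rw [hL] at this; exact this
    obtain ⟨t1, ht1⟩ := hs n
    simp only at ht1
    have ht1b : (I t1).2 = true := (hI t1).2 (by rw [ht1, hL]; simp)
    have def_all : ∀ t, ∃ s, iterL (hStep P o) o (seg I t) = Part.some s := by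
      intro t
      induction t with
      | zero => exact ⟨_, h0⟩
      | succ t ih =>
        obtain ⟨s, ih⟩ := ih
        cases hb : (I t).2 with
        | false => exact ⟨_, by rw [hstep _ _ ih, hneg _ _ hb]⟩
        | true =>
          rcases inL _ hb with h | h
          · exact ⟨_, by rw [hstep _ _ ih, hposN _ _ hb (by rw [h, hnB]) (by rw [h, hn])]⟩
          · exact ⟨_, by rw [hstep _ _ ih, hposB _ _ hb h]⟩
    refine ⟨t1 + 1, P e (n + 1), hWn, ?_⟩
    intro t ht
    induction t, ht using Nat.le_induction with
    | base =>
      obtain ⟨s, ih⟩ := def_all t1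
      rw [hstep _ _ ih, hposN _ _ ht1b (by rw [ht1, hnB]) (by rw [ht1, hn]), ht1]
    | succ t _ ih =>
      cases hb : (I t).2 with
      | false => rw [hstep _ _ ih, hneg _ _ hb]
      | true =>
        rcases inL _ hb with h | h
        · rw [hstep _ _ ih, hposN _ _ hb (by rw [h, hnB]) (by rw [h, hn]), h]
        · rw [hstep _ _ ih, hposB _ _ hb h, if_neg hne]

theorem consistent_seg (b : ℕ → Bool) (t : ℕ) :
    ConsistentSeq (seg (fun k => (k, b k)) t) := by
  intro x c c' h h'
  simp only [seg, List.mem_map, Prod.mk.injEq] at h h'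
  obtain ⟨k, _, rfl, rfl⟩ := h
  obtain ⟨k', _, rfl, rfl⟩ := h'
  rfl

theorem diag_not_total : ¬ ∃ M : List Datum →. ℕ, Partrec M ∧ Iterative M ∧
    (∀ σ : List Datum, ConsistentSeq σ → (M σ).Dom) ∧ ∀ L ∈ diagClass, ExLearns M L := by
  rintro ⟨M, hM, ⟨h, _, hit⟩, htot, hlearn⟩
  obtain ⟨c, hc⟩ := Nat.Partrec.Code.exists_code.1 hM
  have hcM : ∀ σ : List Datum, Nat.Partrec.Code.eval c (Encodable.encode σ) = M σ := by
    intro σ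
    rw [hc]
    simp [Part.map_id']
  set e := Encodable.encode c with he
  have hdec : Denumerable.ofNat Nat.Partrec.Code e = c := by simp [he]
  -- one step of the construction
  have hex : ∀ m (b : ℕ → Bool), ∃ r, stepB e m (seg (fun k => (k, b k)) m) = Part.some r := by
    intro m b
    have d1 : (M (seg (fun k => (k, b k)) m)).Dom := htot _ (consistent_seg b m)
    have d2 : (M (seg (fun k => (k, b k)) m ++ [(m, true)])).Dom := by
      have := htot _ (consistent_seg (Function.update b m true) (m + 1))
      rw [seg_succ] at this
      have e1 : seg (fun k => (k, Function.update b m true k)) m = seg (fun k => (k, b k)) m := by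
        refine List.map_congr_left fun k hk => ?_
        have : k ≠ m := (List.mem_range.1 hk).ne
        simp [this]
      rw [e1] at this
      simpa using this
    obtain ⟨u, hu⟩ := Part.dom_iff_mem.1 d1
    obtain ⟨v, hv⟩ := Part.dom_iff_mem.1 d2
    refine ⟨(decide (m.unpair.1 = e) && !decide (v = u)), ?_⟩
    · simp [stepB, hdec, hcM, Part.eq_some_iff.2 hu, Part.eq_some_iff.2 hv]
  have hseq : ∀ m, ∃ b : ℕ → Bool, seqB e m = Part.some (seg (fun k => (k, b k)) m) := by
    intro m
    induction m with
    | zero => exact ⟨fun _ => false, seqB_zero e⟩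
    | succ m ih =>
      obtain ⟨b, hb⟩ := ih
      obtain ⟨r, hr⟩ := hex m b
      refine ⟨Function.update b m r, ?_⟩
      have e1 : seg (fun k => (k, Function.update b m r k)) m = seg (fun k => (k, b k)) m := by
        refine List.map_congr_left fun k hk => ?_
        have : k ≠ m := (List.mem_range.1 hk).ne
        simp [this]
      rw [seqB_succ, hb, Part.bind_some, hr, Part.map_some, seg_succ, e1]
      simp
  have hmem : ∀ m, ∃ r, memB e m = Part.some r := by
    intro m
    obtain ⟨b, hb⟩ := hseq m
    obtain ⟨r, hr⟩ := hex m b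
    exact ⟨r, by rw [memB, hb, Part.bind_some, hr]⟩
  choose B hB using hmem
  have hseqB : ∀ m, seqB e m = Part.some (seg (fun k => (k, B k)) m) := by
    intro m
    induction m with
    | zero => exact seqB_zero e
    | succ m ih =>
      have := hB m
      rw [memB, ih, Part.bind_some] at this
      rw [seqB_succ, ih, Part.bind_some, this, Part.map_some, seg_succ]
  have hstep : ∀ m, stepB e m (seg (fun k => (k, B k)) m) = Part.some (B m) := by
    intro m
    have := hB m
    rwa [memB, hseqB, Part.bind_some] at this
  set I : ℕ → Datum := fun k => (k, B k) with hIdef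
  have hval : ∀ m, ∃ u v, M (seg I m) = Part.some u ∧ M (seg I m ++ [(m, true)]) = Part.some v ∧
      B m = (decide (m.unpair.1 = e) && !decide (v = u)) := by
    intro m
    have h1 := hstep m
    rw [Part.eq_some_iff] at h1
    simp only [stepB, hdec, hcM, Part.mem_bind_iff, Part.mem_map_iff] at h1
    obtain ⟨v, hv, u, hu, h2⟩ := h1
    exact ⟨u, v, Part.eq_some_iff.2 hu, Part.eq_some_iff.2 hv, h2.symm⟩
  have hBe : ∀ m, B m = true → m.unpair.1 = e := by
    intro m hm
    obtain ⟨u, v, _, _, h3⟩ := hval m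
    rw [hm] at h3
    simp at h3
    exact h3.1
  have hI : IsInformant {m | B m = true} I := ⟨fun t => Iff.rfl, fun m => ⟨m, rfl⟩⟩
  obtain ⟨t₀, a, hWa, hconv⟩ := hlearn _ ⟨e, B, hB, hBe, Or.inl rfl⟩ I hI
  set n := Nat.pair e t₀ with hn
  have hnt : t₀ ≤ n := Nat.right_le_pair _ _
  have hne : n.unpair.1 = e := by simp [hn]
  have hkey : B n = false ∧ M (seg I n ++ [(n, true)]) = Part.some a := by
    obtain ⟨u, v, h1, h2, h3⟩ := hval n
    have hu : u = a := by
      have := hconv n hnt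
      rw [h1] at this
      exact Part.some_inj.1 this
    have hvu : v = u := by
      by_contra hvu
      have hBn : B n = true := by simp [h3, hne, hvu]
      have h4 := hconv (n + 1) (by omega)
      rw [seg_succ] at h4
      have : I n = (n, true) := by simp [hIdef, hBn]
      rw [this, h2] at h4
      exact hvu ((Part.some_inj.1 h4).trans hu.symm)
    refine ⟨by simp [h3, hvu], by rw [h2, hvu, hu]⟩
  obtain ⟨hBn, hMn⟩ := hkey
  set J : ℕ → Datum := fun k => (k, Function.update B n true k) with hJdef
  have hJ : IsInformant (insert n {m | B m = true}) J := by
    refine ⟨fun t => ?_, fun m => ⟨m, rfl⟩⟩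
    by_cases ht : t = n
    · simp [hJdef, ht]
    · simp [hJdef, ht]
  obtain ⟨t₁, a', hWa', hconv'⟩ := hlearn _
    ⟨e, B, hB, hBe, Or.inr ⟨n, hne, hBn, rfl⟩⟩ J hJ
  have hsame : ∀ t, n + 1 ≤ t → M (seg J t) = Part.some a := by
    intro t ht
    induction t, ht using Nat.le_induction with
    | base =>
      have e1 : seg J n = seg I n := by
        refine List.map_congr_left fun k hk => ?_
        have : k ≠ n := (List.mem_range.1 hk).ne
        simp [hJdef, hIdef, this]
      have e2 : J n = (n, true) := by simp [hJdef]
      rw [seg_succ, e1, e2, hMn]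
    | succ t ht ih =>
      have e2 : J t = I t := by
        have : t ≠ n := by omega
        simp [hJdef, hIdef, this]
      have h1 := hconv (t + 1) (by omega)
      rw [seg_succ, hit, hconv t (by omega)] at h1
      rw [seg_succ, hit, ih, e2, h1]
  have haa : a = a' := by
    have h1 := hsame (max t₁ (n + 1)) (le_max_right _ _)
    rw [hconv' _ (le_max_left _ _)] at h1
    exact (Part.some_inj.1 h1).symm
  have hmem : n ∈ W a' := by rw [hWa']; exact Set.mem_insert _ _
  rw [← haa, hWa] at hmem
  have : B n = true := hmem
  rw [hBn] at this
  exact Bool.false_ne_true this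

/-- Totality restricts iterative learning from informant: some class is Ex-learnable from
informant by an iterative (partial computable) learner, but by no iterative learner that is
defined on every finite (consistently labeled) informant sequence. -/
theorem totality_restricts_itInfEx :
    ∃ 𝓛 : Set (Set ℕ), ItInfEx 𝓛 ∧
      ¬ ∃ M : List Datum →. ℕ, Partrec M ∧ Iterative M ∧
          (∀ σ : List Datum, ConsistentSeq σ → (M σ).Dom) ∧
          ∀ L ∈ 𝓛, ExLearns M L := by
  exact ⟨diagClass, diag_learnable, diag_not_total⟩
end

section
/- For every iterative learner M from informant there exists a canny iterative learner N from informant such that every language Ex-learned from informant by M is Ex-learned from informant by N, i.e. InfEx(M) ⊆ InfEx(N). -/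
/-- A learner is canny: (the value, when defined, is a hypothesis in ℕ, which is
enforced by the type, and) no single datum not occurring in `σ` causes a mind change twice. -/
def Canny (M : List Datum →. ℕ) : Prop :=
  ∀ (σ : List Datum) (x : ℕ) (b : Bool), x ∉ σ.map Prod.fst →
    ∀ e e', M σ = Part.some e → M (σ ++ [(x, b)]) = Part.some e' → e ≠ e' →
      ∀ τ : List Datum, (σ ++ [(x, b)]) <+: τ → M (τ ++ [(x, b)]) = M τ


namespace CannyProof

open Nat.Partrec (Code)

/-- Internal state: current hypothesis of `M` and the data that caused a mind change. -/
abbrev State := ℕ × List Datum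

/-- Injective padding of a hypothesis by a list of data. -/
def pad (s : State) : ℕ :=
  Encodable.encode
    (Code.curry (Code.comp (Denumerable.ofNat Code s.1) Code.right) (Encodable.encode s.2))

theorem W_pad (s : State) : W (pad s) = W s.1 := by
  ext n
  have : (Part.some n >>= (Denumerable.ofNat Code s.1).eval) =
      (Denumerable.ofNat Code s.1).eval n := Part.bind_some _ _
  simp [W, pad, Code.eval_curry, Code.eval, this]

theorem pad_inj : Function.Injective pad := by
  rintro ⟨e, S⟩ ⟨e', S'⟩ h
  have h1 := Encodable.encode_injective h
  obtain ⟨h2, h3⟩ := Code.curry_inj h1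
  have h3 := Encodable.encode_injective h3
  injection h2 with h4
  have h5 := congrArg (Encodable.encode (α := Code)) h4
  simp at h5 h3
  simp [h5, h3]

theorem pad_computable : Computable pad := by
  unfold pad
  exact (Primrec.encode.comp (Code.primrec₂_curry.comp
    (Code.primrec₂_comp.comp ((Primrec.ofNat Code).comp Primrec.fst) (Primrec.const _))
    (Primrec.encode.comp Primrec.snd))).to_comp

/-- Decoding by unbounded search. -/
def dec (p : ℕ) : Part State :=
  Nat.rfindOpt (fun n => (Encodable.decode (α := State) n).bind
    fun s => bif decide (pad s = p) then some s else none)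

theorem dec_pad (s : State) : dec (pad s) = Part.some s := by
  have hdom : (dec (pad s)).Dom := by
    unfold dec
    rw [Nat.rfindOpt_dom]
    exact ⟨Encodable.encode s, s, by simp⟩
  obtain ⟨r, h⟩ := Part.dom_iff_mem.1 hdom
  have h2 := h
  unfold dec at h2
  obtain ⟨n, hn⟩ := Nat.rfindOpt_spec h2
  rw [Option.mem_def, Option.bind_eq_some_iff] at hn
  obtain ⟨s', _, h3⟩ := hn
  by_cases h4 : pad s' = pad s
  · simp [h4] at h3
    rw [← h3, pad_inj h4] at h
    exact Part.eq_some_iff.2 h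
  · simp [h4] at h3

theorem dec_partrec : Partrec dec := by
  unfold dec
  apply Partrec.rfindOpt
  refine Computable.option_bind (Computable.decode.comp Computable.snd) ?_
  refine Computable.cond ?_ (Computable.option_some.comp Computable.snd) (Computable.const _)
  exact (Primrec.eq (α := ℕ)).decide.to_comp.comp (pad_computable.comp Computable.snd)
    (Computable.fst.comp Computable.fst)

/-- Index of a datum in a list. -/
def idx (x : Datum) (l : List Datum) : ℕ := @List.idxOf Datum instBEqOfDecidableEq x l

theorem idx_lt {x : Datum} {l : List Datum} : idx x l < l.length ↔ x ∈ l := by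
  unfold idx
  exact @List.idxOf_lt_length_iff Datum instBEqOfDecidableEq _ _ _

theorem idx_primrec : Primrec₂ idx := Primrec.list_idxOf

/-- One step on states. -/
def K (h : ℕ × Datum →. ℕ) (q : State × Datum) : Part State :=
  bif decide (idx q.2 q.1.2 < q.1.2.length) then Part.some q.1 else
    (h (q.1.1, q.2)).map fun e' => bif decide (e' = q.1.1) then q.1 else (e', q.2 :: q.1.2)

theorem K_mem {h s x} (hx : x ∈ s.2) : K h (s, x) = Part.some s := by
  have := idx_lt.2 hx
  simp [K, this]

theorem K_not_mem {h s x} (hx : x ∉ s.2) : K h (s, x) =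
    (h (s.1, x)).map fun e' => if e' = s.1 then s else (e', x :: s.2) := by
  have : ¬ idx x s.2 < s.2.length := fun H => hx (idx_lt.1 H)
  simp only [K, this, decide_false, cond_false, Bool.cond_decide]

theorem K_partrec {h} (hh : Partrec h) : Partrec (K h) := by
  unfold K
  refine Partrec.cond ?_ Computable.fst ?_
  · exact (Primrec.nat_lt.decide.comp
      (idx_primrec.comp Primrec.snd (Primrec.snd.comp Primrec.fst))
      (Primrec.list_length.comp (Primrec.snd.comp Primrec.fst))).to_comp
  · refine Partrec.map (hh.comp ((Computable.fst.comp Computable.fst).pair Computable.snd)) ?_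
    refine Computable.cond ?_ (Computable.fst.comp Computable.fst) ?_
    · exact (Primrec.eq (α := ℕ)).decide.to_comp.comp Computable.snd
        (Computable.fst.comp (Computable.fst.comp Computable.fst))
    · exact Computable.snd.pair (Computable.list_cons.comp (Computable.snd.comp Computable.fst)
        (Computable.snd.comp (Computable.fst.comp Computable.fst)))

/-- State after reading `σ`. -/
def T (a : Part ℕ) (h : ℕ × Datum →. ℕ) (σ : List Datum) : Part State :=
  σ.foldl (fun P x => P.bind fun s => K h (s, x)) (a.map fun e => (e, []))

theorem T_snoc (a h σ x) : T a h (σ ++ [x]) = (T a h σ).bind fun s => K h (s, x) := by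
  simp [T]

theorem T_partrec (a : Part ℕ) {h} (hh : Partrec h) : Partrec (T a h) := by
  have ha : Partrec (fun _ : List Datum => a.map fun e => ((e, []) : State)) := by
    by_cases hd : a.Dom
    · have : a = Part.some (a.get hd) := Part.eq_some_iff.2 (Part.get_mem hd)
      rw [this]
      simp only [Part.map_some]
      exact (Computable.const _)
    · rw [Part.eq_none_iff'.2 hd]
      simpa using Partrec.none
  have key : Partrec (fun σ : List Datum => (Nat.rec (a.map fun e => ((e, []) : State))
      (fun y IH => IH.bind fun s => K h (s, (σ[y]?).getD default)) σ.length : Part State)) := by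
    refine Partrec.nat_rec (Computable.list_length) ha
      (h := fun (σ : List Datum) (q : ℕ × State) => K h (q.2, (σ[q.1]?).getD default)) ?_
    refine (K_partrec hh).comp ((Computable.snd.comp Computable.snd).pair ?_)
    exact Computable.option_getD (Computable.list_getElem?.comp Computable.fst
      (Computable.fst.comp Computable.snd)) (Computable.const _)
  refine key.of_eq fun σ => ?_
  have : ∀ n ≤ σ.length, (Nat.rec (a.map fun e => ((e, []) : State))
      (fun y IH => IH.bind fun s => K h (s, (σ[y]?).getD default)) n : Part State)
      = T a h (σ.take n) := by
    intro n
    induction n with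
    | zero => intro _; simp [T]
    | succ n ih =>
      intro hn
      have hn' : n < σ.length := hn
      rw [List.take_succ_eq_append_getElem hn', T_snoc, ← ih hn'.le]
      simp [List.getElem?_eq_getElem hn']
  simpa using this σ.length le_rfl

/-- A datum in the memory stays there. -/
theorem mem_persist {a h σ y} (ρ : List Datum) (H : ∀ s ∈ T a h σ, y ∈ s.2) :
    ∀ s ∈ T a h (σ ++ ρ), y ∈ s.2 := by
  induction ρ using List.reverseRecOn with
  | nil => simpa using H
  | append_singleton ρ x ih =>
    intro s hs
    rw [← List.append_assoc, T_snoc, Part.mem_bind_iff] at hs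
    obtain ⟨s', hs', hK⟩ := hs
    have hy := ih s' hs'
    by_cases hx : x ∈ s'.2
    · rw [K_mem hx, Part.mem_some_iff] at hK
      rwa [hK]
    · rw [K_not_mem hx, Part.mem_map_iff] at hK
      obtain ⟨e', _, rfl⟩ := hK
      split_ifs
      · exact hy
      · exact List.mem_cons_of_mem _ hy

theorem seg_succ (I : ℕ → Datum) (t : ℕ) : seg I (t + 1) = seg I t ++ [I t] := by
  simp [seg, List.range_succ]

open Classical in
/-- The subsequence of the informant fed to `M`. -/
noncomputable def fed (a : Part ℕ) (h : ℕ × Datum →. ℕ) (I : ℕ → Datum) : ℕ → List Datum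
  | 0 => []
  | t + 1 => if ∃ s ∈ T a h (seg I t), I t ∈ s.2 then fed a h I t else fed a h I t ++ [I t]

section
variable {M : List Datum →. ℕ} {h : ℕ × Datum →. ℕ}

theorem fed_prefix (a : Part ℕ) (I : ℕ → Datum) {t t' : ℕ} (ht : t ≤ t') :
    fed a h I t <+: fed a h I t' := by
  induction t', ht using Nat.le_induction with
  | base => exact List.prefix_rfl
  | succ n _ ih =>
    refine ih.trans ?_
    rw [fed]
    split_ifs
    · exact List.prefix_rfl
    · exact List.prefix_append _ _

theorem fed_inv (hit : ∀ σ x, M (σ ++ [x]) = (M σ).bind (fun e => h (e, x))) (I : ℕ → Datum)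
    (t : ℕ) : (T (M []) h (seg I t)).map Prod.fst = M (fed (M []) h I t) ∧
      (∀ s ∈ T (M []) h (seg I t), ∀ y ∈ s.2, y ∈ fed (M []) h I t) := by
  induction t with
  | zero =>
    constructor
    · simp [T, seg, fed, Part.map_map, Function.comp_def, Part.map_id']
    · intro s hs y hy
      simp only [T, seg, List.range_zero, List.map_nil, List.foldl_nil, Part.mem_map_iff] at hs
      obtain ⟨e, _, rfl⟩ := hs
      simp at hy
  | succ t ih =>
    obtain ⟨ih1, ih2⟩ := ih
    rw [seg_succ, T_snoc, fed]
    rcases Part.eq_none_or_eq_some (T (M []) h (seg I t)) with hT | ⟨s, hT⟩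
    · rw [hT] at ih1 ih2 ⊢
      simp only [Part.map_none] at ih1
      simp [hit, ← ih1]
    · rw [hT] at ih1 ih2 ⊢
      simp only [Part.map_some] at ih1
      by_cases hx : I t ∈ s.2
      · simp only [Part.bind_some, K_mem hx, Part.mem_some_iff, exists_eq_left, hx, if_true,
          Part.map_some]
        exact ⟨ih1, by simpa using ih2⟩
      · simp only [Part.bind_some, K_not_mem hx, Part.mem_some_iff, exists_eq_left, hx, if_false,
          hit, ← ih1, Part.map_map]
        constructor
        · conv_rhs => rw [← Part.map_id' (f := id) (fun _ => rfl) (h (s.1, I t))]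
          congr 1
          funext e'
          simp only [Function.comp]
          split_ifs with h1
          · exact h1.symm
          · rfl
        · intro s' hs' y hy
          rw [Part.mem_map_iff] at hs'
          obtain ⟨e', _, rfl⟩ := hs'
          have h2 := ih2 s (Part.mem_some s)
          split_ifs at hy
          · exact List.mem_append_left _ (h2 y hy)
          · rcases List.mem_cons.1 hy with rfl | hy
            · simp
            · exact List.mem_append_left _ (h2 y hy)

theorem fed_mem (hit : ∀ σ x, M (σ ++ [x]) = (M σ).bind (fun e => h (e, x))) (I : ℕ → Datum)
    (t : ℕ) : I t ∈ fed (M []) h I (t + 1) := by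
  rw [fed]
  split_ifs with H
  · obtain ⟨s, hs, hx⟩ := H
    exact (fed_inv hit I t).2 s hs _ hx
  · simp

theorem fed_sub (a : Part ℕ) (I : ℕ → Datum) (t : ℕ) : ∀ y ∈ fed a h I t, ∃ u, I u = y := by
  induction t with
  | zero => simp [fed]
  | succ t ih =>
    intro y hy
    rw [fed] at hy
    split_ifs at hy
    · exact ih y hy
    · rcases List.mem_append.1 hy with hy | hy
      · exact ih y hy
      · exact ⟨t, (List.mem_singleton.1 hy).symm⟩

theorem fed_unbounded (hit : ∀ σ x, M (σ ++ [x]) = (M σ).bind (fun e => h (e, x)))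
    {L : Set ℕ} {I : ℕ → Datum} (hI : IsInformant L I) (n : ℕ) :
    ∃ t, n < (fed (M []) h I t).length := by
  choose g hg using hI.2
  obtain ⟨t, ht⟩ : ∃ t, ∀ x ∈ Finset.range (n + 1), g x < t :=
    ⟨(Finset.range (n + 1)).sup g + 1, fun x hx => Nat.lt_succ_of_le (Finset.le_sup hx)⟩
  refine ⟨t, ?_⟩
  have hsub : Finset.range (n + 1) ⊆ ((fed (M []) h I t).map Prod.fst).toFinset := by
    intro x hx
    rw [List.mem_toFinset, List.mem_map]
    exact ⟨I (g x), (fed_prefix (M []) I (ht x hx)).subset (fed_mem hit I (g x)), hg x⟩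
  have h1 := Finset.card_le_card hsub
  have h2 := List.toFinset_card_le ((fed (M []) h I t).map Prod.fst)
  simp at h1 h2
  omega

theorem learns (hit : ∀ σ x, M (σ ++ [x]) = (M σ).bind (fun e => h (e, x)))
    {L : Set ℕ} (hL : ExLearns M L) {I : ℕ → Datum} (hI : IsInformant L I) :
    ExLearnsFrom (fun σ => (T (M []) h σ).map pad) L I := by
  choose g hg using fed_unbounded hit hI
  let J : ℕ → Datum := fun n => (fed (M []) h I (g n))[n]'(hg n)
  have hJ : ∀ t n (hn : n < (fed (M []) h I t).length), (fed (M []) h I t)[n] = J n := by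
    intro t n hn
    rcases le_total t (g n) with H | H
    · exact (fed_prefix (M []) I H).getElem hn
    · exact ((fed_prefix (M []) I H).getElem (hg n)).symm
  have hseg : ∀ t, fed (M []) h I t = seg J (fed (M []) h I t).length := by
    intro t
    apply List.ext_getElem
    · simp [seg]
    · intro n h1 h2
      simp [seg, hJ t n h1]
  have hJI : IsInformant L J := by
    constructor
    · intro n
      obtain ⟨u, hu⟩ := fed_sub (M []) I (g n) (J n) (List.getElem_mem (hg n))
      rw [← hu]
      exact hI.1 u
    · intro x
      obtain ⟨u, hu⟩ := hI.2 x
      obtain ⟨n, hn, hn'⟩ := List.getElem_of_mem (fed_mem hit I u)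
      refine ⟨n, ?_⟩
      rw [hJ] at hn'
      simpa [hn'] using hu
  obtain ⟨n₀, e, hWe, hconv⟩ := hL J hJI
  have hM : ∀ t, g n₀ ≤ t → M (fed (M []) h I t) = Part.some e := by
    intro t ht
    rw [hseg t]
    exact hconv _ ((hg n₀).le.trans (fed_prefix (M []) I ht).length_le)
  have hT : ∀ t, g n₀ ≤ t → ∃ s ∈ T (M []) h (seg I t), s.1 = e := by
    intro t ht
    have := (fed_inv hit I t).1
    rw [hM t ht] at this
    have h1 : e ∈ Part.map Prod.fst (T (M []) h (seg I t)) := by rw [this]; exact Part.mem_some e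
    rwa [Part.mem_map_iff] at h1
  obtain ⟨s, hs, hse⟩ := hT _ le_rfl
  have hconst : ∀ t, g n₀ ≤ t → T (M []) h (seg I t) = Part.some s := by
    intro t ht
    induction t, ht using Nat.le_induction with
    | base => exact Part.eq_some_iff.2 hs
    | succ t ht ih =>
      obtain ⟨s', hs', hse'⟩ := hT (t + 1) (ht.trans t.le_succ)
      have hs'' := hs'
      rw [seg_succ, T_snoc, ih, Part.bind_some] at hs''
      have : s' = s := by
        by_cases hx : I t ∈ s.2
        · rwa [K_mem hx, Part.mem_some_iff] at hs''
        · rw [K_not_mem hx, Part.mem_map_iff] at hs''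
          obtain ⟨e', _, rfl⟩ := hs''
          split_ifs with h1
          · rfl
          · rw [if_neg h1] at hse'
            exact absurd (hse'.trans hse.symm) h1
      rw [← this]
      exact Part.eq_some_iff.2 hs'
  refine ⟨g n₀, pad s, by rw [W_pad, hse, hWe], fun t ht => ?_⟩
  simp [hconst t ht]

end

end CannyProof

open CannyProof in
/-- For every iterative learner `M` from informant there is a canny iterative
learner `N` with `InfEx(M) ⊆ InfEx(N)`. -/
theorem canny_normal_form (M : List Datum →. ℕ) (hM : Partrec M) (hit : Iterative M) :
    ∃ N : List Datum →. ℕ, Partrec N ∧ Iterative N ∧ Canny N ∧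
      ∀ L : Set ℕ, ExLearns M L → ExLearns N L := by
  obtain ⟨h, hh, hit⟩ := hit
  refine ⟨fun σ => (T (M []) h σ).map pad, ?_, ?_, ?_, fun L hL I hI => learns hit hL hI⟩
  · exact (T_partrec (M []) hh).map (pad_computable.comp Computable.snd)
  · refine ⟨fun q => (dec q.1).bind fun s => (K h (s, q.2)).map pad, ?_, ?_⟩
    · refine (dec_partrec.comp Computable.fst).bind ?_
      refine Partrec.map ((K_partrec hh).comp
        (Computable.snd.pair (Computable.snd.comp Computable.fst))) ?_
      exact pad_computable.comp Computable.snd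
    · intro σ x
      simp only [T_snoc]
      rcases Part.eq_none_or_eq_some (T (M []) h σ) with hT | ⟨s, hT⟩
      · simp [hT]
      · simp [hT, dec_pad]
  · intro σ x b _ e e' he he' hne τ hτ
    obtain ⟨ρ, rfl⟩ := hτ
    have hmem : ∀ s ∈ T (M []) h (σ ++ [(x, b)]), (x, b) ∈ s.2 := by
      intro s' hs'
      change Part.map pad _ = _ at he he'
      rw [Part.eq_some_iff.2 hs', Part.map_some] at he'
      rw [T_snoc, Part.mem_bind_iff] at hs'
      obtain ⟨s, hs, hK⟩ := hs'
      rw [Part.eq_some_iff.2 hs, Part.map_some] at he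
      have he := Part.some_injective he
      have he' := Part.some_injective he'
      by_cases hx : (x, b) ∈ s.2
      · rw [K_mem hx, Part.mem_some_iff] at hK
        rwa [hK]
      · rw [K_not_mem hx, Part.mem_map_iff] at hK
        obtain ⟨d, _, hd⟩ := hK
        split_ifs at hd with h2
        · exact absurd (by rw [← he, ← he', hd]) hne
        · rw [← hd]; simp
    have hp := mem_persist ρ hmem
    show Part.map pad (T (M []) h (σ ++ [(x, b)] ++ ρ ++ [(x, b)])) = Part.map pad _
    rw [T_snoc]
    rcases Part.eq_none_or_eq_some (T (M []) h (σ ++ [(x, b)] ++ ρ)) with hT | ⟨s, hT⟩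
    · rw [hT, Part.bind_none]
    · rw [hT] at hp ⊢
      rw [Part.bind_some, K_mem (hp s (Part.mem_some s))]
end

section
/- Cautiousness restricts iterative learning from informant: the indexable family 𝓛 = {ℕ} ∪ { ℕ\{x} : x ∈ ℕ } is Ex-learnable from informant by a total iterative learner, but no iterative learner that is cautious on every informant for every member of 𝓛 Ex-learns 𝓛 from informant. In particular [ItInfCautEx] ⊊ [ItInfEx]. -/
/-- `M` is cautious on the informant `I`: it never conjectures a proper subset
of a previously conjectured language. -/
def CautiousOn (M : List Datum →. ℕ) (I : ℕ → Datum) : Prop :=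
  ∀ s t, s ≤ t → ∀ e e', M (seg I s) = Part.some e → M (seg I t) = Part.some e' →
    ¬ (W e' ⊂ W e)

/-- `𝓛 ∈ [ItInfCautEx]`: some iterative learner Ex-learns every member of `𝓛`
from informant and is cautious on every informant for every member of `𝓛`. -/
def ItInfCautEx (𝓛 : Set (Set ℕ)) : Prop :=
  ∃ M : List Datum →. ℕ, Partrec M ∧ Iterative M ∧
    (∀ L ∈ 𝓛, ExLearns M L) ∧
    ∀ L ∈ 𝓛, ∀ I, IsInformant L I → CautiousOn M I

/-- The family `{ℕ} ∪ { ℕ\{x} : x ∈ ℕ }`. -/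
def famCaut : Set (Set ℕ) := {Set.univ} ∪ {L | ∃ x : ℕ, L = {x}ᶜ}

theorem exists_compl_index : ∃ g : ℕ → ℕ, Primrec g ∧ ∀ x, W (g x) = {x}ᶜ := by
  have hp : Nat.Partrec (fun m : ℕ =>
      (bif decide (m.unpair.1 = m.unpair.2) then Part.none else Part.some 0 : Part ℕ)) := by
    refine Partrec.nat_iff.1 ?_
    refine Partrec.cond ?_ Partrec.none (Computable.const 0 : Computable fun _ : ℕ => 0).partrec
    have h : PrimrecPred fun m : ℕ => m.unpair.1 = m.unpair.2 :=
      Primrec.eq.comp (Primrec.fst.comp Primrec.unpair) (Primrec.snd.comp Primrec.unpair)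
    exact h.decide.to_comp
  obtain ⟨c, hc⟩ := Nat.Partrec.Code.exists_code.1 hp
  refine ⟨fun x => Encodable.encode (Nat.Partrec.Code.curry c x), ?_, ?_⟩
  · exact Primrec.encode.comp
      (Nat.Partrec.Code.primrec₂_curry.comp (Primrec.const c) Primrec.id)
  · intro x
    ext n
    simp only [W, Set.mem_ofPred_eq, Denumerable.ofNat_encode, Nat.Partrec.Code.eval_curry, hc,
      Nat.unpair_pair, Set.mem_compl_iff, Set.mem_singleton_iff]
    by_cases h : x = n
    · simp [h]
    · simp [h, Ne.symm h]

theorem exists_univ_index : ∃ e : ℕ, W e = Set.univ := by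
  refine ⟨Encodable.encode Nat.Partrec.Code.zero, ?_⟩
  ext n
  simp only [W, Set.mem_ofPred_eq, Denumerable.ofNat_encode, Set.mem_univ, iff_true]
  exact trivial

theorem famCaut_indexable : IndexableFamily famCaut := by
  refine ⟨fun i n => !decide (i = n + 1), ?_, ?_⟩
  · have h : PrimrecPred fun p : ℕ × ℕ => p.1 = p.2 + 1 :=
      Primrec.eq.comp Primrec.fst (Primrec.succ.comp Primrec.snd)
    exact (Primrec.not.comp h.decide).to_comp
  · ext L
    simp only [famCaut, Set.mem_union, Set.mem_singleton_iff, Set.mem_ofPred_eq, Set.mem_range]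
    constructor
    · rintro (rfl | ⟨x, rfl⟩)
      · exact ⟨0, by ext n; simp⟩
      · exact ⟨x + 1, by ext n; simp [@eq_comm ℕ x n]⟩
    · rintro ⟨i, rfl⟩
      cases i with
      | zero => left; ext n; simp
      | succ x => right; exact ⟨x, by ext n; simp [@eq_comm ℕ x n]⟩

theorem famCaut_total_learner : ∃ M : List Datum →. ℕ, Partrec M ∧ Iterative M ∧
    (∀ σ : List Datum, ConsistentSeq σ → (M σ).Dom) ∧ ∀ L ∈ famCaut, ExLearns M L := by
  obtain ⟨g, hg, hW⟩ := exists_compl_index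
  obtain ⟨e0, he0⟩ := exists_univ_index
  let step : ℕ × Datum → ℕ := fun p => bif p.2.2 then p.1 else g p.2.1
  have hstep : Primrec step :=
    Primrec.cond (Primrec.snd.comp Primrec.snd) Primrec.fst
      (hg.comp (Primrec.fst.comp Primrec.snd))
  let m : List Datum → ℕ := fun σ => σ.foldl (fun e x => step (e, x)) e0
  have hm : Primrec m :=
    Primrec.list_foldl Primrec.id (Primrec.const e0) (hstep.comp Primrec.snd).to₂
  have happ : ∀ σ x, m (σ ++ [x]) = step (m σ, x) := by
    intro σ x; simp [m]
  refine ⟨fun σ => Part.some (m σ), hm.to_comp.partrec,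
    ⟨fun p => Part.some (step p), hstep.to_comp.partrec, ?_⟩, fun _ _ => trivial, ?_⟩
  · intro σ x
    simp [happ]
  · rintro L (hL | ⟨x, rfl⟩) I ⟨hI, hs⟩
    · rw [Set.mem_singleton_iff] at hL
      subst hL
      refine ⟨0, e0, he0, fun t _ => ?_⟩
      show Part.some (m (seg I t)) = Part.some e0
      apply congrArg
      induction t with
      | zero => rfl
      | succ t ih =>
        have h2 : (I t).2 = true := (hI t).2 trivial
        rw [seg_succ, happ, ih (Nat.zero_le _)]
        simp [step, h2]
    · obtain ⟨t₁, ht₁⟩ := hs x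
      have ht₁ : (I t₁).1 = x := ht₁
      refine ⟨t₁ + 1, g x, hW x, fun t ht => ?_⟩
      show Part.some (m (seg I t)) = Part.some (g x)
      apply congrArg
      have hstepx : ∀ s, (I s).1 = x → ∀ e, step (e, I s) = g x := by
        intro s h e
        have h2 : (I s).2 = false := by
          rw [Bool.eq_false_iff]
          intro h'
          exact (hI s).1 h' h
        simp [step, h2, h]
      induction t, ht using Nat.le_induction with
      | base => rw [seg_succ, happ, hstepx _ ht₁]
      | succ t _ ih =>
        rw [seg_succ, happ]
        by_cases h : (I t).1 = x
        · exact hstepx _ h _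
        · have h2 : (I t).2 = true := (hI t).2 h
          simp [step, h2, ih]

theorem famCaut_not_caut : ¬ ItInfCautEx famCaut := by
  rintro ⟨M, -, -, hL, hC⟩
  have hI : IsInformant Set.univ (fun t => (t, true)) :=
    ⟨fun t => by simp, fun t => ⟨t, rfl⟩⟩
  obtain ⟨t₀, e, he, hM⟩ := hL _ (Or.inl rfl) _ hI
  let J : ℕ → Datum := fun t => (t, decide (t ≠ t₀))
  have hJ : IsInformant {t₀}ᶜ J := ⟨fun t => by simp [J], fun t => ⟨t, rfl⟩⟩
  have hmem : ({t₀}ᶜ : Set ℕ) ∈ famCaut := Or.inr ⟨t₀, rfl⟩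
  obtain ⟨t₁, e', he', hM'⟩ := hL _ hmem _ hJ
  have hseg : seg J t₀ = seg (fun t => (t, true)) t₀ := by
    unfold seg
    apply List.map_congr_left
    intro a ha
    have := List.mem_range.1 ha
    simp [J, this.ne]
  refine hC _ hmem J hJ t₀ (max t₀ t₁) (le_max_left _ _) e e' ?_
    (hM' _ (le_max_right _ _)) ?_
  · rw [hseg]; exact hM _ le_rfl
  · rw [he, he']
    refine ⟨Set.subset_univ _, fun h => ?_⟩
    exact h (Set.mem_univ t₀) rfl

/-- Cautiousness restricts iterative learning from informant: `famCaut` is an indexable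
family Ex-learnable from informant by a total iterative learner, but not cautiously
Ex-learnable by any iterative learner; in particular `[ItInfCautEx] ⊊ [ItInfEx]`. -/
theorem caut_restricts_itInfEx :
    IndexableFamily famCaut ∧
    (∃ M : List Datum →. ℕ, Partrec M ∧ Iterative M ∧
        (∀ σ : List Datum, ConsistentSeq σ → (M σ).Dom) ∧
        ∀ L ∈ famCaut, ExLearns M L) ∧
    ¬ ItInfCautEx famCaut ∧
    {𝓛 : Set (Set ℕ) | ItInfCautEx 𝓛} ⊂ {𝓛 : Set (Set ℕ) | ItInfEx 𝓛} := by
  obtain ⟨M, hM, hit, htot, hex⟩ := famCaut_total_learner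
  refine ⟨famCaut_indexable, ⟨M, hM, hit, htot, hex⟩, famCaut_not_caut, ?_, fun h => ?_⟩
  · rintro L ⟨N, h1, h2, h3, -⟩
    exact ⟨N, h1, h2, h3⟩
  · exact famCaut_not_caut (h (show ItInfEx famCaut from ⟨M, hM, hit, hex⟩))
end

section
/- Strong non-U-shapedness restricts iterative learning from informant: there exists a class 𝓛 of languages that is Ex-learnable from informant by an iterative learner, but no iterative learner that is strongly non-U-shaped on every informant for every member of 𝓛 Ex-learns 𝓛 from informant; that is, [ItInfSNUEx] ⊊ [ItInfEx]. -/
/-- The set of numbers about which the informant `I` gives positive information. -/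
def posI (I : ℕ → Datum) : Set ℕ := {y | ∃ t, I t = (y, true)}

/-- `M` is strongly non-U-shaped on `I`: whenever `W_{h_r} = W_{h_t} = pos(I)`
for `r ≤ s ≤ t`, then `h_r = h_s` (syntactically). -/
def SNUOn (M : List Datum →. ℕ) (I : ℕ → Datum) : Prop :=
  ∀ r s t, r ≤ s → s ≤ t → ∀ er es et,
    M (seg I r) = Part.some er → M (seg I s) = Part.some es → M (seg I t) = Part.some et →
    W er = posI I → W et = posI I → er = es

/-- `𝓛 ∈ [ItInfSNUEx]`: some iterative learner Ex-learns every member of `𝓛` from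
informant and is strongly non-U-shaped on every informant for every member of `𝓛`. -/
def ItInfSNUEx (𝓛 : Set (Set ℕ)) : Prop :=
  ∃ M : List Datum →. ℕ, Partrec M ∧ Iterative M ∧
    (∀ L ∈ 𝓛, ExLearns M L) ∧
    ∀ L ∈ 𝓛, ∀ I, IsInformant L I → SNUOn M I

open Nat.Partrec (Code)

namespace SNU

abbrev PState := ℕ × List ℕ × List ℕ × List ℕ

/-- odd type elements of column `n` -/
def Ln (n : ℕ) : Set ℕ := {z | z.unpair.1 = n ∧ z.unpair.2 % 2 = 1}

instance (n : ℕ) : DecidablePred (· ∈ Ln n) := fun z =>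
  inferInstanceAs (Decidable (z.unpair.1 = n ∧ z.unpair.2 % 2 = 1))

/-- datum labelled according to `Ln n` -/
def lab (n z : ℕ) : Datum := (z, decide (z ∈ Ln n))

def ev (n k : ℕ) (l : List ℕ) : Option ℕ :=
  Code.evaln k (Denumerable.ofNat Code n.unpair.1) (Nat.pair n (Encodable.encode l))

def flt (x : ℕ) (A l : List ℕ) : List ℕ := l.filter (fun z => z < x ∧ z ∉ A)

def getl (x : ℕ) (A : List ℕ) : List ℕ := flt x A (Denumerable.ofNat (List ℕ) x.unpair.1)

def cond0 (n x : ℕ) (S : PState) : Prop :=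
  ev n x.unpair.2 (S.2.2.1 ++ getl x S.2.1) ≠ none ∧
  ev n x.unpair.2 (S.2.2.1 ++ getl x S.2.1) =
    ev n x.unpair.2 (S.2.2.1 ++ getl x S.2.1 ++ [S.2.1.headI])

instance (n x S) : Decidable (cond0 n x S) := inferInstanceAs (Decidable (_ ∧ _))

def cond1 (n x : ℕ) (S : PState) : Prop :=
  ev n x.unpair.2 S.2.2.1 ≠ none ∧
  ev n x.unpair.2 (S.2.2.1 ++ getl x S.2.1) ≠ none ∧
  ev n x.unpair.2 S.2.2.1 ≠ ev n x.unpair.2 (S.2.2.1 ++ getl x S.2.1)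

instance (n x S) : Decidable (cond1 n x S) := inferInstanceAs (Decidable (_ ∧ _))

def tr0 (x : ℕ) (S : PState) : PState :=
  (S.1 + 1, S.2.1, S.2.2.1 ++ getl x S.2.1, S.2.2.2 ++ (getl x S.2.1 ++ [S.2.1.headI]))

def tr1 (n x : ℕ) (S : PState) : PState :=
  (S.1 + 1, Nat.pair n (2 * (x + 1)) :: S.2.1,
    S.2.2.1 ++ (getl x S.2.1 ++ flt x S.2.1 (List.range x)),
    S.2.2.2 ++ (getl x S.2.1 ++ flt x S.2.1 (List.range x)))

def step (n x : ℕ) (S : PState) : PState :=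
  if S.1 % 2 = 0 then
    (if cond0 n x S then tr0 x S else S)
  else (if cond1 n x S then tr1 n x S else S)

def St (n : ℕ) : ℕ → PState
  | 0 => (0, [Nat.pair n 0], [], [])
  | x + 1 => step n x (St n x)

/-! ### primitive recursiveness -/

section prim
open Primrec
variable {α : Type*} [Primcodable α]

theorem mem_prim : PrimrecRel (fun (z : ℕ) (A : List ℕ) => z ∈ A) := by
  have h : PrimrecRel (fun (L : List ℕ) (b : ℕ) => ∃ a ∈ L, a = b) :=
    PrimrecRel.exists_mem_list (R := fun a b : ℕ => a = b) Primrec.eq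
  refine (PrimrecRel.comp h Primrec.snd Primrec.fst).of_eq ?_
  rintro ⟨z, A⟩; simp

theorem Ln_prim {f g : α → ℕ} (hf : Primrec f) (hg : Primrec g) :
    PrimrecPred (fun a => g a ∈ Ln (f a)) := by
  have h1 : Primrec (fun a => (g a).unpair) := Primrec.unpair.comp hg
  exact PrimrecPred.and (Primrec.eq.comp (Primrec.fst.comp h1) hf)
    (Primrec.eq.comp (Primrec.nat_mod.comp (Primrec.snd.comp h1) (Primrec.const 2)) (Primrec.const 1))

theorem lab_prim {f g : α → ℕ} (hf : Primrec f) (hg : Primrec g) :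
    Primrec (fun a => lab (f a) (g a)) :=
  Primrec.pair hg (Ln_prim hf hg).decide

theorem ev_prim {f g : α → ℕ} {l : α → List ℕ} (hf : Primrec f) (hg : Primrec g)
    (hl : Primrec l) : Primrec (fun a => ev (f a) (g a) (l a)) := by
  have h1 : Primrec (fun a => (f a).unpair.1) := Primrec.fst.comp (Primrec.unpair.comp hf)
  have h2 : Primrec (fun a => Denumerable.ofNat Code (f a).unpair.1) := (Primrec.ofNat Code).comp h1
  exact Code.primrec_evaln.comp ((hg.pair h2).pair
    (Primrec₂.natPair.comp hf (Primrec.encode.comp hl)))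

theorem flt_prim {f : α → ℕ} {A l : α → List ℕ} (hf : Primrec f) (hA : Primrec A)
    (hl : Primrec l) : Primrec (fun a => flt (f a) (A a) (l a)) := by
  have hR : PrimrecRel (fun (z : ℕ) (p : ℕ × List ℕ) => z < p.1 ∧ z ∉ p.2) := by
    refine PrimrecPred.and (Primrec.nat_lt.comp Primrec.fst (Primrec.fst.comp Primrec.snd)) ?_
    exact PrimrecPred.not (mem_prim.comp Primrec.fst (Primrec.snd.comp Primrec.snd))
  exact (hR.listFilter).comp hl (hf.pair hA)

theorem getl_prim {f : α → ℕ} {A : α → List ℕ} (hf : Primrec f) (hA : Primrec A) :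
    Primrec (fun a => getl (f a) (A a)) :=
  flt_prim hf hA ((Primrec.ofNat (List ℕ)).comp (Primrec.fst.comp (Primrec.unpair.comp hf)))

theorem step_prim : Primrec (fun p : ℕ × ℕ × PState => step p.1 p.2.1 p.2.2) := by
  have hn : Primrec (fun p : ℕ × ℕ × PState => p.1) := Primrec.fst
  have hx : Primrec (fun p : ℕ × ℕ × PState => p.2.1) := Primrec.fst.comp Primrec.snd
  have hS : Primrec (fun p : ℕ × ℕ × PState => p.2.2) := Primrec.snd.comp Primrec.snd
  have hst : Primrec (fun p : ℕ × ℕ × PState => p.2.2.1) := Primrec.fst.comp hS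
  have hS2 : Primrec (fun p : ℕ × ℕ × PState => p.2.2.2) := Primrec.snd.comp hS
  have hA : Primrec (fun p : ℕ × ℕ × PState => p.2.2.2.1) := Primrec.fst.comp hS2
  have hS3 : Primrec (fun p : ℕ × ℕ × PState => p.2.2.2.2) := Primrec.snd.comp hS2
  have hu : Primrec (fun p : ℕ × ℕ × PState => p.2.2.2.2.1) := Primrec.fst.comp hS3
  have hv : Primrec (fun p : ℕ × ℕ × PState => p.2.2.2.2.2) := Primrec.snd.comp hS3
  have hk : Primrec (fun p : ℕ × ℕ × PState => p.2.1.unpair.2) :=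
    Primrec.snd.comp (Primrec.unpair.comp hx)
  have hl := getl_prim hx hA
  have hul := Primrec.list_append.comp hu hl
  have hh : Primrec (fun p : ℕ × ℕ × PState => [p.2.2.2.1.headI]) :=
    Primrec.list_cons.comp (Primrec.list_headI.comp hA) (Primrec.const [])
  have hula := Primrec.list_append.comp hul hh
  have hw := flt_prim hx hA (Primrec.list_range.comp hx)
  have hlw := Primrec.list_append.comp hl hw
  have hla := Primrec.list_append.comp hl hh
  have hst1 := Primrec.succ.comp hst
  have e1 := ev_prim hn hk hul
  have e2 := ev_prim hn hk hula
  have e3 := ev_prim hn hk hu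
  have c0 : PrimrecPred (fun p : ℕ × ℕ × PState => cond0 p.1 p.2.1 p.2.2) :=
    ((Primrec.eq.comp e1 (Primrec.const none)).not).and (Primrec.eq.comp e1 e2)
  have c1 : PrimrecPred (fun p : ℕ × ℕ × PState => cond1 p.1 p.2.1 p.2.2) :=
    ((Primrec.eq.comp e3 (Primrec.const none)).not).and
      (((Primrec.eq.comp e1 (Primrec.const none)).not).and (Primrec.eq.comp e3 e1).not)
  have t0 : Primrec (fun p : ℕ × ℕ × PState => tr0 p.2.1 p.2.2) :=
    hst1.pair (hA.pair (hul.pair (Primrec.list_append.comp hv hla)))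
  have hnew : Primrec (fun p : ℕ × ℕ × PState => Nat.pair p.1 (2 * (p.2.1 + 1))) :=
    Primrec₂.natPair.comp hn (Primrec.nat_mul.comp (Primrec.const 2) (Primrec.succ.comp hx))
  have t1 : Primrec (fun p : ℕ × ℕ × PState => tr1 p.1 p.2.1 p.2.2) :=
    hst1.pair ((Primrec.list_cons.comp hnew hA).pair
      ((Primrec.list_append.comp hu hlw).pair (Primrec.list_append.comp hv hlw)))
  have ce : PrimrecPred (fun p : ℕ × ℕ × PState => p.2.2.1 % 2 = 0) :=
    Primrec.eq.comp (Primrec.nat_mod.comp hst (Primrec.const 2)) (Primrec.const 0)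
  exact Primrec.ite ce (Primrec.ite c0 t0 hS) (Primrec.ite c1 t1 hS)

theorem St_prim : Primrec₂ St := by
  have h := Primrec.nat_rec (α := ℕ) (β := PState)
    (f := fun n => (0, [Nat.pair n 0], [], []))
    (g := fun n p => step n p.1 p.2)
    ?_ ?_
  · refine h.of_eq ?_
    intro n x
    induction x with
    | zero => rfl
    | succ x ih => simp only [St]; rw [← ih]
  · exact (Primrec.const 0).pair (Primrec.pair (Primrec.list_cons.comp
      (Primrec₂.natPair.comp Primrec.id (Primrec.const 0)) (Primrec.const [])) (Primrec.const _))
  · exact step_prim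

end prim
/-! ### facts about the process -/

abbrev stt (n x : ℕ) : ℕ := (St n x).1
abbrev AA (n x : ℕ) : List ℕ := (St n x).2.1
abbrev uu (n x : ℕ) : List ℕ := (St n x).2.2.1
abbrev vv (n x : ℕ) : List ℕ := (St n x).2.2.2

theorem mem_flt {x : ℕ} {A l : List ℕ} {z : ℕ} : z ∈ flt x A l ↔ z ∈ l ∧ z < x ∧ z ∉ A := by
  simp [flt]

theorem St_cases (n x : ℕ) : St n (x + 1) = St n x ∨
    (stt n x % 2 = 0 ∧ cond0 n x (St n x) ∧ St n (x + 1) = tr0 x (St n x)) ∨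
    (stt n x % 2 = 1 ∧ cond1 n x (St n x) ∧ St n (x + 1) = tr1 n x (St n x)) := by
  rw [St, step]
  split_ifs with h1 h2 h3
  · exact Or.inr (Or.inl ⟨h1, h2, rfl⟩)
  · exact Or.inl rfl
  · exact Or.inr (Or.inr ⟨by show (St n x).1 % 2 = 1; omega, h3, rfl⟩)
  · exact Or.inl rfl

theorem stt_succ (n x : ℕ) : (stt n (x + 1) = stt n x ∧ St n (x + 1) = St n x) ∨
    stt n (x + 1) = stt n x + 1 := by
  rcases St_cases n x with h | ⟨_, _, h⟩ | ⟨_, _, h⟩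
  · left; exact ⟨by rw [stt, h], h⟩
  · right; rw [stt, h]; rfl
  · right; rw [stt, h]; rfl

theorem stt_mono (n : ℕ) : Monotone (stt n) :=
  monotone_nat_of_le_succ fun x => by rcases stt_succ n x with h | h <;> omega

theorem AA_mono (n : ℕ) {x y : ℕ} (h : x ≤ y) : AA n x ⊆ AA n y := by
  induction h with
  | refl => exact fun _ h => h
  | @step m _ ih =>
    refine fun z hz => ?_
    have hz := ih hz
    show z ∈ AA n (m + 1)
    rcases St_cases n m with h | ⟨_, _, h⟩ | ⟨_, _, h⟩
    · rw [AA, h]; exact hz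
    · rw [AA, h]; exact hz
    · rw [AA, h]; exact List.mem_cons_of_mem _ hz

theorem vv_mono (n : ℕ) {x y : ℕ} (h : x ≤ y) : vv n x <+: vv n y := by
  induction h with
  | refl => exact List.prefix_refl _
  | @step m _ ih =>
    refine ih.trans ?_
    show vv n m <+: vv n (m + 1)
    rcases St_cases n m with h | ⟨_, _, h⟩ | ⟨_, _, h⟩
    · rw [vv, vv, h]
    · rw [vv, vv, h]; exact List.prefix_append _ _
    · rw [vv, vv, h]; exact List.prefix_append _ _

theorem St_eq_of_stt (n : ℕ) {x y : ℕ} (h : x ≤ y) (he : stt n y = stt n x) : St n y = St n x := by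
  induction h with
  | refl => rfl
  | @step m hm ih =>
    have h1 : stt n x ≤ stt n m := stt_mono n hm
    rcases stt_succ n m with ⟨h, h'⟩ | h
    · have he' : stt n (m + 1) = stt n x := he
      exact h'.trans (ih (by omega))
    · have he' : stt n (m + 1) = stt n x := he
      omega

theorem AA_zero (n x : ℕ) : Nat.pair n 0 ∈ AA n x :=
  AA_mono n (Nat.zero_le x) (by simp [AA, St])

theorem AA_head (n x : ℕ) : (AA n x).headI ∈ AA n x := by
  have h := AA_zero n x
  cases hA : AA n x with
  | nil => rw [hA] at h; simp at h
  | cons a l => simp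

theorem AA_col (n x : ℕ) : ∀ z ∈ AA n x, z.unpair.1 = n ∧ z.unpair.2 % 2 = 0 := by
  induction x with
  | zero => intro z hz; simp [AA, St] at hz; subst hz; simp
  | succ x ih =>
    intro z hz
    rcases St_cases n x with h | ⟨_, _, h⟩ | ⟨_, _, h⟩
    · rw [AA, h] at hz; exact ih z hz
    · rw [AA, h] at hz; exact ih z hz
    · rw [AA, h] at hz
      rcases List.mem_cons.1 hz with rfl | hz
      · simp
      · exact ih z hz

theorem AA_not_Ln {n x z : ℕ} (h : z ∈ AA n x) : z ∉ Ln n := by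
  intro h'
  have h1 := (AA_col n x z h).2
  have h2 := h'.2
  omega

theorem new_gt (n x : ℕ) : x < Nat.pair n (2 * (x + 1)) := by
  have := Nat.right_le_pair n (2 * (x + 1))
  omega

theorem fresh (n x : ℕ) : ∀ z ∈ AA n x, z ∈ AA n z := by
  induction x with
  | zero => intro z hz; simp [AA, St] at hz; subst hz; exact AA_zero _ _
  | succ x ih =>
    intro z hz
    rcases St_cases n x with h | ⟨_, _, h⟩ | ⟨_, _, h⟩
    · rw [AA, h] at hz; exact ih z hz
    · rw [AA, h] at hz; exact ih z hz
    · rw [AA, h] at hz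
      rcases List.mem_cons.1 hz with h' | hz
      · have h1 := new_gt n x
        have h2 : x + 1 ≤ z := by omega
        refine AA_mono n h2 ?_
        rw [AA, h, h']
        exact List.mem_cons_self
      · exact ih z hz

theorem uu_mem (n x : ℕ) : ∀ z ∈ uu n x, z < x ∧ z ∉ AA n x ∧ stt n z < stt n x := by
  induction x with
  | zero => intro z hz; simp [uu, St] at hz
  | succ x ih =>
    intro z hz
    have hs := stt_succ n x
    rcases St_cases n x with h | ⟨_, _, h⟩ | ⟨_, _, h⟩
    · rw [uu, h] at hz
      have := ih z hz
      have h1 : stt n (x + 1) = stt n x := by rw [stt, h]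
      have h2 : AA n (x + 1) = AA n x := by rw [AA, h]
      rw [h1, h2]
      exact ⟨by omega, this.2⟩
    · have h1 : stt n (x + 1) = stt n x + 1 := by rw [stt, h]; rfl
      have h2 : AA n (x + 1) = AA n x := by rw [AA, h]; rfl
      have hz' : z ∈ uu n x ++ getl x (AA n x) := by rw [uu, h] at hz; exact hz
      rw [h1, h2]
      rcases List.mem_append.1 hz' with hz | hz
      · have := ih z hz; exact ⟨by omega, this.2.1, by omega⟩
      · have := mem_flt.1 hz
        have h3 : stt n z ≤ stt n x := stt_mono n this.2.1.le
        exact ⟨by omega, this.2.2, by omega⟩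
    · have h1 : stt n (x + 1) = stt n x + 1 := by rw [stt, h]; rfl
      have h2 : AA n (x + 1) = Nat.pair n (2 * (x + 1)) :: AA n x := by rw [AA, h]; rfl
      have hz' : z ∈ uu n x ++ (getl x (AA n x) ++ flt x (AA n x) (List.range x)) := by
        rw [uu, h] at hz; exact hz
      have key : z < x ∧ z ∉ AA n x ∧ stt n z ≤ stt n x := by
        rcases List.mem_append.1 hz' with hz | hz
        · have := ih z hz; exact ⟨by omega, this.2.1, by omega⟩
        · have : z < x ∧ z ∉ AA n x := by
            rcases List.mem_append.1 hz with hz | hz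
            · exact (mem_flt.1 hz).2
            · exact (mem_flt.1 hz).2
          exact ⟨this.1, this.2, stt_mono n this.1.le⟩
      rw [h1, h2]
      refine ⟨by omega, ?_, by omega⟩
      have h4 := new_gt n x
      simp only [List.mem_cons, not_or]
      exact ⟨by omega, key.2.1⟩

theorem vv_cover (n x : ℕ) : (stt n x % 2 = 0 → ∀ a ∈ (AA n x).tail, a ∈ vv n x) ∧
    (stt n x % 2 = 1 → ∀ a ∈ AA n x, a ∈ vv n x) := by
  induction x with
  | zero => simp [AA, St, stt]
  | succ x ih =>
    rcases St_cases n x with h | ⟨h0, _, h⟩ | ⟨h0, _, h⟩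
    · rw [AA, stt, vv, h]; exact ih
    · have h1 : stt n (x + 1) = stt n x + 1 := by rw [stt, h]; rfl
      have h2 : AA n (x + 1) = AA n x := by rw [AA, h]; rfl
      have h3 : vv n (x + 1) = vv n x ++ (getl x (AA n x) ++ [(AA n x).headI]) := by rw [vv, h]; rfl
      rw [h1, h2, h3]
      refine ⟨fun h => by omega, fun _ a ha => ?_⟩
      have h5 := ih.1 h0
      cases hA : AA n x with
      | nil => rw [hA] at ha; simp at ha
      | cons b l =>
        rw [hA] at ha h5
        rcases List.mem_cons.1 ha with rfl | ha
        · simp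
        · simp [h5 a ha]
    · have h1 : stt n (x + 1) = stt n x + 1 := by rw [stt, h]; rfl
      have h2 : AA n (x + 1) = Nat.pair n (2 * (x + 1)) :: AA n x := by rw [AA, h]; rfl
      have h3 : vv n (x + 1) = vv n x ++ (getl x (AA n x) ++ flt x (AA n x) (List.range x)) := by
        rw [vv, h]; rfl
      rw [h1, h2, h3]
      refine ⟨fun _ a ha => ?_, fun h => by omega⟩
      have h5 := ih.2 h0 a ha
      simp [h5]

theorem stt_hits (n : ℕ) (hub : ∀ N, ∃ x, N ≤ stt n x) (m : ℕ) :
    ∃ x, stt n x = m ∧ stt n (x + 1) = m + 1 := by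
  classical
  have hex : ∃ x, m + 1 ≤ stt n x := hub (m + 1)
  have h1 := Nat.find_spec hex
  cases hx : Nat.find hex with
  | zero => rw [hx] at h1; simp [stt, St] at h1
  | succ x =>
    rw [hx] at h1
    have h2 : ¬ m + 1 ≤ stt n x := Nat.find_min hex (by omega)
    have h3 := stt_succ n x
    exact ⟨x, by omega, by omega⟩

/-- Beyond any bound there are transitions of any given parity. -/
theorem stt_trans (n : ℕ) (hub : ∀ N, ∃ x, N ≤ stt n x) (N p : ℕ) (hp : p < 2) :
    ∃ x, N ≤ x ∧ stt n x % 2 = p ∧ stt n (x + 1) = stt n x + 1 := by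
  obtain ⟨x, h1, h2⟩ := stt_hits n hub (2 * stt n N + p)
  refine ⟨x, ?_, by omega, by omega⟩
  by_contra hlt
  have := stt_mono n (show x + 1 ≤ N by omega)
  omega

theorem AA_unbounded (n : ℕ) (hub : ∀ N, ∃ x, N ≤ stt n x) (N : ℕ) :
    ∃ x, ∃ a ∈ AA n x, N ≤ a := by
  obtain ⟨x, h1, h2, h3⟩ := stt_trans n hub N 1 (by omega)
  rcases St_cases n x with h | ⟨h0, _, h⟩ | ⟨h0, _, h⟩
  · have : stt n (x + 1) = stt n x := by rw [stt, h]
    omega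
  · omega
  · refine ⟨x + 1, Nat.pair n (2 * (x + 1)), ?_, by have := new_gt n x; omega⟩
    rw [AA, h]
    exact List.mem_cons_self

theorem stuck (n : ℕ) (hub : ¬ ∀ N, ∃ x, N ≤ stt n x) : ∃ s, ∀ x, s ≤ x → St n x = St n s := by
  classical
  push Not at hub
  have hub' : ∃ N, ∀ x, stt n x < N := hub
  have h1 := Nat.find_spec hub'
  cases hN : Nat.find hub' with
  | zero => rw [hN] at h1; exact absurd (h1 0) (by omega)
  | succ m =>
    rw [hN] at h1
    have h2 : ¬ ∀ x, stt n x < m := Nat.find_min hub' (by omega)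
    push Not at h2
    obtain ⟨s, hs⟩ := h2
    refine ⟨s, fun x hx => St_eq_of_stt n hx ?_⟩
    have := h1 x
    have := stt_mono n hx
    have := h1 s
    omega

/-! ### the class -/

def Lp (n b : ℕ) : Set ℕ :=
  {z | z ∈ AA n b ∨ (z ∈ Ln n ∧ z ∈ uu n b) ∨ z = b}

instance (n b : ℕ) : DecidablePred (· ∈ Lp n b) := fun z =>
  inferInstanceAs (Decidable (z ∈ AA n b ∨ (z ∈ Ln n ∧ z ∈ uu n b) ∨ z = b))

def good (n b : ℕ) : Prop := b ∈ Ln n ∧ stt n b % 2 = 1 ∧ ∀ x, b ≤ x → St n x = St n b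

def cls : Set (Set ℕ) :=
  {L | L = ∅ ∨ (∃ n, L = Ln n) ∨ ∃ n b, good n b ∧ L = Lp n b}
/-! ### the iterative learner -/

abbrev LState := ℕ × ℕ × ℕ

def upd (s : LState) (d : Datum) : LState :=
  if s.2.1 = 0 then
    if d.2 = true then
      (if d.1.unpair.2 % 2 = 1 then (d.1.unpair.1, 1, d.1) else (d.1.unpair.1, 3, 0))
    else s
  else if d.1.unpair.1 = s.1 then
    if d.1.unpair.2 % 2 = 1 then
      (if d.2 = true ∧ s.2.1 ≠ 2 ∧ (s.2.2 = 0 ∨ stt s.1 s.2.2 < stt s.1 d.1) then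
        (s.1, s.2.1, d.1) else s)
    else if d.1 ∈ AA s.1 d.1 ∧ s.2.1 = 1 then
      (if d.2 = true then (s.1, 3, s.2.2) else (s.1, 2, s.2.2))
    else s
  else s

def conjD (s : LState) (z : ℕ) : Prop :=
  ((s.2.1 = 1 ∨ s.2.1 = 2) ∧ z ∈ Ln s.1) ∨ (s.2.1 = 3 ∧ z ∈ Lp s.1 s.2.2)

instance (s : LState) (z : ℕ) : Decidable (conjD s z) := inferInstanceAs (Decidable (_ ∨ _))

section prim
open Primrec
variable {α : Type*} [Primcodable α]

theorem stt_prim {f g : α → ℕ} (hf : Primrec f) (hg : Primrec g) :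
    Primrec (fun a => stt (f a) (g a)) := Primrec.fst.comp (St_prim.comp hf hg)

theorem AA_prim {f g : α → ℕ} (hf : Primrec f) (hg : Primrec g) :
    Primrec (fun a => AA (f a) (g a)) := Primrec.fst.comp (Primrec.snd.comp (St_prim.comp hf hg))

theorem uu_prim {f g : α → ℕ} (hf : Primrec f) (hg : Primrec g) :
    Primrec (fun a => uu (f a) (g a)) :=
  Primrec.fst.comp (Primrec.snd.comp (Primrec.snd.comp (St_prim.comp hf hg)))

theorem upd_prim : Primrec₂ upd := by
  have hs : Primrec (fun p : LState × Datum => p.1) := Primrec.fst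
  have hn : Primrec (fun p : LState × Datum => p.1.1) := Primrec.fst.comp hs
  have hs2 : Primrec (fun p : LState × Datum => p.1.2) := Primrec.snd.comp hs
  have hf : Primrec (fun p : LState × Datum => p.1.2.1) := Primrec.fst.comp hs2
  have hb : Primrec (fun p : LState × Datum => p.1.2.2) := Primrec.snd.comp hs2
  have hz : Primrec (fun p : LState × Datum => p.2.1) := Primrec.fst.comp Primrec.snd
  have hl : Primrec (fun p : LState × Datum => p.2.2) := Primrec.snd.comp Primrec.snd
  have hz1 : Primrec (fun p : LState × Datum => p.2.1.unpair.1) :=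
    Primrec.fst.comp (Primrec.unpair.comp hz)
  have hz2 : Primrec (fun p : LState × Datum => p.2.1.unpair.2) :=
    Primrec.snd.comp (Primrec.unpair.comp hz)
  have c1 : PrimrecPred (fun p : LState × Datum => p.1.2.1 = 0) :=
    Primrec.eq.comp hf (Primrec.const 0)
  have c2 : PrimrecPred (fun p : LState × Datum => p.2.2 = true) :=
    Primrec.eq.comp hl (Primrec.const true)
  have c3 : PrimrecPred (fun p : LState × Datum => p.2.1.unpair.2 % 2 = 1) :=
    Primrec.eq.comp (Primrec.nat_mod.comp hz2 (Primrec.const 2)) (Primrec.const 1)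
  have c4 : PrimrecPred (fun p : LState × Datum => p.2.1.unpair.1 = p.1.1) :=
    Primrec.eq.comp hz1 hn
  have c5 : PrimrecPred (fun p : LState × Datum => p.2.2 = true ∧ p.1.2.1 ≠ 2 ∧
      (p.1.2.2 = 0 ∨ stt p.1.1 p.1.2.2 < stt p.1.1 p.2.1)) :=
    c2.and (((Primrec.eq.comp hf (Primrec.const 2)).not).and
      ((Primrec.eq.comp hb (Primrec.const 0)).or
        (Primrec.nat_lt.comp (stt_prim hn hb) (stt_prim hn hz))))
  have c6 : PrimrecPred (fun p : LState × Datum => p.2.1 ∈ AA p.1.1 p.2.1 ∧ p.1.2.1 = 1) :=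
    (mem_prim.comp hz (AA_prim hn hz)).and (Primrec.eq.comp hf (Primrec.const 1))
  exact Primrec.ite c1
    (Primrec.ite c2 (Primrec.ite c3 (hz1.pair ((Primrec.const 1).pair hz))
      (hz1.pair (Primrec.const (3, 0)))) hs)
    (Primrec.ite c4 (Primrec.ite c3 (Primrec.ite c5 (hn.pair (hf.pair hz)) hs)
      (Primrec.ite c6 (Primrec.ite c2 (hn.pair ((Primrec.const 3).pair hb))
        (hn.pair ((Primrec.const 2).pair hb))) hs)) hs)

theorem conjD_prim : PrimrecRel conjD := by
  have hs : Primrec (fun p : LState × ℕ => p.1) := Primrec.fst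
  have hn : Primrec (fun p : LState × ℕ => p.1.1) := Primrec.fst.comp hs
  have hs2 : Primrec (fun p : LState × ℕ => p.1.2) := Primrec.snd.comp hs
  have hf : Primrec (fun p : LState × ℕ => p.1.2.1) := Primrec.fst.comp hs2
  have hb : Primrec (fun p : LState × ℕ => p.1.2.2) := Primrec.snd.comp hs2
  have hz : Primrec (fun p : LState × ℕ => p.2) := Primrec.snd
  have hLn := Ln_prim hn hz
  have fe := fun k => Primrec.eq.comp hf (Primrec.const k)
  have hLp : PrimrecPred (fun p : LState × ℕ => p.2 ∈ Lp p.1.1 p.1.2.2) :=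
    (mem_prim.comp hz (AA_prim hn hb)).or
      ((hLn.and (mem_prim.comp hz (uu_prim hn hb))).or (Primrec.eq.comp hz hb))
  exact (((fe 1).or (fe 2)).and hLn).or ((fe 3).and hLp)

end prim

theorem c0_gen (g : LState → ℕ → Option ℕ) (hg : Primrec₂ g) : ∃ c : Code, ∀ (s : LState) (z : ℕ),
    c.eval (Nat.pair (Encodable.encode s) z) = (g s z : Part ℕ) := by
  have h2 : Primrec (fun m : ℕ => g (Denumerable.ofNat LState m.unpair.1) m.unpair.2) :=
    hg.comp ((Primrec.ofNat LState).comp (Primrec.fst.comp Primrec.unpair))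
      (Primrec.snd.comp Primrec.unpair)
  have h3 : Partrec (fun m : ℕ =>
      (g (Denumerable.ofNat LState m.unpair.1) m.unpair.2 : Part ℕ)) := Computable.ofOption h2.to_comp
  obtain ⟨c, hc⟩ := Code.exists_code.1 (Partrec.nat_iff.1 h3)
  refine ⟨c, fun s z => ?_⟩
  rw [hc]
  simp only [Nat.unpair_pair, Denumerable.ofNat_encode]

theorem c0_exists : ∃ c : Code, ∀ (s : LState) (z : ℕ),
    (c.eval (Nat.pair (Encodable.encode s) z)).Dom ↔ conjD s z := by
  obtain ⟨c, hc⟩ := c0_gen (fun s z => if conjD s z then some 0 else none)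
    (Primrec.ite conjD_prim (Primrec.const (some 0)) (Primrec.const none))
  refine ⟨c, fun s z => ?_⟩
  rw [hc]
  split_ifs with h <;> simp [h]

noncomputable def c0 : Code := c0_exists.choose

noncomputable def code (s : LState) : ℕ := Encodable.encode (Code.curry c0 (Encodable.encode s))

theorem W_code (s : LState) : W (code s) = {z | conjD s z} := by
  ext z
  simp only [W, code, Denumerable.ofNat_encode, Code.eval_curry, Set.mem_ofPred_eq]
  exact c0_exists.choose_spec s z

theorem code_inj {s s' : LState} (h : code s = code s') : s = s' := by
  have := Encodable.encode_injective h
  exact Encodable.encode_injective (Code.curry_inj this).2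

theorem code_comp : Computable code :=
  (Primrec.encode.comp (Code.primrec₂_curry.comp (Primrec.const c0) Primrec.encode)).to_comp

noncomputable def stf (σ : List Datum) : LState := σ.foldl upd (0, 0, 0)

noncomputable def M0 : List Datum →. ℕ := fun σ => Part.some (code (stf σ))

theorem M0_partrec : Partrec M0 := by
  have : Primrec stf := Primrec.list_foldl Primrec.id (Primrec.const (0, 0, 0))
    (Primrec.to₂ (upd_prim.comp (Primrec.fst.comp Primrec.snd) (Primrec.snd.comp Primrec.snd)))
  exact (code_comp.comp this.to_comp)

noncomputable def h0 : ℕ × Datum →. ℕ := fun p =>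
  (Nat.rfind (fun m => Part.some (decide (code (Denumerable.ofNat LState m) = p.1)))).map
    (fun m => code (upd (Denumerable.ofNat LState m) p.2))

theorem h0_partrec : Partrec h0 := by
  have h1 : Partrec (fun p : ℕ × Datum => Nat.rfind
      (fun m => Part.some (decide (code (Denumerable.ofNat LState m) = p.1)))) := by
    apply Partrec.rfind
    have : Computable (fun q : (ℕ × Datum) × ℕ =>
        decide (code (Denumerable.ofNat LState q.2) = q.1.1)) := by
      have hd : Computable₂ (fun a b : ℕ => decide (a = b)) := (Primrec.eq.decide).to_comp
      exact hd.comp (code_comp.comp ((Computable.ofNat LState).comp Computable.snd))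
        (Computable.fst.comp Computable.fst)
    exact this
  refine Partrec.map h1 ?_
  exact code_comp.comp (upd_prim.to_comp.comp ((Computable.ofNat LState).comp Computable.snd)
    (Computable.snd.comp Computable.fst))

theorem h0_code (s : LState) (d : Datum) : h0 (code s, d) = Part.some (code (upd s d)) := by
  have : Nat.rfind (fun m => Part.some (decide (code (Denumerable.ofNat LState m) = code s)))
      = Part.some (Encodable.encode s) := by
    rw [Part.eq_some_iff]
    refine Nat.mem_rfind.2 ?_
    constructor
    · simp only [Denumerable.ofNat_encode, decide_true, Part.mem_some_iff]
    · intro m hm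
      simp only [Part.mem_some_iff]
      symm
      rw [decide_eq_false_iff_not]
      intro h
      have := code_inj h
      rw [← this, Denumerable.encode_ofNat] at hm
      exact lt_irrefl _ hm
  simp only [h0, this, Part.map_some, Denumerable.ofNat_encode]

theorem M0_iter : Iterative M0 := by
  refine ⟨h0, h0_partrec, fun σ x => ?_⟩
  simp only [M0, Part.bind_some, h0_code, stf, List.foldl_append, List.foldl_cons, List.foldl_nil]

theorem stf_succ (I : ℕ → Datum) (t : ℕ) : stf (seg I (t + 1)) = upd (stf (seg I t)) (I t) := by
  simp [stf, seg, List.range_succ]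

theorem learn_of (L : Set ℕ) (I : ℕ → Datum) (T : ℕ) (s : LState)
    (hs : ∀ t, T ≤ t → stf (seg I t) = s) (hL : {z | conjD s z} = L) : ExLearnsFrom M0 L I :=
  ⟨T, code s, by rw [W_code, hL], fun t ht => by rw [M0, hs t ht]⟩

theorem M0_empty : ExLearns M0 ∅ := by
  intro I hI
  refine learn_of ∅ I 0 (0, 0, 0) ?_ (by ext; simp [conjD])
  intro t _
  induction t with
  | zero => rfl
  | succ t ih =>
    rw [stf_succ, ih (Nat.zero_le _)]
    have : (I t).2 = false := by
      have := hI.1 t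
      simpa using this
    simp [upd, this]

def mu (s : LState) : ℕ :=
  if s.2.1 = 0 then 0 else s.2.1 + (if s.2.2 = 0 then 0 else stt s.1 s.2.2 + 1)

theorem upd_mu (s : LState) (d : Datum) : upd s d = s ∨ mu s < mu (upd s d) := by
  unfold upd
  split_ifs with h1 h2 h3 h4 h5 h6 h7 h8
  · right; simp [mu, h1]
  · right; simp [mu, h1]
  · left; rfl
  · right
    have hz : d.1 ≠ 0 := by
      intro h; rw [h] at h5; simp at h5
    simp only [mu, h1, hz, if_false]
    rcases h6.2.2 with h | h
    · simp [h]
    · split_ifs <;> omega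
  · left; rfl
  · right; simp [mu, h7.2]
  · right; simp [mu, h7.2]
  · left; rfl
  · left; rfl

theorem upd_two (s : LState) (d : Datum) (h : s.2.1 = 2) : upd s d = s := by
  simp [upd, h]

theorem ev_const (f : ℕ → LState) (B : ℕ) (hB : ∀ t, mu (f t) ≤ B)
    (hf : ∀ t, f (t + 1) = f t ∨ mu (f t) < mu (f (t + 1))) :
    ∃ T, ∀ t, T ≤ t → f t = f T := by
  classical
  have hex : ∃ B, ∀ t, mu (f t) ≤ B := ⟨B, hB⟩
  have hle : ∀ t, mu (f t) ≤ mu (f (t + 1)) := fun t => by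
    rcases hf t with h | h
    · rw [h]
    · omega
  have hmono : Monotone (fun t => mu (f t)) := monotone_nat_of_le_succ hle
  obtain ⟨T, hT⟩ : ∃ T, ∀ t, mu (f t) ≤ mu (f T) := by
    have h1 := Nat.find_spec hex
    cases hN : Nat.find hex with
    | zero => rw [hN] at h1; exact ⟨0, fun t => (h1 t).trans (Nat.zero_le _)⟩
    | succ m =>
      rw [hN] at h1
      have h2 : ¬ ∀ t, mu (f t) ≤ m := Nat.find_min hex (by omega)
      push Not at h2
      obtain ⟨T, hT⟩ := h2
      exact ⟨T, fun t => (h1 t).trans (by omega)⟩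
  refine ⟨T, fun t ht => ?_⟩
  induction t, ht using Nat.le_induction with
  | base => rfl
  | succ t ht ih =>
    rcases hf t with h | h
    · rw [h, ih]
    · have h1 := hT (t + 1)
      have h2 : mu (f T) ≤ mu (f t) := hmono ht
      omega
theorem late (I : ℕ → Datum) (L : Set ℕ) (hI : IsInformant L I) (T : ℕ) :
    ∃ N, ∀ a, N ≤ a → ∃ t, T ≤ t ∧ (I t).1 = a := by
  obtain ⟨N, hN⟩ : ∃ N, ∀ t < T, (I t).1 < N := by
    refine ⟨(Finset.range T).sup (fun t => (I t).1 + 1), fun t ht => ?_⟩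
    have := Finset.le_sup (f := fun t => (I t).1 + 1) (Finset.mem_range.2 ht)
    omega
  refine ⟨N, fun a ha => ?_⟩
  obtain ⟨t, ht⟩ := hI.2 a
  refine ⟨t, ?_, ht⟩
  by_contra h
  have h1 := hN t (by omega)
  simp only at ht
  omega

theorem M0_Ln (n : ℕ) : ExLearns M0 (Ln n) := by
  intro I hI
  set f : ℕ → LState := fun t => stf (seg I t) with hf
  have hf0 : f 0 = (0, 0, 0) := rfl
  have hfs : ∀ t, f (t + 1) = upd (f t) (I t) := stf_succ I
  have inv : ∀ t, f t = (0, 0, 0) ∨ ((f t).1 = n ∧ ((f t).2.1 = 1 ∨ (f t).2.1 = 2)) := by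
    intro t
    induction t with
    | zero => left; rfl
    | succ t ih =>
      rw [hfs]
      have hl := hI.1 t
      rcases ih with h | ⟨h1, h2⟩
      · rw [h]
        by_cases hp : (I t).2 = true
        · have := hl.1 hp
          right
          simp [upd, hp, this.1, this.2]
        · left; simp [upd, hp]
      · right
        have h3 : (f t).2.1 ≠ 0 := by omega
        unfold upd
        rw [if_neg h3]
        split_ifs with h4 h5 h6 h7 h8
        · exact ⟨h1, h2⟩
        · exact ⟨h1, h2⟩
        · exact absurd (hl.1 h8).2 h5
        · exact ⟨h1, Or.inr rfl⟩
        · exact ⟨h1, h2⟩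
        · exact ⟨h1, h2⟩
  have nz : ∃ T, ∀ t, T ≤ t → (f t).1 = n ∧ ((f t).2.1 = 1 ∨ (f t).2.1 = 2) := by
    obtain ⟨T, hT⟩ := hI.2 (Nat.pair n 1)
    simp only at hT
    have hp : (I T).2 = true := (hI.1 T).2 (by rw [hT]; simp [Ln])
    refine ⟨T + 1, fun t ht => ?_⟩
    induction t, ht using Nat.le_induction with
    | base =>
      rcases inv (T + 1) with h | h
      · exfalso
        rw [hfs] at h
        rcases inv T with h' | h'
        · rw [h'] at h
          simp only [upd, hp, if_true] at h
          split_ifs at h <;> simp at h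
        · rcases upd_mu (f T) (I T) with h2 | h2
          · rw [h2] at h; rw [h] at h'; simp at h'
          · rw [h] at h2; simp [mu] at h2
      · exact h
    | succ t ht ih =>
      rcases inv (t + 1) with h | h
      · exfalso
        rw [hfs] at h
        rcases upd_mu (f t) (I t) with h2 | h2
        · rw [h2] at h; rw [h] at ih; simp at ih
        · rw [h] at h2; simp [mu] at h2
      · exact h
  have conv : ∃ T, ∀ t, T ≤ t → f t = f T := by
    by_cases hub : ∀ N, ∃ x, N ≤ stt n x
    · obtain ⟨T, hT⟩ := nz
      obtain ⟨N, hN⟩ := late I _ hI T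
      obtain ⟨x, a, ha, haN⟩ := AA_unbounded n hub N
      obtain ⟨t, ht, hta⟩ := hN a haN
      have h1 := hT t ht
      have h2 : (f (t + 1)).2.1 = 2 := by
        rcases h1 with ⟨h1, h2 | h2⟩
        · have hneg : (I t).2 = false := by
            have := hI.1 t
            rw [hta] at this
            have h3 := AA_not_Ln ha
            by_contra hc
            simp at hc
            exact h3 (this.1 hc)
          have hc := AA_col n x a ha
          have hfr := fresh n x a ha
          rw [hfs]
          simp [upd, h2, h1, hta, hc.1, hc.2, hneg, hfr]
        · rw [hfs, upd_two _ _ h2, h2]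
      refine ⟨t + 1, fun t' ht' => ?_⟩
      induction t', ht' using Nat.le_induction with
      | base => rfl
      | succ t' ht' ih => rw [hfs, ih, upd_two _ _ h2]
    · push Not at hub
      obtain ⟨N, hN⟩ := hub
      refine ev_const f (2 + N + 1) (fun t => ?_) (fun t => by rw [hfs]; exact upd_mu _ _)
      rcases inv t with h | ⟨h1, h2⟩
      · rw [h]; simp [mu]
      · unfold mu
        rw [h1]
        have := hN (f t).2.2
        split_ifs <;> omega
  obtain ⟨T, hT⟩ := conv
  obtain ⟨T', hT'⟩ := nz
  refine learn_of _ I (max T T') (f T) (fun t ht => hT t (le_trans (le_max_left _ _) ht)) ?_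
  have h := hT' (max T T') (le_max_right _ _)
  rw [hT _ (le_max_left _ _)] at h
  ext z
  have h3 : (f T).2.1 ≠ 3 := by omega
  simp [conjD, h.1, h.2, h3]

theorem M0_Lp (n b : ℕ) (hg : good n b) : ExLearns M0 (Lp n b) := by
  intro I hI
  set f : ℕ → LState := fun t => stf (seg I t) with hf
  have hf0 : f 0 = (0, 0, 0) := rfl
  have hfs : ∀ t, f (t + 1) = upd (f t) (I t) := stf_succ I
  obtain ⟨hbL, hodd, hst⟩ := hg
  have hcol : ∀ z ∈ Lp n b, z.unpair.1 = n := by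
    rintro z (h | h | h)
    · exact (AA_col n b z h).1
    · exact h.1.1
    · rw [h]; exact hbL.1
  have hAin : ∀ z, z ∈ AA n z → z ∈ AA n b := by
    intro z hz
    rcases le_total z b with h | h
    · exact AA_mono n h hz
    · rw [AA, hst z h] at hz; exact hz
  have inv : ∀ t, f t = (0, 0, 0) ∨ ((f t).1 = n ∧ ((f t).2.1 = 1 ∨ (f t).2.1 = 3) ∧
      ((f t).2.2 = 0 ∨ (f t).2.2 ∈ Lp n b ∩ Ln n)) := by
    intro t
    induction t with
    | zero => left; rfl
    | succ t ih =>
      rw [hfs]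
      have hl := hI.1 t
      rcases ih with h | ⟨h1, h2, h2'⟩
      · rw [h]
        by_cases hp : (I t).2 = true
        · have hm := hl.1 hp
          have hc := hcol _ hm
          right
          by_cases ho : (I t).1.unpair.2 % 2 = 1
          · simp only [upd, hp, ho, if_true]
            exact ⟨hc, by simp, Or.inr ⟨hm, hc, ho⟩⟩
          · simp only [upd, hp, ho, if_true, if_false]
            exact ⟨hc, by simp, by simp⟩
        · left; simp [upd, hp]
      · right
        have h3 : (f t).2.1 ≠ 0 := by omega
        unfold upd
        rw [if_neg h3]
        split_ifs with h4 h5 h6 h7 h8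
        · exact ⟨h1, h2, Or.inr ⟨hl.1 h6.1, h4.trans h1, h5⟩⟩
        · exact ⟨h1, h2, h2'⟩
        · exact ⟨h1, Or.inr rfl, h2'⟩
        · exfalso
          rw [h1] at h7
          exact h8 (hl.2 (Or.inl (hAin _ h7.1)))
        · exact ⟨h1, h2, h2'⟩
        · exact ⟨h1, h2, h2'⟩
  have e3 : ∃ T, ∀ t, T ≤ t → (f t).2.1 = 3 := by
    obtain ⟨T, hT⟩ := hI.2 (Nat.pair n 0)
    simp only at hT
    have hp : (I T).2 = true := (hI.1 T).2 (by rw [hT]; exact Or.inl (AA_zero n b))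
    refine ⟨T + 1, fun t ht => ?_⟩
    induction t, ht using Nat.le_induction with
    | base =>
      rw [hfs]
      rcases inv T with h | ⟨h1, h2 | h2, -⟩
      · rw [h]; simp [upd, hp, hT]
      · have := AA_zero n (Nat.pair n 0)
        simp [upd, hp, hT, h1, h2, this]
      · simp only [upd, h2, hT, h1]
        simp [h2]
    | succ t ht ih =>
      rw [hfs]
      unfold upd
      simp only [ih]
      split_ifs <;> simp_all
  have eb : ∃ T, ∀ t, T ≤ t → (f t).2.1 ≠ 0 ∧ (f t).2.2 ≠ 0 ∧ stt n b ≤ stt n (f t).2.2 := by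
    obtain ⟨T, hT⟩ := hI.2 b
    simp only at hT
    have hp : (I T).2 = true := (hI.1 T).2 (by rw [hT]; exact Or.inr (Or.inr rfl))
    have hb0 : b ≠ 0 := by
      intro h; have := hbL.2; rw [h] at this; simp at this
    refine ⟨T + 1, fun t ht => ?_⟩
    induction t, ht using Nat.le_induction with
    | base =>
      rw [hfs]
      rcases inv T with h | ⟨h1, h2, -⟩
      · rw [h]; simp [upd, hp, hT, hbL.2, hb0]
      · have h3 : (f T).2.1 ≠ 0 := by omega
        have h4 : (f T).2.1 ≠ 2 := by omega
        unfold upd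
        rw [if_neg h3, hT, h1, if_pos hbL.1, if_pos hbL.2]
        split_ifs with h5
        · exact ⟨h3, hb0, le_rfl⟩
        · push Not at h5
          have := h5 hp h4
          exact ⟨h3, this⟩
    | succ t ht ih =>
      rw [hfs]
      rcases inv t with h | ⟨h1, h2, -⟩
      · rw [h] at ih; simp at ih
      · unfold upd
        rw [if_neg ih.1, h1]
        split_ifs with h4 h5 h6 h7 h8
        · refine ⟨ih.1, ?_, ?_⟩
          · intro h; simp only at h; rw [h] at h5; simp at h5
          · rcases h6.2.2 with h | h
            · exact absurd h ih.2.1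
            · exact ih.2.2.trans h.le
        · exact ih
        · exact ⟨by simp, ih.2⟩
        · exact ⟨by simp, ih.2⟩
        · exact ih
        · exact ih
  obtain ⟨T1, h1⟩ := e3
  obtain ⟨T2, h2⟩ := eb
  refine learn_of _ I (max T1 T2) (n, 3, b) (fun t ht => ?_) ?_
  · have a1 := h1 t (le_trans (le_max_left _ _) ht)
    have a2 := h2 t (le_trans (le_max_right _ _) ht)
    show f t = _
    rcases inv t with h | ⟨b1, b2, b3⟩
    · rw [h] at a1; simp at a1
    · have : (f t).2.2 = b := by
        rcases b3 with h | ⟨h | h | h, h'⟩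
        · exact absurd h a2.2.1
        · exact absurd h' (AA_not_Ln h)
        · have := (uu_mem n b _ h.2).2.2
          omega
        · exact h
      exact Prod.ext b1 (Prod.ext a1 this)
  · ext z; simp [conjD]

theorem cls_ItInfEx : ItInfEx cls := by
  refine ⟨M0, M0_partrec, M0_iter, ?_⟩
  rintro L (rfl | ⟨n, rfl⟩ | ⟨n, b, hg, rfl⟩)
  · exact M0_empty
  · exact M0_Ln n
  · exact M0_Lp n b hg
/-! ### general facts on iterative learners -/

theorem it_congr {M : List Datum →. ℕ} (hM : Iterative M) {σ σ' : List Datum} (h : M σ = M σ')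
    (ρ : List Datum) : M (σ ++ ρ) = M (σ' ++ ρ) := by
  obtain ⟨g, -, hg⟩ := hM
  induction ρ using List.reverseRecOn with
  | nil => simpa using h
  | append_singleton ρ x ih =>
    rw [← List.append_assoc, ← List.append_assoc, hg, hg, ih]

theorem it_dom {M : List Datum →. ℕ} (hM : Iterative M) {σ ρ : List Datum}
    (h : (M (σ ++ ρ)).Dom) : (M σ).Dom := by
  obtain ⟨g, -, hg⟩ := hM
  induction ρ using List.reverseRecOn with
  | nil => simpa using h
  | append_singleton ρ x ih =>
    rw [← List.append_assoc, hg] at h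
    exact ih h.1

def ext (σ : List Datum) (f : ℕ → Datum) : ℕ → Datum := fun t =>
  if h : t < σ.length then σ[t] else f (t - σ.length)

theorem seg_length (I : ℕ → Datum) (t : ℕ) : (seg I t).length = t := by simp [seg]

theorem seg_succ (I : ℕ → Datum) (t : ℕ) : seg I (t + 1) = seg I t ++ [I t] := by
  simp [seg, List.range_succ]

theorem mem_seg {I : ℕ → Datum} {t : ℕ} {d : Datum} : d ∈ seg I t ↔ ∃ i < t, I i = d := by
  simp [seg]

theorem seg_ext (σ : List Datum) (f : ℕ → Datum) (k : ℕ) :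
    seg (ext σ f) (σ.length + k) = σ ++ seg f k := by
  induction k with
  | zero =>
    refine List.ext_getElem (by simp [seg]) ?_
    intro i h1 h2
    simp [seg] at h1 h2
    simp [seg, ext, h2]
  | succ k ih =>
    rw [← Nat.add_assoc, seg_succ, ih, seg_succ, List.append_assoc]
    simp [ext]

theorem seg_ext' (σ : List Datum) (f : ℕ → Datum) :
    seg (ext σ f) σ.length = σ := by
  have := seg_ext σ f 0
  simpa [seg] using this

theorem prefix_seg {I : ℕ → Datum} {t : ℕ} {p : List Datum} (h : p <+: seg I t) :
    p = seg I p.length := by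
  induction t with
  | zero =>
    have : p = [] := by simpa [seg] using h
    subst this; rfl
  | succ t ih =>
    rw [seg_succ, List.prefix_concat_iff] at h
    rcases h with h | h
    · rw [h, List.length_append, seg_length]; simp [seg_succ]
    · exact ih h

/-- a list of data is correctly labelled for `L` -/
def okl (L : Set ℕ) (σ : List Datum) : Prop := ∀ d ∈ σ, (d.2 = true ↔ d.1 ∈ L)

theorem okl_append {L : Set ℕ} {σ τ : List Datum} (h1 : okl L σ) (h2 : okl L τ) :
    okl L (σ ++ τ) := by
  intro d hd
  rcases List.mem_append.1 hd with h | h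
  · exact h1 d h
  · exact h2 d h

theorem okl_single {L : Set ℕ} {d : Datum} (h : d.2 = true ↔ d.1 ∈ L) : okl L [d] := by
  intro d' hd
  rw [List.mem_singleton] at hd
  subst hd; exact h

theorem okl_seg {L : Set ℕ} {f : ℕ → Datum} (h : ∀ t, (f t).2 = true ↔ (f t).1 ∈ L) (k : ℕ) :
    okl L (seg f k) := by
  intro d hd
  obtain ⟨i, _, rfl⟩ := mem_seg.1 hd
  exact h i

theorem ext_informant {L : Set ℕ} {σ : List Datum} {f : ℕ → Datum} (h1 : okl L σ)
    (h2 : ∀ t, (f t).2 = true ↔ (f t).1 ∈ L)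
    (h3 : ∀ z, (∃ d ∈ σ, d.1 = z) ∨ ∃ t, (f t).1 = z) : IsInformant L (ext σ f) := by
  constructor
  · intro t
    unfold ext
    split_ifs with h
    · exact h1 _ (List.getElem_mem h)
    · exact h2 _
  · intro z
    rcases h3 z with ⟨d, hd, rfl⟩ | ⟨t, rfl⟩
    · obtain ⟨i, hi, rfl⟩ := List.getElem_of_mem hd
      exact ⟨i, by simp [ext, hi]⟩
    · exact ⟨σ.length + t, by simp [ext]⟩

theorem conv_ext {M : List Datum →. ℕ} {L : Set ℕ} (hL : ExLearns M L)
    {σ : List Datum} {f : ℕ → Datum} (hI : IsInformant L (ext σ f)) :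
    ∃ K e, W e = L ∧ ∀ k, K ≤ k → M (σ ++ seg f k) = Part.some e := by
  obtain ⟨T, e, he, h⟩ := hL _ hI
  refine ⟨T, e, he, fun k hk => ?_⟩
  rw [← seg_ext]
  exact h _ (by omega)

theorem dom_of_okl {M : List Datum →. ℕ} (hM : Iterative M) {L : Set ℕ} (hL : ExLearns M L)
    {σ : List Datum} (h : okl L σ) : (M σ).Dom := by
  classical
  obtain ⟨K, e, -, hK⟩ := conv_ext (σ := σ) (f := fun z => (z, decide (z ∈ L))) hL
    (ext_informant h (by simp) (fun z => Or.inr ⟨z, rfl⟩))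
  refine it_dom hM (ρ := seg (fun z => (z, decide (z ∈ L))) K) ?_
  rw [hK K le_rfl]
  trivial

theorem chain (g : ℕ → List Datum) (hm : ∀ x y, x ≤ y → g x <+: g y)
    (hl : ∀ N, ∃ x, N < (g x).length) : ∃ I : ℕ → Datum, ∀ x, seg I (g x).length = g x := by
  choose X hX using hl
  refine ⟨fun t => (g (X t))[t]'(hX t), fun x => ?_⟩
  refine List.ext_getElem (by simp [seg]) ?_
  intro i h1 h2
  simp only [seg, List.getElem_map, List.getElem_range]
  rcases le_total x (X i) with h | h
  · exact ((hm _ _ h).getElem h2).symm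
  · exact (hm _ _ h).getElem (hX i)

/-! ### the diagonalization -/

def neg (x : ℕ) : Datum := (x, false)

theorem code_for {M : List Datum →. ℕ} (hM : Partrec M) (σ0 : List Datum) :
    ∃ c : Code, ∀ n (l : List ℕ),
      c.eval (Nat.pair n (Encodable.encode l)) = M (σ0 ++ l.map (lab n)) := by
  have h1 : Primrec (fun m : ℕ =>
      σ0 ++ (Denumerable.ofNat (List ℕ) m.unpair.2).map (lab m.unpair.1)) := by
    refine Primrec.list_append.comp (Primrec.const σ0) (Primrec.list_map
      ((Primrec.ofNat (List ℕ)).comp (Primrec.snd.comp Primrec.unpair)) ?_)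
    exact Primrec.to₂ (lab_prim (Primrec.fst.comp (Primrec.unpair.comp Primrec.fst)) Primrec.snd)
  obtain ⟨c, hc⟩ := Code.exists_code.1 (Partrec.nat_iff.1 (hM.comp h1.to_comp))
  refine ⟨c, fun n l => ?_⟩
  rw [hc]
  simp

structure Setup (M : List Datum →. ℕ) (n t0 : ℕ) : Prop where
  it : Iterative M
  hn : t0 ≤ n
  ign : ∀ x, t0 ≤ x → M (seg neg t0 ++ [(x, false)]) = M (seg neg t0)
  ev : ∀ l : List ℕ, (Denumerable.ofNat Code n.unpair.1).eval (Nat.pair n (Encodable.encode l)) =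
    M (seg neg t0 ++ l.map (lab n))
  ex : ∀ L ∈ cls, ExLearns M L

theorem setup_exists {M : List Datum →. ℕ} (hP : Partrec M) (hit : Iterative M)
    (hex : ∀ L ∈ cls, ExLearns M L) : ∃ n t0, Setup M n t0 := by
  have hI : IsInformant ∅ neg := ⟨fun t => by simp [neg], fun z => ⟨z, rfl⟩⟩
  obtain ⟨t0, e, -, h⟩ := hex ∅ (Or.inl rfl) neg hI
  obtain ⟨c, hc⟩ := code_for hP (seg neg t0)
  refine ⟨Nat.pair (Encodable.encode c) t0, t0, hit, Nat.right_le_pair _ _, ?_, ?_, hex⟩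
  · intro x hx
    have h1 : M (seg neg t0) = M (seg neg x) := by rw [h t0 le_rfl, h x hx]
    have h2 := it_congr hit h1 [(x, false)]
    rw [h2, h t0 le_rfl]
    have h3 : seg neg x ++ [(x, false)] = seg neg (x + 1) := by rw [seg_succ]; rfl
    rw [h3, h _ (by omega)]
  · intro l
    simp only [Nat.unpair_pair, Denumerable.ofNat_encode]
    exact hc _ l


theorem ev_some {M : List Datum →. ℕ} {n t0 : ℕ} (hS : Setup M n t0)
    {k : ℕ} {l : List ℕ} {e : ℕ} (h : ev n k l = some e) :
    M (seg neg t0 ++ l.map (lab n)) = Part.some e := by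
  rw [← hS.ev, Part.eq_some_iff]
  exact Code.evaln_sound h

theorem some_ev {M : List Datum →. ℕ} {n t0 : ℕ} (hS : Setup M n t0)
    {l : List ℕ} {e : ℕ} (h : M (seg neg t0 ++ l.map (lab n)) = Part.some e) :
    ∃ k0, ∀ k, k0 ≤ k → ev n k l = some e := by
  rw [← hS.ev, Part.eq_some_iff] at h
  obtain ⟨k0, hk⟩ := Code.evaln_complete.1 h
  exact ⟨k0, fun k hk' => Code.evaln_mono hk' hk⟩

theorem ign_list {M : List Datum →. ℕ} {n t0 : ℕ} (hS : Setup M n t0)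
    (ρ : List Datum) (h : ∀ d ∈ ρ, t0 ≤ d.1 ∧ d.2 = false) :
    M (seg neg t0 ++ ρ) = M (seg neg t0) := by
  induction ρ with
  | nil => simp
  | cons d ρ ih =>
    have h1 := h d List.mem_cons_self
    have h2 : d = (d.1, false) := Prod.ext rfl h1.2
    have h3 : M (seg neg t0 ++ [d]) = M (seg neg t0) := by rw [h2]; exact hS.ign _ h1.1
    have h4 := it_congr hS.it h3 ρ
    rw [List.append_assoc, List.singleton_append] at h4
    rw [h4]
    exact ih (fun d hd => h d (List.mem_cons_of_mem _ hd))

theorem col_ge {n : ℕ} {z : ℕ} (h : z.unpair.1 = n) : n ≤ z := h ▸ Nat.unpair_left_le z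

theorem seg_okl {M : List Datum →. ℕ} {n t0 : ℕ} (hS : Setup M n t0)
    {L : Set ℕ} (hL : ∀ z ∈ L, z.unpair.1 = n) : okl L (seg neg t0) := by
  intro d hd
  obtain ⟨i, hi, rfl⟩ := mem_seg.1 hd
  simp only [neg, Bool.false_eq_true, false_iff]
  intro h
  have h1 := col_ge (hL i h)
  have h2 := hS.hn
  omega

theorem lab_okl {n : ℕ} (l : List ℕ) : okl (Ln n) (l.map (lab n)) := by
  intro d hd
  obtain ⟨z, _, rfl⟩ := List.mem_map.1 hd
  simp [lab]

theorem base_okl {M : List Datum →. ℕ} {n t0 : ℕ} (hS : Setup M n t0)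
    (l : List ℕ) : okl (Ln n) (seg neg t0 ++ l.map (lab n)) :=
  okl_append (seg_okl hS fun _ h => h.1) (lab_okl l)

theorem Ln_cls {n : ℕ} : Ln n ∈ cls := Or.inr (Or.inl ⟨n, rfl⟩)

theorem Q_some {M : List Datum →. ℕ} {n t0 : ℕ} (hS : Setup M n t0)
    (l : List ℕ) : ∃ e, M (seg neg t0 ++ l.map (lab n)) = Part.some e := by
  have h := dom_of_okl hS.it (hS.ex _ Ln_cls) (base_okl hS l)
  exact ⟨_, Part.eq_some_iff.2 (Part.get_mem h)⟩

theorem Q_congr {M : List Datum →. ℕ} {n t0 : ℕ} (hS : Setup M n t0)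
    {l l' : List ℕ} (h : M (seg neg t0 ++ l.map (lab n)) = M (seg neg t0 ++ l'.map (lab n)))
    (r : List ℕ) :
    M (seg neg t0 ++ (l ++ r).map (lab n)) = M (seg neg t0 ++ (l' ++ r).map (lab n)) := by
  rw [List.map_append, List.map_append, ← List.append_assoc, ← List.append_assoc]
  exact it_congr hS.it h _

theorem Q_inv {M : List Datum →. ℕ} {n t0 : ℕ} (hS : Setup M n t0)
    (x : ℕ) : M (seg neg t0 ++ (vv n x).map (lab n)) =
    M (seg neg t0 ++ (uu n x).map (lab n)) := by
  induction x with
  | zero => rfl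
  | succ x ih =>
    rcases St_cases n x with h | ⟨_, hc, h⟩ | ⟨_, _, h⟩
    · rw [vv, uu, h]; exact ih
    · have h3 : vv n (x + 1) = vv n x ++ (getl x (AA n x) ++ [(AA n x).headI]) := by rw [vv, h]; rfl
      have h4 : uu n (x + 1) = uu n x ++ getl x (AA n x) := by rw [uu, h]; rfl
      rw [h3, h4, Q_congr hS ih]
      obtain ⟨h5, h6⟩ := hc
      obtain ⟨e, he⟩ := Option.ne_none_iff_exists'.1 h5
      rw [he] at h6
      rw [ev_some hS he, ← List.append_assoc, ev_some hS h6.symm]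
    · have h3 : vv n (x + 1) = vv n x ++ (getl x (AA n x) ++ flt x (AA n x) (List.range x)) := by
        rw [vv, h]; rfl
      have h4 : uu n (x + 1) = uu n x ++ (getl x (AA n x) ++ flt x (AA n x) (List.range x)) := by
        rw [uu, h]; rfl
      rw [h3, h4, Q_congr hS ih]
theorem case_a {M : List Datum →. ℕ} {n t0 : ℕ} (hS : Setup M n t0)
    (hub : ∀ N, ∃ x, N ≤ stt n x) : False := by
  set g : ℕ → List Datum := fun x => seg neg t0 ++ (vv n x).map (lab n) with hg
  have hm : ∀ x y, x ≤ y → g x <+: g y := by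
    intro x y hxy
    exact (List.prefix_append_right_inj _).2 ((vv_mono n hxy).map _)
  have hlen : ∀ N, ∃ x, N < (vv n x).length := by
    have step : ∀ x, ∃ y, (vv n x).length < (vv n y).length := by
      intro x
      obtain ⟨y, hy, h1, h2⟩ := stt_trans n hub x 0 (by omega)
      refine ⟨y + 1, ?_⟩
      have hle := (vv_mono n hy).length_le
      rcases St_cases n y with h | ⟨_, _, h⟩ | ⟨h', _, h⟩
      · have : stt n (y + 1) = stt n y := by rw [stt, h]
        omega
      · have h3 : vv n (y + 1) = vv n y ++ (getl y (AA n y) ++ [(AA n y).headI]) := by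
          rw [vv, h]; rfl
        rw [h3]
        simp only [List.length_append, List.length_singleton]
        omega
      · omega
    intro N
    induction N with
    | zero => obtain ⟨y, hy⟩ := step 0; exact ⟨y, by omega⟩
    | succ N ih =>
      obtain ⟨x, hx⟩ := ih
      obtain ⟨y, hy⟩ := step x
      exact ⟨y, by omega⟩
  have hlen' : ∀ N, ∃ x, N < (g x).length := fun N => by
    obtain ⟨x, hx⟩ := hlen N
    refine ⟨x, ?_⟩
    simp only [hg, List.length_append, List.length_map]
    omega
  obtain ⟨I, hI⟩ := chain g hm hlen'
  have hinf : IsInformant (Ln n) I := by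
    constructor
    · intro t
      obtain ⟨x, hx⟩ := hlen' t
      have : I t ∈ g x := by rw [← hI x]; exact mem_seg.2 ⟨t, hx, rfl⟩
      exact base_okl hS (vv n x) _ this
    · intro z
      have hz : ∃ x, z ∈ vv n x := by
        obtain ⟨x, hx, h1, h2⟩ := stt_trans n hub (z + 1) 1 (by omega)
        by_cases hA : z ∈ AA n x
        · exact ⟨x, (vv_cover n x).2 h1 z hA⟩
        · refine ⟨x + 1, ?_⟩
          rcases St_cases n x with h | ⟨h', _, h⟩ | ⟨_, _, h⟩
          · have : stt n (x + 1) = stt n x := by rw [stt, h]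
            omega
          · omega
          · have h3 : vv n (x + 1) =
                vv n x ++ (getl x (AA n x) ++ flt x (AA n x) (List.range x)) := by
              rw [vv, h]; rfl
            have h4 : z ∈ flt x (AA n x) (List.range x) :=
              mem_flt.2 ⟨List.mem_range.2 (by omega), by omega, hA⟩
            rw [h3]
            exact List.mem_append_right _ (List.mem_append_right _ h4)
      obtain ⟨x, hx⟩ := hz
      have h1 : lab n z ∈ g x := List.mem_append_right _ (List.mem_map_of_mem hx)
      rw [← hI x] at h1
      obtain ⟨i, _, hi⟩ := mem_seg.1 h1
      exact ⟨i, by simp only [hi]; rfl⟩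
  obtain ⟨T, e, -, hT⟩ := hS.ex _ Ln_cls I hinf
  obtain ⟨x0, hx0⟩ := hlen' T
  obtain ⟨x, hx, h1, h2⟩ := stt_trans n hub x0 1 (by omega)
  have hxl : T < (g x).length := lt_of_lt_of_le hx0 (hm _ _ hx).length_le
  rcases St_cases n x with h | ⟨h', _, h⟩ | ⟨_, hc, h⟩
  · have : stt n (x + 1) = stt n x := by rw [stt, h]
    omega
  · omega
  · have h3 : vv n (x + 1) =
        vv n x ++ (getl x (AA n x) ++ flt x (AA n x) (List.range x)) := by
      rw [vv, h]; rfl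
    obtain ⟨c1, c2, c3⟩ := hc
    obtain ⟨p, hp⟩ := Option.ne_none_iff_exists'.1 c1
    obtain ⟨q, hq⟩ := Option.ne_none_iff_exists'.1 c2
    have hpq : p ≠ q := by
      rintro rfl
      exact c3 (by rw [hp, hq])
    have k1 : M (g x) = Part.some p := (Q_inv hS x).trans (ev_some hS hp)
    have k2 : M (g x) = Part.some e := by rw [← hI x]; exact hT _ hxl.le
    have k3 : M (seg neg t0 ++ (vv n x ++ getl x (AA n x)).map (lab n)) = Part.some q :=
      (Q_congr hS (Q_inv hS x) _).trans (ev_some hS hq)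
    have k4 : seg neg t0 ++ (vv n x ++ getl x (AA n x)).map (lab n) <+: g (x + 1) := by
      refine (List.prefix_append_right_inj _).2 (List.IsPrefix.map _ ?_)
      rw [h3, ← List.append_assoc]
      exact List.prefix_append _ _
    rw [← hI (x + 1)] at k4
    have k5 := prefix_seg k4
    rw [k5, hT] at k3
    · rw [k1] at k2
      have := Part.some_inj.1 k2
      have := Part.some_inj.1 k3
      omega
    · simp only [hg, List.length_append, List.length_map] at hxl ⊢
      omega

theorem case_b {M : List Datum →. ℕ} {n t0 : ℕ} (hS : Setup M n t0)
    (hsnu : ∀ L ∈ cls, ∀ I, IsInformant L I → SNUOn M I)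
    (s : ℕ) (hs : ∀ x, s ≤ x → St n x = St n s) (hev : stt n s % 2 = 0) : False := by
  set A := AA n s with hA
  set u := uu n s with hu
  set a := A.headI with ha
  have haA : a ∈ A := AA_head n s
  set nt : ℕ → ℕ := fun z => if z ∈ A then Nat.pair n 1 else z with hnt
  have ho : Nat.pair n 1 ∉ A := by
    intro h; have := (AA_col n s _ h).2; simp at this
  have hntA : ∀ z, nt z ∉ A := by
    intro z
    simp only [hnt]
    split_ifs with h
    · exact ho
    · exact h
  set f : ℕ → Datum := fun z => lab n (nt z) with hf
  have hfl : ∀ t, (f t).2 = true ↔ (f t).1 ∈ Ln n := by intro t; simp [hf, lab]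
  set pre := seg neg t0 ++ A.map (lab n) with hpre
  have hpreM : M pre = M (seg neg t0) := by
    refine ign_list hS _ ?_
    intro d hd
    obtain ⟨z, hz, rfl⟩ := List.mem_map.1 hd
    have h1 := col_ge (AA_col n s z hz).1
    have h2 := hS.hn
    refine ⟨by simp only [lab]; omega, ?_⟩
    simp only [lab]
    exact decide_eq_false (AA_not_Ln hz)
  have hpreQ : ∀ l : List ℕ, M (pre ++ l.map (lab n)) = M (seg neg t0 ++ l.map (lab n)) :=
    fun l => it_congr hS.it hpreM _
  have cover : ∀ z, (∃ d ∈ pre, d.1 = z) ∨ ∃ t, (f t).1 = z := by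
    intro z
    by_cases h : z ∈ A
    · exact Or.inl ⟨lab n z, List.mem_append_right _ (List.mem_map_of_mem h), rfl⟩
    · exact Or.inr ⟨z, by simp [hf, hnt, h, lab]⟩
  have hpok : okl (Ln n) pre := base_okl hS A
  have hinf1 : IsInformant (Ln n) (ext (pre ++ u.map (lab n)) f) := by
    refine ext_informant (okl_append hpok (lab_okl u)) hfl ?_
    intro z
    rcases cover z with ⟨d, hd, h⟩ | h
    · exact Or.inl ⟨d, List.mem_append_left _ hd, h⟩
    · exact Or.inr h
  obtain ⟨K, e, he, hK⟩ := conv_ext (hS.ex _ Ln_cls) hinf1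
  set l := (List.range K).map nt with hl
  have hlf : seg f K = l.map (lab n) := by simp [seg, hl, hf]
  have hK1 := hK K le_rfl
  rw [hlf] at hK1
  have hinf2 : IsInformant (Ln n) (ext (pre ++ u.map (lab n) ++ l.map (lab n) ++ [lab n a]) f) := by
    refine ext_informant (okl_append (okl_append (okl_append hpok (lab_okl u)) (lab_okl l))
      (okl_single (by simp [lab]))) hfl ?_
    intro z
    rcases cover z with ⟨d, hd, h⟩ | h
    · exact Or.inl ⟨d, List.mem_append_left _ (List.mem_append_left _ (List.mem_append_left _ hd)), h⟩
    · exact Or.inr h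
  set I2 := ext (pre ++ u.map (lab n) ++ l.map (lab n) ++ [lab n a]) f with hI2
  have hpos : posI I2 = Ln n := by
    ext z
    constructor
    · rintro ⟨t, ht⟩
      have := hinf2.1 t
      rw [ht] at this
      simpa using this
    · intro hz
      obtain ⟨t, ht⟩ := hinf2.2 z
      refine ⟨t, Prod.ext ht ?_⟩
      exact (hinf2.1 t).2 (by simp only at ht; rw [ht]; exact hz)
  obtain ⟨K2, e2, he2, hK2⟩ := conv_ext (hS.ex _ Ln_cls) hinf2
  have hmid : ∃ em, M (pre ++ u.map (lab n) ++ l.map (lab n) ++ [lab n a]) = Part.some em := by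
    have h := dom_of_okl hS.it (hS.ex _ Ln_cls)
      (okl_append (okl_append (okl_append hpok (lab_okl u)) (lab_okl l))
        (okl_single (L := Ln n) (d := lab n a) (by simp [lab])))
    exact ⟨_, Part.eq_some_iff.2 (Part.get_mem h)⟩
  obtain ⟨em, hem⟩ := hmid
  have hseg2 := seg_ext' (pre ++ u.map (lab n) ++ l.map (lab n) ++ [lab n a]) f
  have hseg1 : seg I2 (pre ++ u.map (lab n) ++ l.map (lab n)).length =
      pre ++ u.map (lab n) ++ l.map (lab n) := by
    symm
    apply prefix_seg (t := (pre ++ u.map (lab n) ++ l.map (lab n) ++ [lab n a]).length)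
    rw [hI2, hseg2]
    exact List.prefix_append _ _
  have hee : e = em := by
    refine hsnu _ Ln_cls I2 hinf2 (pre ++ u.map (lab n) ++ l.map (lab n)).length
      (pre ++ u.map (lab n) ++ l.map (lab n) ++ [lab n a]).length
      ((pre ++ u.map (lab n) ++ l.map (lab n) ++ [lab n a]).length + K2)
      (by simp) (by omega) e em e2 ?_ ?_ ?_ ?_ ?_
    · rw [hseg1]; exact hK1
    · rw [hI2, hseg2]; exact hem
    · rw [hI2, seg_ext]; exact hK2 _ le_rfl
    · rw [hpos, he]
    · rw [hpos, he2]
  subst hee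
  have q1 : M (seg neg t0 ++ (u ++ l).map (lab n)) = Part.some e := by
    rw [← hpreQ, List.map_append, ← List.append_assoc]; exact hK1
  have q2 : M (seg neg t0 ++ (u ++ l ++ [a]).map (lab n)) = Part.some e := by
    rw [← hpreQ, List.map_append, List.map_append, ← List.append_assoc, ← List.append_assoc]
    exact hem
  obtain ⟨k1, hk1⟩ := some_ev hS q1
  obtain ⟨k2, hk2⟩ := some_ev hS q2
  obtain ⟨B, hB⟩ : ∃ B, ∀ z ∈ l, z < B :=
    ⟨l.sum + 1, fun z hz => Nat.lt_succ_of_le (List.le_sum_of_mem hz)⟩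
  set k := s + k1 + k2 + B with hk
  set x := Nat.pair (Encodable.encode l) k with hx
  have hkx : k ≤ x := Nat.right_le_pair _ _
  have hSx : St n x = St n s := hs x (by omega)
  have hgl : getl x A = l := by
    simp only [getl, hx, Nat.unpair_pair, Denumerable.ofNat_encode]
    rw [flt, List.filter_eq_self]
    intro z hz
    have h1 := hB z hz
    have h2 : z ∉ A := by
      obtain ⟨y, _, rfl⟩ := List.mem_map.1 hz
      exact hntA y
    have h3 : z < Nat.pair (Encodable.encode l) k := by omega
    simp [h2, h3]
  have hc : cond0 n x (St n x) := by
    rw [hSx]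
    have e1 : ev n k (u ++ l) = some e := hk1 _ (by omega)
    have e2 : ev n k (u ++ l ++ [a]) = some e := hk2 _ (by omega)
    have hk' : x.unpair.2 = k := by simp [hx]
    show ev n x.unpair.2 (u ++ getl x A) ≠ none ∧
      ev n x.unpair.2 (u ++ getl x A) = ev n x.unpair.2 (u ++ getl x A ++ [a])
    rw [hgl, hk', e1, e2]
    simp
  have hS1 : St n (x + 1) = St n s := hs _ (by omega)
  have h0 : (St n x).1 % 2 = 0 := by rw [hSx]; exact hev
  rw [St, step, if_pos h0, if_pos hc, hSx] at hS1
  have := congrArg Prod.fst hS1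
  simp [tr0] at this

theorem case_c {M : List Datum →. ℕ} {n t0 : ℕ} (hS : Setup M n t0)
    (s : ℕ) (hs : ∀ x, s ≤ x → St n x = St n s) (hod : stt n s % 2 = 1) : False := by
  classical
  set A := AA n s with hA
  set u := uu n s with hu
  set base := seg neg t0 ++ u.map (lab n) with hbase
  have hig : ∀ b, b ∉ A → M (base ++ [lab n b]) = M base := by
    intro b hb
    obtain ⟨p, hp⟩ := Q_some hS u
    obtain ⟨q, hq⟩ := Q_some hS (u ++ [b])
    have goal : p = q := by
      by_contra hpq
      obtain ⟨k1, hk1⟩ := some_ev hS hp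
      obtain ⟨k2, hk2⟩ := some_ev hS hq
      set k := s + k1 + k2 + b + 1 with hk
      set x := Nat.pair (Encodable.encode [b]) k with hx
      have hkx : k ≤ x := Nat.right_le_pair _ _
      have hSx : St n x = St n s := hs x (by omega)
      have hgl : getl x A = [b] := by
        simp only [getl, hx, Nat.unpair_pair, Denumerable.ofNat_encode]
        have h3 : b < Nat.pair (Encodable.encode [b]) k := by omega
        rw [flt, List.filter_eq_self]
        intro z hz
        rw [List.mem_singleton] at hz
        subst hz
        simp only [hb, h3]; simp
      have hc : cond1 n x (St n x) := by
        rw [hSx]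
        have e1 : ev n k u = some p := hk1 _ (by omega)
        have e2 : ev n k (u ++ [b]) = some q := hk2 _ (by omega)
        have hk' : x.unpair.2 = k := by simp [hx]
        show ev n x.unpair.2 u ≠ none ∧ ev n x.unpair.2 (u ++ getl x A) ≠ none ∧
          ev n x.unpair.2 u ≠ ev n x.unpair.2 (u ++ getl x A)
        rw [hgl, hk', e1, e2]
        simp [hpq]
      have hS1 : St n (x + 1) = St n s := hs _ (by omega)
      have h0 : ¬ (St n x).1 % 2 = 0 := by
        rw [hSx]
        have : (St n s).1 % 2 = 1 := hod
        omega
      rw [St, step, if_neg h0, if_pos hc, hSx] at hS1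
      have := congrArg Prod.fst hS1
      simp [tr1] at this
    rw [hbase, hp, goal, ← hq, List.map_append, List.append_assoc]
    rfl
  have hig2 : ∀ b ∈ Ln n, M (base ++ [(b, true)]) = M base := by
    intro b hb
    have h1 : lab n b = (b, true) := by simp [lab, hb]
    rw [← h1]
    exact hig b (fun h => AA_not_Ln h hb)
  set core : Set ℕ := {z | z ∈ A ∨ (z ∈ Ln n ∧ z ∈ u)} with hcore
  have hLp : ∀ b, s ≤ b → ∀ z, z ∈ Lp n b ↔ (z ∈ core ∨ z = b) := by
    intro b hb z
    show (z ∈ AA n b ∨ (z ∈ Ln n ∧ z ∈ uu n b) ∨ z = b) ↔ _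
    rw [AA, uu, hs b hb]
    show _ ↔ ((z ∈ AA n s ∨ (z ∈ Ln n ∧ z ∈ uu n s)) ∨ z = b)
    tauto
  have hcls : ∀ b, s ≤ b → b ∈ Ln n → Lp n b ∈ cls := by
    intro b hb hbL
    refine Or.inr (Or.inr ⟨n, b, ⟨hbL, ?_, fun x hx => ?_⟩, rfl⟩)
    · rw [stt, hs b hb]; exact hod
    · rw [hs b hb, hs x (by omega)]
  have hcol : ∀ b, s ≤ b → b ∈ Ln n → ∀ z ∈ Lp n b, z.unpair.1 = n := by
    intro b hb hbL z hz
    rcases (hLp b hb z).1 hz with (h | h) | h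
    · exact (AA_col n s z h).1
    · exact h.1.1
    · rw [h]; exact hbL.1
  have hbok : ∀ b, s ≤ b → b ∈ Ln n → okl (Lp n b) base := by
    intro b hb hbL
    refine okl_append (seg_okl hS (hcol b hb hbL)) ?_
    intro d hd
    obtain ⟨z, hz, rfl⟩ := List.mem_map.1 hd
    simp only [lab, decide_eq_true_eq]
    rw [hLp b hb]
    constructor
    · intro h; exact Or.inl (Or.inr ⟨h, hz⟩)
    · rintro ((h | h) | h)
      · exact absurd h (uu_mem n s z hz).2.1
      · exact h.1
      · rw [h]; exact hbL
  set a0 := Nat.pair n 0 with ha0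
  have ha0c : a0 ∈ core := Or.inl (AA_zero n s)
  set tl : Finset ℕ → ℕ → Datum := fun D z =>
    if z ∈ D then (a0, true) else (z, decide (z ∈ core)) with htl
  have tl_ok : ∀ D b, s ≤ b → b ∈ D → ∀ t, (tl D t).2 = true ↔ (tl D t).1 ∈ Lp n b := by
    intro D b hb hbD t
    rw [hLp b hb]
    simp only [htl]
    split_ifs with h
    · simp [ha0c]
    · have : t ≠ b := by rintro rfl; exact h hbD
      simp [this]
  have tl_cov : ∀ D : Finset ℕ, ∀ z, z ∈ D ∨ ∃ t, (tl D t).1 = z := by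
    intro D z
    by_cases h : z ∈ D
    · exact Or.inl h
    · exact Or.inr ⟨z, by simp [htl, h]⟩
  have odd_mem : ∀ m, Nat.pair n (2 * m + 1) ∈ Ln n := by
    intro m
    refine ⟨by simp, ?_⟩
    simp only [Nat.unpair_pair]
    omega
  have odd_ge : ∀ m, m ≤ Nat.pair n (2 * m + 1) := by
    intro m
    have := Nat.right_le_pair n (2 * m + 1)
    omega
  have odd_inj : ∀ m m', Nat.pair n (2 * m + 1) = Nat.pair n (2 * m' + 1) → m = m' := by
    intro m m' h
    have := (Nat.pair_eq_pair.1 h).2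
    omega
  have ncore : ∀ k ∈ Ln n, s ≤ k → k ∉ core := by
    rintro k hk hsk (h | h)
    · exact AA_not_Ln h hk
    · have := (uu_mem n s k h.2).1
      omega
  set b := Nat.pair n (2 * s + 1) with hb
  have hbL := odd_mem s
  have hsb : s ≤ b := odd_ge s
  have hinf : IsInformant (Lp n b) (ext (base ++ [(b, true)]) (tl {b})) := by
    refine ext_informant (okl_append (hbok b hsb hbL) (okl_single ?_))
      (tl_ok {b} b hsb (by simp)) ?_
    · simp [hLp b hsb]
    · intro z
      rcases tl_cov {b} z with h | h
      · left
        refine ⟨(b, true), by simp, ?_⟩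
        simp at h; exact h.symm
      · exact Or.inr h
  obtain ⟨K, e, -, hK⟩ := conv_ext (hS.ex _ (hcls b hsb hbL)) hinf
  have key : ∀ k k', k ∈ Ln n → k' ∈ Ln n → s ≤ k → s ≤ k' → K ≤ k' → k' ≠ b →
      M (base ++ [(k, true)] ++ seg (tl {b}) K ++ [(k', false)]) = Part.some e := by
    intro k k' hk hk' hsk hsk' hKk hne
    have h1 : M (base ++ [(k, true)]) = M (base ++ [(b, true)]) := by
      rw [hig2 k hk, hig2 b hbL]
    have h2 := it_congr hS.it h1 (seg (tl {b}) K)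
    have h3 : M (base ++ [(b, true)] ++ seg (tl {b}) K) =
        M (base ++ [(b, true)] ++ seg (tl {b}) k') := by
      rw [hK _ le_rfl, hK _ hKk]
    have h4 := it_congr hS.it (h2.trans h3) [(k', false)]
    rw [h4]
    have h5 : tl {b} k' = (k', false) := by
      simp [htl, hne, ncore k' hk' hsk']
    rw [List.append_assoc _ (seg _ _), ← h5, ← seg_succ]
    exact hK _ (by omega)
  set m := s + K + 1 with hm
  set k := Nat.pair n (2 * m + 1) with hk
  set k' := Nat.pair n (2 * (m + 1) + 1) with hk'
  have hkL : k ∈ Ln n := odd_mem m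
  have hkL' : k' ∈ Ln n := odd_mem (m + 1)
  have gk : m ≤ k := odd_ge m
  have gk' : m + 1 ≤ k' := odd_ge (m + 1)
  have nkb : k ≠ b := fun h => by have := odd_inj _ _ h; omega
  have nkb' : k' ≠ b := fun h => by have := odd_inj _ _ h; omega
  have nkk : k ≠ k' := fun h => by have := odd_inj _ _ h; omega
  have main : ∀ p q, p ∈ Ln n → q ∈ Ln n → m ≤ p → m ≤ q → p ≠ q →
      ∃ K' e', W e' = Lp n p ∧ ∀ j, K' ≤ j →
        M (base ++ [(p, true)] ++ seg (tl {b}) K ++ [(q, false)] ++ seg (tl {p, q}) j)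
          = Part.some e' := by
    intro p q hp hq hmp hmq hne
    have hsp : s ≤ p := by omega
    apply conv_ext (hS.ex _ (hcls p hsp hp))
    refine ext_informant (okl_append (okl_append (okl_append (hbok p hsp hp) (okl_single ?_)) ?_)
      (okl_single ?_)) (tl_ok {p, q} p hsp (by simp)) ?_
    · simp [hLp p hsp]
    · intro d hd
      obtain ⟨i, hi, rfl⟩ := mem_seg.1 hd
      rw [hLp p hsp]
      simp only [htl]
      split_ifs with h
      · simp [ha0c]
      · have : i ≠ p := by omega
        simp [this]
    · simp only [hLp p hsp]
      have := ncore q hq (by omega)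
      simp [this, hne.symm]
    · intro z
      rcases tl_cov {p, q} z with h | h
      · left
        simp only [Finset.mem_insert, Finset.mem_singleton] at h
        rcases h with rfl | rfl
        · exact ⟨(z, true), by simp, rfl⟩
        · exact ⟨(z, false), by simp, rfl⟩
      · exact Or.inr h
  obtain ⟨K1, e1, he1, h1⟩ := main k k' hkL hkL' gk (by omega) nkk
  obtain ⟨K2, e2, he2, h2⟩ := main k' k hkL' hkL (by omega) gk nkk.symm
  have q1 := key k k' hkL hkL' (by omega) (by omega) (by omega) nkb'
  have q2 := key k' k hkL' hkL (by omega) (by omega) (by omega) nkb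
  have q3 := it_congr hS.it (q1.trans q2.symm) (seg (tl {k, k'}) (K1 + K2))
  rw [h1 _ (by omega)] at q3
  have hpair : ({k, k'} : Finset ℕ) = {k', k} := Finset.pair_comm _ _
  rw [hpair, h2 _ (by omega)] at q3
  have he : e1 = e2 := Part.some_inj.1 q3
  rw [he, he2] at he1
  have hmem : k ∈ Lp n k := (hLp k (by omega) k).2 (Or.inr rfl)
  rw [← he1, hLp k' (by omega)] at hmem
  rcases hmem with h | h
  · exact ncore k hkL (by omega) h
  · exact nkk h

theorem cls_not : ¬ ItInfSNUEx cls := by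
  rintro ⟨M, hP, hit, hex, hsnu⟩
  obtain ⟨n, t0, hS⟩ := setup_exists hP hit hex
  by_cases hub : ∀ N, ∃ x, N ≤ stt n x
  · exact case_a hS hub
  · obtain ⟨s, hs⟩ := stuck n hub
    rcases Nat.mod_two_eq_zero_or_one (stt n s) with h | h
    · exact case_b hS hsnu s hs h
    · exact case_c hS s hs h

end SNU

/-- Strong non-U-shapedness restricts iterative learning from informant:
`[ItInfSNUEx] ⊊ [ItInfEx]`. -/
theorem snu_restricts_itInfEx :
    (∃ 𝓛 : Set (Set ℕ), ItInfEx 𝓛 ∧ ¬ ItInfSNUEx 𝓛) ∧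
    {𝓛 : Set (Set ℕ) | ItInfSNUEx 𝓛} ⊂ {𝓛 : Set (Set ℕ) | ItInfEx 𝓛} := by
  refine ⟨⟨SNU.cls, SNU.cls_ItInfEx, SNU.cls_not⟩, ?_⟩
  refine ⟨?_, fun h => SNU.cls_not (h SNU.cls_ItInfEx)⟩
  rintro L ⟨M, hP, hit, hex, -⟩
  exact ⟨M, hP, hit, hex⟩
end

section
/- Each of the semantic learning restrictions Caut (cautious), Dec (decisive), WMon (weakly monotonic), Mon (monotonic), SMon (strongly monotonic) and NU (non-U-shaped), viewed as a predicate β on pairs (learner, informant), is semantically delayable: for every admissible simulating function 𝔰, all informants I, I' and all learners M, M', if for all t ∈ ℕ one has pos(I'[t]) ⊇ pos(I[𝔰(t)]), neg(I'[t]) ⊇ neg(I[𝔰(t)]) and W_{M'(I'[t])} = W_{M(I[𝔰(t)])}, then β(M,I) implies β(M',I'). -/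
/-- `σ` is consistent with the set `A`: `pos(σ) ⊆ A` and `neg(σ) ⊆ ℕ\A`. -/
def ConsWith (σ : List Datum) (A : Set ℕ) : Prop := posOf σ ⊆ A ∧ negOf σ ⊆ Aᶜ

/-- `M` is cautious on `I`. -/
def CautOn (M : List Datum →. ℕ) (I : ℕ → Datum) : Prop :=
  ∀ s t, s ≤ t → ∀ es et, M (seg I s) = Part.some es → M (seg I t) = Part.some et →
    ¬ (W et ⊂ W es)

/-- `M` is decisive on `I`. -/
def DecOn (M : List Datum →. ℕ) (I : ℕ → Datum) : Prop :=
  ∀ r s t, r ≤ s → s ≤ t → ∀ er es et,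
    M (seg I r) = Part.some er → M (seg I s) = Part.some es → M (seg I t) = Part.some et →
    W er = W et → W er = W es

/-- `M` is weakly monotonic on `I`. -/
def WMonOn (M : List Datum →. ℕ) (I : ℕ → Datum) : Prop :=
  ∀ s t, s ≤ t → ∀ es et, M (seg I s) = Part.some es → M (seg I t) = Part.some et →
    ConsWith (seg I t) (W es) → W es ⊆ W et

/-- `M` is monotonic on `I`. -/
def MonOn (M : List Datum →. ℕ) (I : ℕ → Datum) : Prop :=
  ∀ s t, s ≤ t → ∀ es et, M (seg I s) = Part.some es → M (seg I t) = Part.some et →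
    W es ∩ posI I ⊆ W et ∩ posI I

/-- `M` is strongly monotonic on `I`. -/
def SMonOn (M : List Datum →. ℕ) (I : ℕ → Datum) : Prop :=
  ∀ s t, s ≤ t → ∀ es et, M (seg I s) = Part.some es → M (seg I t) = Part.some et →
    W es ⊆ W et

/-- `M` is non-U-shaped on `I`. -/
def NUOn (M : List Datum →. ℕ) (I : ℕ → Datum) : Prop :=
  ∀ r s t, r ≤ s → s ≤ t → ∀ er es et,
    M (seg I r) = Part.some er → M (seg I s) = Part.some es → M (seg I t) = Part.some et →
    W er = posI I → W et = posI I → W er = W es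

/-- An admissible simulating function: non-decreasing and unbounded. -/
def Admissible (s : ℕ → ℕ) : Prop := Monotone s ∧ ∀ x, ∃ t, x ≤ s t

/-- A predicate `β` on (learner, informant) pairs is semantically delayable. -/
def SemDelayable (β : (List Datum →. ℕ) → (ℕ → Datum) → Prop) : Prop :=
  ∀ s : ℕ → ℕ, Admissible s →
    ∀ (M M' : List Datum →. ℕ) (I I' : ℕ → Datum),
      (∃ L, IsInformant L I) → (∃ L', IsInformant L' I') →
      (∀ t, posOf (seg I (s t)) ⊆ posOf (seg I' t) ∧
            negOf (seg I (s t)) ⊆ negOf (seg I' t) ∧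
            ∃ e e', M (seg I (s t)) = Part.some e ∧ M' (seg I' t) = Part.some e' ∧
              W e' = W e) →
      β M I → β M' I'

theorem mem_seg_iff (I : ℕ → Datum) (t : ℕ) (d : Datum) :
    d ∈ seg I t ↔ ∃ k, k < t ∧ I k = d := by
  simp [seg]

/-- Under the delay hypotheses, the two informants have the same positive content. -/
theorem posI_eq_of_delay (s : ℕ → ℕ) (hs : Admissible s) (I I' : ℕ → Datum)
    (hI : ∃ L, IsInformant L I) (hI' : ∃ L', IsInformant L' I')
    (h : ∀ t, posOf (seg I (s t)) ⊆ posOf (seg I' t) ∧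
      negOf (seg I (s t)) ⊆ negOf (seg I' t)) : posI I' = posI I := by
  obtain ⟨L, -, hsurj⟩ := hI
  obtain ⟨L', hL', -⟩ := hI'
  ext x
  constructor
  · rintro ⟨t, ht⟩
    obtain ⟨k, hk⟩ := hsurj x
    have hk' : (I k).1 = x := hk
    cases hb : (I k).2 with
    | true => exact ⟨k, Prod.ext hk' hb⟩
    | false =>
      exfalso
      obtain ⟨u, hu⟩ := hs.2 (k + 1)
      have h1 : x ∈ negOf (seg I (s u)) :=
        (mem_seg_iff I (s u) (x, false)).2 ⟨k, hu, Prod.ext hk' hb⟩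
      obtain ⟨j, -, hj⟩ := (mem_seg_iff I' u (x, false)).1 ((h u).2 h1)
      have e1 := hL' t
      have e2 := hL' j
      rw [ht] at e1
      rw [hj] at e2
      simp at e1 e2
      exact e2 e1
  · rintro ⟨k, hk⟩
    obtain ⟨u, hu⟩ := hs.2 (k + 1)
    have h1 : x ∈ posOf (seg I (s u)) := (mem_seg_iff I (s u) (x, true)).2 ⟨k, hu, hk⟩
    obtain ⟨j, -, hj⟩ := (mem_seg_iff I' u (x, true)).1 ((h u).1 h1)
    exact ⟨j, hj⟩

/-- Hypotheses of the delayed learner are hypotheses of the original one, semantically. -/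
theorem hyp_of_delay {s : ℕ → ℕ} {M M' : List Datum →. ℕ} {I I' : ℕ → Datum}
    (h : ∀ t, posOf (seg I (s t)) ⊆ posOf (seg I' t) ∧
            negOf (seg I (s t)) ⊆ negOf (seg I' t) ∧
            ∃ e e', M (seg I (s t)) = Part.some e ∧ M' (seg I' t) = Part.some e' ∧
              W e' = W e) {t e' : ℕ} (he : M' (seg I' t) = Part.some e') :
    ∃ e, M (seg I (s t)) = Part.some e ∧ W e' = W e := by
  obtain ⟨-, -, e, e'', h1, h2, h3⟩ := h t
  rw [he] at h2
  cases Part.some_inj.1 h2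
  exact ⟨e, h1, h3⟩

/-- The semantic learning restrictions Caut, Dec, WMon, Mon, SMon and NU are
all semantically delayable. -/
theorem semantic_restrictions_delayable :
    SemDelayable CautOn ∧ SemDelayable DecOn ∧ SemDelayable WMonOn ∧
    SemDelayable MonOn ∧ SemDelayable SMonOn ∧ SemDelayable NUOn := by
  refine ⟨?_, ?_, ?_, ?_, ?_, ?_⟩ <;> intro s hs M M' I I' hI hI' h hβ
  · intro a b hab ea eb ha hb
    obtain ⟨fa, ha, wa⟩ := hyp_of_delay h ha
    obtain ⟨fb, hb, wb⟩ := hyp_of_delay h hb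
    rw [wa, wb]
    exact hβ _ _ (hs.1 hab) _ _ ha hb
  · intro a b c hab hbc ea eb ec ha hb hc
    obtain ⟨fa, ha, wa⟩ := hyp_of_delay h ha
    obtain ⟨fb, hb, wb⟩ := hyp_of_delay h hb
    obtain ⟨fc, hc, wc⟩ := hyp_of_delay h hc
    rw [wa, wb, wc]
    exact hβ _ _ _ (hs.1 hab) (hs.1 hbc) _ _ _ ha hb hc
  · intro a b hab ea eb ha hb hcons
    obtain ⟨fa, ha, wa⟩ := hyp_of_delay h ha
    obtain ⟨fb, hb, wb⟩ := hyp_of_delay h hb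
    rw [wa] at hcons ⊢
    rw [wb]
    exact hβ _ _ (hs.1 hab) _ _ ha hb
      ⟨(h b).1.trans hcons.1, (h b).2.1.trans hcons.2⟩
  · intro a b hab ea eb ha hb
    obtain ⟨fa, ha, wa⟩ := hyp_of_delay h ha
    obtain ⟨fb, hb, wb⟩ := hyp_of_delay h hb
    rw [wa, wb, posI_eq_of_delay s hs I I' hI hI' fun t => ⟨(h t).1, (h t).2.1⟩]
    exact hβ _ _ (hs.1 hab) _ _ ha hb
  · intro a b hab ea eb ha hb
    obtain ⟨fa, ha, wa⟩ := hyp_of_delay h ha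
    obtain ⟨fb, hb, wb⟩ := hyp_of_delay h hb
    rw [wa, wb]
    exact hβ _ _ (hs.1 hab) _ _ ha hb
  · intro a b c hab hbc ea eb ec ha hb hc
    obtain ⟨fa, ha, wa⟩ := hyp_of_delay h ha
    obtain ⟨fb, hb, wb⟩ := hyp_of_delay h hb
    obtain ⟨fc, hc, wc⟩ := hyp_of_delay h hc
    rw [wa, wb, wc, posI_eq_of_delay s hs I I' hI hI' fun t => ⟨(h t).1, (h t).2.1⟩]
    exact hβ _ _ _ (hs.1 hab) (hs.1 hbc) _ _ _ ha hb hc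
end

section
/- Let v_1, …, v_d be pairwise orthogonal nonzero vectors in ℝ^d and let h = (Σ_{i=1}^d v_i/‖v_i‖²) / (Σ_{i=1}^d 1/‖v_i‖²) be the vector from the origin to the hyperplane through the heads of v_1, …, v_d and orthogonal to it. Then ‖h‖ = 1/√(Σ_{i=1}^d 1/‖v_i‖²). -/
open RealInnerProductSpace

/-- The vector `h = (Σ vᵢ/‖vᵢ‖²) / (Σ 1/‖vᵢ‖²)` from the origin to the hyperplane
through the heads of `v₁, …, v_d` and orthogonal to it. -/
noncomputable def orthoPoint (d : ℕ) (v : Fin d → EuclideanSpace ℝ (Fin d)) :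
    EuclideanSpace ℝ (Fin d) :=
  (∑ i, (1 : ℝ) / ‖v i‖ ^ 2)⁻¹ • ∑ i, ((1 : ℝ) / ‖v i‖ ^ 2) • v i

/-- For pairwise orthogonal nonzero vectors `v₁, …, v_d` in `ℝ^d`, the vector `h` from
the origin to the hyperplane through their heads, orthogonal to it, has norm
`1/√(Σ 1/‖vᵢ‖²)`. -/
theorem orthoPoint_norm (d : ℕ) (hd : 1 ≤ d)
    (v : Fin d → EuclideanSpace ℝ (Fin d)) (hv0 : ∀ i, v i ≠ 0)
    (horth : ∀ i j, i ≠ j → ⟪v i, v j⟫ = 0) :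
    ‖orthoPoint d v‖ = 1 / Real.sqrt (∑ i, 1 / ‖v i‖ ^ 2) := by
  have hpos : 0 < ∑ i, (1 : ℝ) / ‖v i‖ ^ 2 := by
    apply Finset.sum_pos
    · intro i _
      have := norm_pos_iff.mpr (hv0 i)
      positivity
    · exact ⟨⟨0, hd⟩, Finset.mem_univ _⟩
  have hsq : ‖∑ i, ((1 : ℝ) / ‖v i‖ ^ 2) • v i‖ ^ 2 = ∑ i, (1 : ℝ) / ‖v i‖ ^ 2 := by
    rw [← real_inner_self_eq_norm_sq, sum_inner]
    apply Finset.sum_congr rfl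
    intro i _
    rw [inner_sum, Finset.sum_eq_single i]
    · have := norm_pos_iff.mpr (hv0 i)
      rw [real_inner_smul_left, real_inner_smul_right, real_inner_self_eq_norm_sq]
      field_simp
    · intro j _ hj
      rw [real_inner_smul_left, real_inner_smul_right, horth i j hj.symm]
      simp
    · simp
  have hn : ‖∑ i, ((1 : ℝ) / ‖v i‖ ^ 2) • v i‖ = Real.sqrt (∑ i, (1 : ℝ) / ‖v i‖ ^ 2) := by
    rw [← hsq, Real.sqrt_sq (norm_nonneg _)]
  rw [orthoPoint, norm_smul, hn, Real.norm_of_nonneg (inv_nonneg.mpr hpos.le)]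
  generalize (∑ i, (1 : ℝ) / ‖v i‖ ^ 2) = S at hpos
  have h1 := Real.sqrt_pos.mpr hpos
  rw [eq_div_iff h1.ne', mul_assoc, Real.mul_self_sqrt hpos.le, inv_mul_cancel₀ hpos.ne']
end
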